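/- arXiv:1605.00773 — 4 statements merged into one kernel-verified Lean document; each statement's English description precedes it below -/
import Mathlib

section
/- For every ρ > 0, λ > 0 and every integer L ≥ 1, there exists n_0 such that every 3-graph H on n ≥ n_0 vertices with δ(H) ≥ (5/9 + λ)·C(n−1,2) contains a family of pairwise vertex-disjoint copies of K_{L,L,L} which together cover at least (1 − ρ)·n vertices of H. -/
open Finset
open scoped Classical

/-- The (ordered) copies of `K_{h,h,h}` in a 3-graph `H`. -/
noncomputable def tripartiteCopies {V : Type} [DecidableEq V] [Fintype V]
    (H : Finset (Finset V)) (h : ℕ) : Finset (Finset V × Finset V × Finset V) :=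
  Finset.univ.filter fun T =>
    T.1.card = h ∧ T.2.1.card = h ∧ T.2.2.card = h ∧
    Disjoint T.1 T.2.1 ∧ Disjoint T.1 T.2.2 ∧ Disjoint T.2.1 T.2.2 ∧
    ∀ a ∈ T.1, ∀ b ∈ T.2.1, ∀ c ∈ T.2.2, ({a, b, c} : Finset V) ∈ H

/-!
Start from the empty tiling and improve it repeatedly. Given a tiling by copies of `K_{N,N,N}` with
`N = t * s * M`, take as clusters the parts of its tiles together with sets of size `N` chopped off
the uncovered vertices. Every vertex of the reduced 3-graph, whose edges are the dense triples of
clusters, has more than `5/9` of all pairs in its link. Choose a multiset of reduced edges whose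
load (the number of chosen edges at a cluster) is closest to the constant `s` in the square norm.
Minimality bounds the load by `3 * s + 1` and the sum of the deficits over any reduced edge. The
link condition at a cluster of maximal deficit then bounds the total deficit, because a weight
function of small mean has at most `5/9` of all pairs of large total weight. Hence the load is
almost constant.

Dense triples of clusters contain large complete tripartite 3-graphs, so one copy of `K_{M,M,M}`
can be placed greedily inside each chosen edge. This uses about `s * M` vertices of every cluster.
What is left of an old tile is complete tripartite and nearly balanced, so it is tiled again by
copies of `K_{M,M,M}`, while in the uncovered part a proportion of about `1 / t` has been gained.
Since `t` depends only on `lam`, finitely many rounds suffice.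
-/

open scoped Function

/-! ### Complete boxes in dense sets of triples -/

section Box

universe u

theorem half_density_mul_card_le_card_filter {α : Type*} (X : Finset α) (f : α → ℝ) {d b : ℝ}
    (hd : 0 ≤ d) (hb : 0 < b) (hf : ∀ x ∈ X, f x ≤ b) (hsum : d * b * #X ≤ ∑ x ∈ X, f x) :
    d / 2 * #X ≤ #{x ∈ X | d / 2 * b ≤ f x} := by
  have hpoint : ∀ x ∈ X, f x ≤ (if d / 2 * b ≤ f x then b else 0) + d / 2 * b := by
    intro x hx
    have hdb : 0 ≤ d / 2 * b := by positivity
    split_ifs with h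
    · linarith [hf x hx]
    · linarith
  have hsplit : d * b * #X ≤ #{x ∈ X | d / 2 * b ≤ f x} * b + #X * (d / 2 * b) := by
    simpa [sum_add_distrib, ← sum_filter] using hsum.trans (sum_le_sum hpoint)
  refine le_of_mul_le_mul_right ?_ hb
  linarith

variable {α β : Type*} [DecidableEq α] [DecidableEq β]

theorem card_eq_sum_card_filter_mem {X : Finset α} {Y : Finset β} {E : Finset (α × β)}
    (hE : E ⊆ X ×ˢ Y) : #E = ∑ x ∈ X, #{y ∈ Y | (x, y) ∈ E} := by
  rw [← inter_eq_right.2 hE, ← filter_mem_eq_inter, card_filter, sum_product]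
  simp only [card_filter, mem_filter, mem_product]
  exact sum_congr rfl fun x hx => sum_congr rfl fun y hy => by simp [hx, hy]

-- Group the vertices `y` of large degree by their neighbourhood in `X`: there are at most
-- `2 ^ #X` classes.
theorem exists_subset_le_card_common_neighbors {X : Finset α} {Y : Finset β} {E : Finset (α × β)}
    {d : ℝ} (hd : 0 ≤ d) {M : ℕ} (hX : X.Nonempty) (hM : M ≤ d / 2 * #X) (hMX : M ≤ #X)
    (hdense : d * #X * #Y ≤ ∑ x ∈ X, (#{y ∈ Y | (x, y) ∈ E} : ℝ)) :
    ∃ S ⊆ X, #S = M ∧ d / 2 / 2 ^ #X * #Y ≤ #{y ∈ Y | ∀ x ∈ S, (x, y) ∈ E} := by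
  let nbhd (y : β) : Finset α := {x ∈ X | (x, y) ∈ E}
  have hcount : d * #X * #Y ≤ ∑ y ∈ Y, (#(nbhd y) : ℝ) := by
    refine hdense.trans_eq ?_
    exact_mod_cast sum_card_bipartiteAbove_eq_sum_card_bipartiteBelow fun x y => (x, y) ∈ E
  have hlarge : d / 2 * #Y ≤ #{y ∈ Y | d / 2 * #X ≤ (#(nbhd y) : ℝ)} :=
    half_density_mul_card_le_card_filter Y _ hd (by exact_mod_cast hX.card_pos)
      (fun y _ => by exact_mod_cast card_filter_le _ _) hcount
  have hmaps : ∀ y ∈ Y.filter (fun y => d / 2 * #X ≤ (#(nbhd y) : ℝ)),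
      nbhd y ∈ X.powerset.filter (M ≤ #·) := fun y hy =>
    mem_filter.2 ⟨mem_powerset.2 (filter_subset _ _),
      by exact_mod_cast hM.trans (mem_filter.1 hy).2⟩
  have hclasses : (#(X.powerset.filter (M ≤ #·)) : ℝ) ≤ 2 ^ #X := by
    exact_mod_cast (card_filter_le _ _).trans_eq (card_powerset X)
  obtain ⟨T, hT, hfiber⟩ := exists_le_card_fiber_of_nsmul_le_card_of_maps_to
    (b := d / 2 / 2 ^ #X * #Y) hmaps
    ⟨X, mem_filter.2 ⟨mem_powerset_self X, hMX⟩⟩ <| by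
      rw [nsmul_eq_mul]
      calc _ ≤ 2 ^ #X * (d / 2 / 2 ^ #X * #Y) := by gcongr
        _ = d / 2 * #Y := by field_simp
        _ ≤ _ := hlarge
  obtain ⟨hTX, hMT⟩ := mem_filter.1 hT
  obtain ⟨S, hST, hS⟩ := exists_subset_card_eq hMT
  refine ⟨S, hST.trans (mem_powerset.1 hTX), hS, hfiber.trans ?_⟩
  gcongr
  intro y hy
  obtain ⟨hyY, rfl⟩ := mem_filter.1 hy
  exact mem_filter.2 ⟨(mem_filter.1 hyY).1, fun x hx => (mem_filter.1 (hST hx)).2⟩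

theorem exists_linear_common_neighborhood {d : ℝ} (hd : 0 < d) (M : ℕ) :
    ∃ (n₀ : ℕ) (δ : ℝ), 0 < δ ∧ ∀ (α β : Type*) [DecidableEq α] [DecidableEq β]
      (X : Finset α) (Y : Finset β) (E : Finset (α × β)), n₀ ≤ #X → E ⊆ X ×ˢ Y →
      d * (#X * #Y) ≤ #E →
      ∃ S ⊆ X, #S = M ∧ δ * #Y ≤ #{y ∈ Y | ∀ x ∈ S, (x, y) ∈ E} := by
  obtain ⟨m, hm⟩ := exists_nat_ge (max (4 * M / d) (M + 1))
  obtain ⟨hmd, hMm⟩ := max_le_iff.1 hm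
  obtain ⟨n₀, hn₀⟩ := exists_nat_ge (2 * m / d)
  rw [div_le_iff₀ hd] at hmd hn₀
  refine ⟨max n₀ M, d / 2 / 2 / 2 ^ m, by positivity, fun α β _ _ X Y E hX hE hdense => ?_⟩
  rcases Y.eq_empty_or_nonempty with rfl | hY
  · obtain ⟨S, hSX, hS⟩ := exists_subset_card_eq ((le_max_right _ _).trans hX)
    exact ⟨S, hSX, hS, by simp⟩
  have hYpos : (0 : ℝ) < #Y := by exact_mod_cast hY.card_pos
  have hlarge : d / 2 * #X ≤ #{x ∈ X | d / 2 * #Y ≤ (#{y ∈ Y | (x, y) ∈ E} : ℝ)} := by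
    refine half_density_mul_card_le_card_filter X _ hd.le hYpos
      (fun x _ => by exact_mod_cast card_filter_le _ _) ?_
    rw [card_eq_sum_card_filter_mem hE] at hdense
    push_cast at hdense
    linarith
  obtain ⟨X', hX', rfl⟩ := exists_subset_card_eq (n := m)
      (s := X.filter fun x => d / 2 * #Y ≤ (#{y ∈ Y | (x, y) ∈ E} : ℝ)) <| by
    have hnX : (n₀ : ℝ) ≤ #X := by exact_mod_cast (le_max_left _ _).trans hX
    have : (m : ℝ) ≤ d / 2 * #X := by nlinarith
    exact_mod_cast this.trans hlarge
  have hMX' : M + 1 ≤ #X' := by exact_mod_cast hMm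
  obtain ⟨S, hSX', hS⟩ := exists_subset_le_card_common_neighbors (X := X') (Y := Y) (E := E)
    (M := M) (by positivity : 0 ≤ d / 2) (card_pos.1 (by omega)) (by linarith) (by omega) <| by
      rw [mul_right_comm, mul_comm, ← nsmul_eq_mul]
      exact card_nsmul_le_sum _ _ _ fun x hx => (mem_filter.1 (hX' hx)).2
  exact ⟨S, hSX'.trans (hX'.trans (filter_subset _ _)), hS⟩

/-- Every set of triples of density at least `d` in a product of three sets of size at least `N`
contains a box `A' × B' × C'` with sides of size `M`. -/
def ForcesBox (d : ℝ) (M N : ℕ) : Prop :=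
  ∀ (V : Type u) [DecidableEq V] (A B C : Finset V) (E : Finset (V × V × V)),
    N ≤ #A → N ≤ #B → N ≤ #C → E ⊆ A ×ˢ B ×ˢ C → d * (#A * #B * #C) ≤ #E →
    ∃ A' B' C' : Finset V, #A' = M ∧ #B' = M ∧ #C' = M ∧ A' ×ˢ B' ×ˢ C' ⊆ E

theorem ForcesBox.mono {d : ℝ} {M N N' : ℕ} (h : ForcesBox.{u} d M N) (hN : N ≤ N') :
    ForcesBox.{u} d M N' :=
  fun V _ A B C E hA hB hC => h V A B C E (hN.trans hA) (hN.trans hB) (hN.trans hC)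

theorem exists_forcesBox {d : ℝ} (hd : 0 < d) (M : ℕ) : ∃ N, ForcesBox d M N := by
  obtain ⟨n₁, δ, hδ, h₁⟩ := exists_linear_common_neighborhood hd M
  obtain ⟨n₂, δ', hδ', h₂⟩ := exists_linear_common_neighborhood hδ M
  obtain ⟨n₃, hn₃⟩ := exists_nat_ge (M / δ')
  refine ⟨max n₁ (max n₂ n₃), fun V _ A B C E hA hB hC hE hdense => ?_⟩
  obtain ⟨A', -, hA', hBC⟩ := h₁ V (V × V) A (B ×ˢ C) E (by omega) hE <| by
    rw [card_product]; push_cast; linarith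
  obtain ⟨B', -, hB', hC'⟩ := h₂ V V B C {p ∈ B ×ˢ C | ∀ a ∈ A', (a, p) ∈ E} (by omega)
    (filter_subset _ _) (by rw [card_product] at hBC; exact_mod_cast hBC)
  obtain ⟨C', hC'sub, hC'card⟩ := exists_subset_card_eq (n := M)
      (s := C.filter fun c => ∀ b ∈ B', (b, c) ∈ {p ∈ B ×ˢ C | ∀ a ∈ A', (a, p) ∈ E}) <| by
    rw [div_le_iff₀' hδ'] at hn₃
    have hn₃C : (n₃ : ℝ) ≤ #C := by exact_mod_cast (by omega : n₃ ≤ #C)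
    exact_mod_cast hn₃.trans ((by gcongr : δ' * n₃ ≤ δ' * #C).trans hC')
  refine ⟨A', B', C', hA', hB', hC'card, fun p hp => ?_⟩
  simp only [mem_product] at hp
  exact (mem_filter.1 ((mem_filter.1 (hC'sub hp.2.2)).2 p.2.1 hp.2.1)).2 p.1 hp.1

end Box

/-! ### Pairs of large total weight -/

section Threshold

variable {ι : Type*} [Fintype ι]

theorem sum_card_filter_lt_le_sum (k : ι → ℕ) (D : ℕ) :
    ∑ t ∈ range D, #{v | t < k v} ≤ ∑ v, k v := by
  simp only [card_filter]
  rw [sum_comm]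
  refine sum_le_sum fun v _ => ?_
  rw [← card_filter]
  calc _ ≤ #(range (k v)) := card_le_card fun t ht => mem_range.2 (mem_filter.1 ht).2
    _ = k v := card_range _

-- Average `#{t < k} + #{D - 1 - t < k}` over `t < D`.
theorem exists_complementary_thresholds (k : ι → ℕ) {D : ℕ} (hD : 0 < D)
    (hk : 3 * ∑ v, k v ≤ D * Fintype.card ι) :
    ∃ t t', t ≤ t' ∧ t + t' + 1 = D ∧
      3 * (#{v | t < k v} + #{v | t' < k v}) ≤ 2 * Fintype.card ι := by
  obtain ⟨t, ht, hle⟩ : ∃ t ∈ range D,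
      3 * (#{v | t < k v} + #{v | D - 1 - t < k v}) ≤ 2 * Fintype.card ι := by
    refine exists_le_of_sum_le (nonempty_range_iff.2 hD.ne') ?_
    have hsum := sum_card_filter_lt_le_sum k D
    rw [← mul_sum, sum_add_distrib, sum_range_reflect (fun t => #{v | t < k v}) D, sum_const,
      card_range, smul_eq_mul]
    linarith
  have htD := mem_range.1 ht
  rcases le_total t (D - 1 - t) with h | h
  · exact ⟨t, D - 1 - t, h, by omega, hle⟩
  · exact ⟨D - 1 - t, t, h, by omega, by rwa [add_comm #{v | D - 1 - t < k v}]⟩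

theorem nine_mul_sq_add_le {a p c : ℤ} (hp : 0 ≤ p) (hpa : p ≤ a) (hac : a ≤ c)
    (h : 3 * (a + p) ≤ 2 * c) : 9 * (a ^ 2 + 2 * p * (c - a)) ≤ 5 * c ^ 2 := by
  rcases le_total (3 * a) c with hac' | hac'
  · nlinarith [mul_nonneg (sub_nonneg.2 hac') (sub_nonneg.2 hpa)]
  · nlinarith [mul_nonneg (sub_nonneg.2 hac') (sub_nonneg.2 h),
      mul_nonneg (sub_nonneg.2 h) (sub_nonneg.2 hac)]

-- With `A = {t < k}` and `B = {t' < k}`, a pair of weight at least `D = t + t' + 1` lies in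
-- `A × A`, `B × Aᶜ` or `Aᶜ × B`.
theorem nine_mul_card_pairs_le (k : ι → ℕ) {D : ℕ} (hD : 0 < D)
    (hk : 3 * ∑ v, k v ≤ D * Fintype.card ι) :
    9 * #{p : ι × ι | D ≤ k p.1 + k p.2} ≤ 5 * Fintype.card ι ^ 2 := by
  obtain ⟨t, t', htt', rfl, hcard⟩ := exists_complementary_thresholds k hD hk
  set A : Finset ι := {v | t < k v} with hA
  set B : Finset ι := {v | t' < k v} with hB
  have hBA : B ⊆ A := fun v hv => by simp only [hA, hB, mem_filter_univ] at hv ⊢; omega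
  have hcover : ({p : ι × ι | t + t' + 1 ≤ k p.1 + k p.2} : Finset (ι × ι)) ⊆
      A ×ˢ A ∪ (B ×ˢ Aᶜ ∪ Aᶜ ×ˢ B) := by
    rintro ⟨u, v⟩ huv
    simp only [hA, hB, mem_filter_univ, mem_union, mem_product, mem_compl] at huv ⊢
    omega
  have hcount : #{p : ι × ι | t + t' + 1 ≤ k p.1 + k p.2} ≤ #A ^ 2 + 2 * #B * #Aᶜ := by
    calc _ ≤ #(A ×ˢ A) + (#(B ×ˢ Aᶜ) + #(Aᶜ ×ˢ B)) :=
          (card_le_card hcover).trans <| (card_union_le _ _).trans <|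
            Nat.add_le_add_left (card_union_le _ _) _
      _ = _ := by simp only [card_product]; ring
  have hcompl := card_add_card_compl A
  have hquad := nine_mul_sq_add_le (a := #A) (p := #B) (c := Fintype.card ι) (by positivity)
    (by exact_mod_cast card_le_card hBA) (by exact_mod_cast card_le_univ A)
    (by exact_mod_cast hcard)
  rw [show (Fintype.card ι : ℤ) - #A = #Aᶜ by omega] at hquad
  exact (Nat.mul_le_mul_left 9 hcount).trans (by exact_mod_cast hquad)

end Threshold

/-! ### Balanced multisets of edges -/

section Load

variable {ι : Type*} [DecidableEq ι]

theorem ne_of_card_triple_eq_three {a b c : ι} (h : #{a, b, c} = 3) : a ≠ b ∧ a ≠ c ∧ b ≠ c := by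
  refine ⟨?_, ?_, ?_⟩ <;> rintro rfl
  · have := card_le_two (a := a) (b := c)
    simp_all
  · have := card_le_two (a := b) (b := a)
    simp_all [insert_comm a b]
  · have := card_le_two (a := a) (b := b)
    simp_all

/-- The ordered link of `v` in the 3-graph `G`: the pairs that complete `v` to an edge. Every edge
at `v` is counted twice. -/
def orderedLink [Fintype ι] (G : Finset (Finset ι)) (v : ι) : Finset (ι × ι) :=
  {p | {v, p.1, p.2} ∈ G}

/-- The number of members, with multiplicity, of the multiset of edges `l` that contain `v`. -/
def load (l : Multiset (Finset ι)) (v : ι) : ℕ :=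
  l.countP (v ∈ ·)

theorem load_cons (e : Finset ι) (l : Multiset (Finset ι)) (v : ι) :
    load (e ::ₘ l) v = load l v + if v ∈ e then 1 else 0 :=
  Multiset.countP_cons _ _ _

variable [Fintype ι]

theorem sum_mul_load (l : Multiset (Finset ι)) (w : ι → ℤ) :
    ∑ v, w v * load l v = (l.map fun e => ∑ v ∈ e, w v).sum := by
  induction l using Multiset.induction_on with
  | empty => simp [load]
  | cons e l ih => simp [load_cons, mul_add, sum_add_distrib, ih, add_comm]

theorem sum_load_eq_mul_card {l : Multiset (Finset ι)} {k : ℕ} (hl : ∀ e ∈ l, #e = k) :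
    ∑ v, load l v = k * l.card := by
  have hsum := sum_mul_load l 1
  simp only [Pi.one_apply, one_mul, sum_const, nsmul_eq_mul, mul_one] at hsum
  rw [Multiset.map_congr rfl fun e he => by rw [hl e he], Multiset.map_const',
    Multiset.sum_replicate, nsmul_eq_mul, mul_comm] at hsum
  exact_mod_cast hsum

/-- The squared distance of the load of `l` from the constant load `s`. -/
def imbalance (s : ℕ) (l : Multiset (Finset ι)) : ℤ :=
  ∑ v, ((s : ℤ) - load l v) ^ 2

theorem imbalance_cons (s : ℕ) (e : Finset ι) (l : Multiset (Finset ι)) :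
    imbalance s (e ::ₘ l) = imbalance s l - 2 * ∑ v ∈ e, ((s : ℤ) - load l v) + #e := by
  have hpoint : ∀ v, ((s : ℤ) - load (e ::ₘ l) v) ^ 2 = ((s : ℤ) - load l v) ^ 2 -
      2 * (if v ∈ e then (s : ℤ) - load l v else 0) + if v ∈ e then 1 else 0 := by
    intro v
    rw [load_cons]
    split_ifs <;> push_cast <;> ring
  simp only [imbalance, hpoint, sum_add_distrib, sum_sub_distrib, ← mul_sum]
  simp

/-- `l` is a multiset of edges of `G` whose imbalance with respect to `s` is least possible. -/
def IsMostBalanced (G : Finset (Finset ι)) (s : ℕ) (l : Multiset (Finset ι)) : Prop :=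
  MinimalFor (fun l : Multiset (Finset ι) => ∀ e ∈ l, e ∈ G) (fun l => (imbalance s l).toNat) l

theorem exists_isMostBalanced (G : Finset (Finset ι)) (s : ℕ) : ∃ l, IsMostBalanced G s l :=
  exists_minimalFor_of_wellFoundedLT _ _ ⟨0, by simp⟩

namespace IsMostBalanced

variable {G : Finset (Finset ι)} {s : ℕ} {l : Multiset (Finset ι)}

theorem imbalance_le (hl : IsMostBalanced G s l) {l' : Multiset (Finset ι)}
    (hl' : ∀ e ∈ l', e ∈ G) : imbalance s l ≤ imbalance s l' := by
  have hnonneg : 0 ≤ imbalance s l' := sum_nonneg fun _ _ => sq_nonneg _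
  by_contra! hlt
  have hle : (imbalance s l).toNat ≤ (imbalance s l').toNat :=
    hl.le_of_le hl' (Int.toNat_le_toNat hlt.le)
  omega

theorem two_mul_sum_deficit_le (hl : IsMostBalanced G s l) {e : Finset ι} (he : e ∈ G) :
    2 * ∑ v ∈ e, ((s : ℤ) - load l v) ≤ #e := by
  have hmin := hl.imbalance_le (l' := e ::ₘ l) (Multiset.forall_mem_cons.2 ⟨he, hl.prop⟩)
  rw [imbalance_cons] at hmin
  linarith

theorem neg_card_le_two_mul_sum_deficit (hl : IsMostBalanced G s l) {e : Finset ι} (he : e ∈ l) :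
    -(#e : ℤ) ≤ 2 * ∑ v ∈ e, ((s : ℤ) - load l v) := by
  obtain ⟨l', rfl⟩ := Multiset.exists_cons_of_mem he
  have hmin := hl.imbalance_le (l' := l') fun e' he' => hl.prop e' (Multiset.mem_cons_of_mem he')
  have hsum : ∑ v ∈ e, ((s : ℤ) - load (e ::ₘ l') v) = ∑ v ∈ e, ((s : ℤ) - load l' v) - #e := by
    rw [sum_congr rfl fun v hv => by rw [load_cons, if_pos hv], card_eq_sum_ones, Nat.cast_sum,
      ← sum_sub_distrib]
    exact sum_congr rfl fun v _ => by push_cast; ring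
  rw [imbalance_cons] at hmin
  linarith

theorem load_le (hl : IsMostBalanced G s l) (hG : ∀ e ∈ G, #e = 3) (v : ι) :
    load l v ≤ 3 * s + 1 := by
  rcases Nat.eq_zero_or_pos (load l v) with h | h
  · omega
  obtain ⟨e, hel, hve⟩ := Multiset.countP_pos.1 h
  have hedge := hl.neg_card_le_two_mul_sum_deficit hel
  have hcard : #e = 3 := hG e (hl.prop e hel)
  have hrest : ∑ u ∈ e.erase v, ((s : ℤ) - load l u) ≤ 2 * s := by
    refine (sum_le_card_nsmul _ _ (s : ℤ) fun u _ => by omega).trans_eq ?_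
    rw [card_erase_of_mem hve, hcard]
    simp
  rw [← add_sum_erase e _ hve, hcard] at hedge
  omega

-- At a vertex of maximal deficit `w₀`, every link pair has total weight at least `3 * w₀ - 1`
-- for the weight `w₀ - w`, so a large link contradicts `nine_mul_card_pairs_le`.
theorem three_mul_sum_deficit_le (hl : IsMostBalanced G s l) (hG : ∀ e ∈ G, #e = 3)
    (hlink : ∀ v, 5 * Fintype.card ι ^ 2 < 9 * #(orderedLink G v)) :
    3 * ∑ v, ((s : ℤ) - load l v) ≤ Fintype.card ι := by
  set w : ι → ℤ := fun v => s - load l v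
  by_contra! hcon
  have hpos : 0 < ∑ v, w v := by linarith [Int.natCast_nonneg (Fintype.card ι)]
  obtain ⟨v₀, -, hmax⟩ := exists_max_image univ w (nonempty_of_sum_ne_zero hpos.ne')
  have hw₀ : 0 < w v₀ := by
    by_contra! h
    exact hpos.not_ge (sum_nonpos fun v hv => (hmax v hv).trans h)
  have hk : ∀ v, ((w v₀ - w v).toNat : ℤ) = w v₀ - w v := fun v =>
    Int.toNat_of_nonneg (sub_nonneg.2 (hmax v (mem_univ v)))
  have hD : ((3 * w v₀ - 1).toNat : ℤ) = 3 * w v₀ - 1 := by omega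
  have hfew := nine_mul_card_pairs_le (fun v => (w v₀ - w v).toNat) (D := (3 * w v₀ - 1).toNat)
    (by omega) (by
      zify
      simp only [hk, hD, sum_sub_distrib, sum_const, card_univ, nsmul_eq_mul]
      linarith)
  have hsub : orderedLink G v₀ ⊆
      ({p | (3 * w v₀ - 1).toNat ≤ (w v₀ - w p.1).toNat + (w v₀ - w p.2).toNat} :
        Finset (ι × ι)) := by
    rintro ⟨u, v⟩ huv
    replace huv : {v₀, u, v} ∈ G := (mem_filter.1 huv).2
    have hedge := hl.two_mul_sum_deficit_le huv
    obtain ⟨hu, hv, huv'⟩ := ne_of_card_triple_eq_three (hG _ huv)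
    rw [hG _ huv, sum_insert (by simp [hu, hv]), sum_pair huv'] at hedge
    have hedge' : 2 * (w v₀ + (w u + w v)) ≤ 3 := hedge
    rw [mem_filter_univ]
    zify
    rw [hD, hk, hk]
    omega
  exact (hlink v₀).not_ge (by have := card_le_card hsub; omega)

-- `∑ v, w v * load l v = ∑ e ∈ l, ∑ v ∈ e, w v ≥ -#l`, where `w v = s - load l v`.
theorem imbalance_le_mul_card (hl : IsMostBalanced G s l) (hG : ∀ e ∈ G, #e = 3)
    (hlink : ∀ v, 5 * Fintype.card ι ^ 2 < 9 * #(orderedLink G v)) (hs : 0 < s) :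
    imbalance s l ≤ s * Fintype.card ι := by
  have huniform : ∀ e ∈ l, #e = 3 := fun e he => hG e (hl.prop e he)
  set w : ι → ℤ := fun v => s - load l v with hw
  have hedges : -(l.card : ℤ) ≤ ∑ v, w v * load l v := by
    rw [sum_mul_load, ← Multiset.card_map (fun e => ∑ v ∈ e, w v) l, ← mul_neg_one, ← nsmul_eq_mul]
    refine Multiset.card_nsmul_le_sum fun x hx => ?_
    obtain ⟨e, he, rfl⟩ := Multiset.mem_map.1 hx
    have := hl.neg_card_le_two_mul_sum_deficit he
    rw [huniform e he] at this
    change -1 ≤ ∑ v ∈ e, ((s : ℤ) - load l v)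
    omega
  have hload : ∑ v, (load l v : ℤ) = 3 * l.card := by exact_mod_cast sum_load_eq_mul_card huniform
  have hsum : ∑ v, w v = s * Fintype.card ι - 3 * l.card := by
    simp [hw, sum_sub_distrib, hload, mul_comm]
  have himb : imbalance s l = s * ∑ v, w v - ∑ v, w v * load l v := by
    rw [imbalance, mul_sum, ← sum_sub_distrib]
    exact sum_congr rfl fun v _ => by simp only [hw]; ring
  have hdeficit := hl.three_mul_sum_deficit_le hG hlink
  nlinarith [mul_nonneg (by omega : (0 : ℤ) ≤ 3 * s - 1) (sub_nonneg.2 hdeficit)]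

end IsMostBalanced

end Load

/-! ### Tilings by complete tripartite 3-graphs -/

section Tiling

theorem exists_disjoint_subsets_card_eq {α : Type*} (R : Finset α) {k N : ℕ}
    (h : k * N ≤ #R) :
    ∃ F : Fin k → Finset α, (∀ i, F i ⊆ R ∧ #(F i) = N) ∧ Pairwise (Disjoint on F) := by
  obtain ⟨f⟩ : Nonempty (Fin k × Fin N ↪ R) :=
    Function.Embedding.nonempty_of_card_le (by simpa using h)
  let g : Fin k × Fin N ↪ α := f.trans (Function.Embedding.subtype _)
  refine ⟨fun i => univ.map ⟨fun j => g (i, j), fun j j' hj => by simpa using hj⟩,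
    fun i => ⟨?_, ?_⟩, fun i i' hii' => ?_⟩
  · intro x hx
    obtain ⟨j, -, rfl⟩ := mem_map.1 hx
    exact (f (i, j)).2
  · simp
  · simp only [Function.onFun, disjoint_left, mem_map, mem_univ, true_and]
    rintro _ ⟨j, rfl⟩ ⟨j', hj'⟩
    exact hii' (congrArg Prod.fst (g.injective hj')).symm

variable {V : Type} [DecidableEq V]

/-- The vertex set of the tripartite 3-graph with the given three parts. -/
def tileVertices (T : Finset V × Finset V × Finset V) : Finset V :=
  T.1 ∪ T.2.1 ∪ T.2.2

/-- The parts of a tripartite 3-graph, as an indexed family. -/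
def tilePart (T : Finset V × Finset V × Finset V) : Fin 3 → Finset V :=
  ![T.1, T.2.1, T.2.2]

theorem tilePart_subset_tileVertices (T : Finset V × Finset V × Finset V) (j : Fin 3) :
    tilePart T j ⊆ tileVertices T := by
  fin_cases j
  exacts [subset_union_left.trans subset_union_left, subset_union_right.trans subset_union_left,
    subset_union_right]

variable [Fintype V] {H : Finset (Finset V)}

theorem card_tileVertices {M : ℕ} {T : Finset V × Finset V × Finset V}
    (hT : T ∈ tripartiteCopies H M) : #(tileVertices T) = 3 * M := by
  obtain ⟨h₁, h₂, h₃, h₁₂, h₁₃, h₂₃, -⟩ := (mem_filter.1 hT).2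
  rw [tileVertices, card_union_of_disjoint (disjoint_union_left.2 ⟨h₁₃, h₂₃⟩),
    card_union_of_disjoint h₁₂, h₁, h₂, h₃]
  ring

theorem pairwise_disjoint_tilePart {M : ℕ} {T : Finset V × Finset V × Finset V}
    (hT : T ∈ tripartiteCopies H M) : Pairwise (Disjoint on tilePart T) := by
  obtain ⟨-, -, -, h₁₂, h₁₃, h₂₃, -⟩ := (mem_filter.1 hT).2
  intro j j' hne
  fin_cases j <;> fin_cases j'
  exacts [(hne rfl).elim, h₁₂, h₁₃, h₁₂.symm, (hne rfl).elim, h₂₃, h₁₃.symm, h₂₃.symm,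
    (hne rfl).elim]

theorem card_biUnion_tileVertices {M m : ℕ} {Q : Fin m → Finset V × Finset V × Finset V}
    (hQ : ∀ i, Q i ∈ tripartiteCopies H M) (hdisj : Pairwise (Disjoint on (tileVertices ∘ Q))) :
    #(univ.biUnion (tileVertices ∘ Q)) = 3 * M * m := by
  rw [card_biUnion fun i _ j _ hij => hdisj hij]
  simp [fun i => card_tileVertices (hQ i), mul_comm]

/-- `H` contains `m` pairwise vertex-disjoint copies of `K_{M,M,M}` with all vertices in `U`. -/
def HasTiling (H : Finset (Finset V)) (M m : ℕ) (U : Finset V) : Prop :=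
  ∃ Q : Fin m → Finset V × Finset V × Finset V,
    (∀ i, Q i ∈ tripartiteCopies H M ∧ tileVertices (Q i) ⊆ U) ∧
      Pairwise (Disjoint on (tileVertices ∘ Q))

namespace HasTiling

variable {M m m' : ℕ} {U U' : Finset V}

theorem of_family {κ : Type*} [Fintype κ] (Q : κ → Finset V × Finset V × Finset V)
    (hQ : ∀ i, Q i ∈ tripartiteCopies H M ∧ tileVertices (Q i) ⊆ U)
    (hdisj : Pairwise (Disjoint on (tileVertices ∘ Q))) :
    HasTiling H M (Fintype.card κ) U := by
  let e := Fintype.equivFin κ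
  exact ⟨Q ∘ e.symm, fun i => hQ _, fun i j hij => hdisj (e.symm.injective.ne hij)⟩

theorem mono (h : HasTiling H M m U) (hUU' : U ⊆ U') : HasTiling H M m U' := by
  obtain ⟨Q, hQ, hdisj⟩ := h
  exact ⟨Q, fun i => ⟨(hQ i).1, (hQ i).2.trans hUU'⟩, hdisj⟩

theorem sum {κ : Type*} [Fintype κ] {m : κ → ℕ} {U : κ → Finset V}
    (h : ∀ k, HasTiling H M (m k) (U k)) (hU : Pairwise (Disjoint on U)) :
    HasTiling H M (∑ k, m k) (univ.biUnion U) := by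
  choose Q hQ hdisj using h
  have := of_family (H := H) (M := M) (U := univ.biUnion U) (fun i : Σ k, Fin (m k) => Q i.1 i.2)
    (fun i => ⟨(hQ i.1 i.2).1, (hQ i.1 i.2).2.trans (subset_biUnion_of_mem U (mem_univ i.1))⟩) <| by
      rintro ⟨k, i⟩ ⟨k', i'⟩ hne
      by_cases hk : k = k'
      · subst hk
        exact hdisj k fun hi => hne (Sigma.ext rfl (heq_of_eq hi))
      · exact (hU hk).mono (hQ k i).2 (hQ k' i').2
  simpa using this

theorem add (h : HasTiling H M m U) (h' : HasTiling H M m' U') (hUU' : Disjoint U U') :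
    HasTiling H M (m + m') (U ∪ U') := by
  have hbool := sum (m := fun b : Bool => cond b m m') (U := fun b => cond b U U')
    (Bool.forall_bool.2 ⟨h', h⟩) (by
      rintro (_ | _) (_ | _) hne
      exacts [(hne rfl).elim, hUU'.symm, hUU', (hne rfl).elim])
  simpa using hbool

theorem of_mem {T : Finset V × Finset V × Finset V} (hT : T ∈ tripartiteCopies H M) :
    HasTiling H M 1 (tileVertices T) :=
  ⟨fun _ => T, fun _ => ⟨hT, Subset.rfl⟩, fun i j hij => (hij (Subsingleton.elim i j)).elim⟩

theorem of_complete {A B C : Finset V} (hAB : Disjoint A B) (hAC : Disjoint A C)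
    (hBC : Disjoint B C) (hH : ∀ a ∈ A, ∀ b ∈ B, ∀ c ∈ C, {a, b, c} ∈ H) (hA : m * M ≤ #A)
    (hB : m * M ≤ #B) (hC : m * M ≤ #C) : HasTiling H M m (A ∪ B ∪ C) := by
  obtain ⟨F, hF, hFdisj⟩ := exists_disjoint_subsets_card_eq A hA
  obtain ⟨F', hF', hF'disj⟩ := exists_disjoint_subsets_card_eq B hB
  obtain ⟨F'', hF'', hF''disj⟩ := exists_disjoint_subsets_card_eq C hC
  refine ⟨fun i => (F i, F' i, F'' i), fun i => ⟨?_, ?_⟩, fun i j hij => ?_⟩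
  · obtain ⟨hFA, hFcard⟩ := hF i
    obtain ⟨hF'B, hF'card⟩ := hF' i
    obtain ⟨hF''C, hF''card⟩ := hF'' i
    exact mem_filter.2 ⟨mem_univ _, hFcard, hF'card, hF''card, hAB.mono hFA hF'B,
      hAC.mono hFA hF''C, hBC.mono hF'B hF''C,
      fun a ha b hb c hc => hH a (hFA ha) b (hF'B hb) c (hF''C hc)⟩
  · exact union_subset_union (union_subset_union (hF i).1 (hF' i).1) (hF'' i).1
  · simp only [Function.onFun, Function.comp, tileVertices, disjoint_union_left,
      disjoint_union_right]
    exact ⟨⟨⟨⟨hFdisj hij, (hAB.mono (hF j).1 (hF' i).1).symm⟩,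
      (hAC.mono (hF j).1 (hF'' i).1).symm⟩, ⟨hAB.mono (hF i).1 (hF' j).1, hF'disj hij⟩,
      (hBC.mono (hF' j).1 (hF'' i).1).symm⟩, ⟨hAC.mono (hF i).1 (hF'' j).1,
      hBC.mono (hF' i).1 (hF'' j).1⟩, hF''disj hij⟩

end HasTiling

end Tiling

/-! ### Clusters and the reduced 3-graph -/

section Reduced

theorem two_mul_degree_le_card_orderedLink {ι : Type*} [DecidableEq ι] [Fintype ι]
    {G : Finset (Finset ι)} (hG : ∀ e ∈ G, #e = 3) (v : ι) :
    2 * #{e ∈ G | v ∈ e} ≤ #(orderedLink G v) := by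
  have hmaps : ∀ p ∈ orderedLink G v, {v, p.1, p.2} ∈ G.filter (v ∈ ·) := fun p hp =>
    mem_filter.2 ⟨(mem_filter.1 hp).2, mem_insert_self _ _⟩
  rw [card_eq_sum_card_fiberwise hmaps, mul_comm, ← smul_eq_mul]
  refine card_nsmul_le_sum _ _ _ fun e he => ?_
  obtain ⟨heG, hve⟩ := mem_filter.1 he
  obtain ⟨a, b, hab, hpair⟩ := card_eq_two.1 (card_erase_of_mem hve ▸ hG e heG ▸ rfl :
    #(e.erase v) = 2)
  have hab_edge : {v, a, b} = e := by rw [← hpair, insert_erase hve]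
  have hba_edge : {v, b, a} = e := by rw [pair_comm, hab_edge]
  rw [← card_pair (a := (a, b)) (b := (b, a)) (by simp [hab])]
  refine card_le_card ?_
  simp [insert_subset_iff, orderedLink, hab_edge, hba_edge, heG]

variable {V : Type} [DecidableEq V] {ι : Type*} {H : Finset (Finset V)} {P : ι → Finset V} {N : ℕ}

/-- The triples of `A × B × C` that form an edge of `H`. -/
def crossingTriples (H : Finset (Finset V)) (A B C : Finset V) : Finset (V × V × V) :=
  {p ∈ A ×ˢ B ×ˢ C | {p.1, p.2.1, p.2.2} ∈ H}

theorem card_crossingTriples_le (H : Finset (Finset V)) (A B C : Finset V) :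
    #(crossingTriples H A B C) ≤ #A * #B * #C := by
  rw [mul_assoc, ← card_product, ← card_product]
  exact card_filter_le _ _

theorem card_crossingTriples_sdiff_le (H : Finset (Finset V)) (A B C U : Finset V) :
    #(crossingTriples H A B C) ≤ #(crossingTriples H (A \ U) (B \ U) (C \ U)) +
      (#(A ∩ U) * #B * #C + #A * #(B ∩ U) * #C + #A * #B * #(C ∩ U)) := by
  have hcover : crossingTriples H A B C ⊆ crossingTriples H (A \ U) (B \ U) (C \ U) ∪
      ((A ∩ U) ×ˢ B ×ˢ C ∪ A ×ˢ (B ∩ U) ×ˢ C ∪ A ×ˢ B ×ˢ (C ∩ U)) := by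
    intro p hp
    simp only [crossingTriples, mem_filter, mem_union, mem_product, mem_sdiff, mem_inter] at hp ⊢
    tauto
  refine (card_le_card hcover).trans ((card_union_le _ _).trans (Nat.add_le_add_left ?_ _))
  refine ((card_union_le _ _).trans (Nat.add_le_add_right (card_union_le _ _) _)).trans_eq ?_
  simp only [card_product, mul_assoc]

section

variable [Fintype ι] [DecidableEq ι]

/-- The 3-graph on the clusters `P` whose edges are the triples of clusters between which `H` has
density at least `d`. -/
noncomputable def reducedGraph (H : Finset (Finset V)) (P : ι → Finset V) (d : ℝ) :
    Finset (Finset ι) :=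
  {e ∈ univ.powersetCard 3 | ∃ u v w, e = {u, v, w} ∧
    d * (#(P u) * #(P v) * #(P w)) ≤ #(crossingTriples H (P u) (P v) (P w))}

theorem card_eq_three_of_mem_reducedGraph {d : ℝ} {e : Finset ι} (he : e ∈ reducedGraph H P d) :
    #e = 3 :=
  (mem_powersetCard.1 (mem_filter.1 he).1).2

theorem card_crossingTriples_le_of_card_eq (hP : ∀ u, #(P u) = N) {d : ℝ} (hd : 0 ≤ d) (u : ι)
    (q : ι × ι) : (#(crossingTriples H (P u) (P q.1) (P q.2)) : ℝ) ≤
      N ^ 3 * ((if q ∈ orderedLink (reducedGraph H P d) u then 1 else 0) +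
        (if q.1 = u then 1 else 0) + (if q.2 = u then 1 else 0) +
        (if q.1 = q.2 then 1 else 0) + d) := by
  have htrivial : (#(crossingTriples H (P u) (P q.1) (P q.2)) : ℝ) ≤ N ^ 3 := by
    have := card_crossingTriples_le H (P u) (P q.1) (P q.2)
    simp only [hP] at this
    exact_mod_cast this.trans_eq (by ring)
  by_cases hsmall : #(crossingTriples H (P u) (P q.1) (P q.2)) ≤ N ^ 3 * d
  · refine hsmall.trans ?_
    gcongr
    exact le_add_of_nonneg_left (by positivity)
  · refine htrivial.trans (le_mul_of_one_le_right (by positivity) ?_)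
    by_cases hdistinct : q.1 ≠ u ∧ q.2 ≠ u ∧ q.1 ≠ q.2
    · obtain ⟨hu₁, hu₂, h₁₂⟩ := hdistinct
      have hmem : q ∈ orderedLink (reducedGraph H P d) u := by
        refine mem_filter.2 ⟨mem_univ _, mem_filter.2 ⟨mem_powersetCard.2 ⟨subset_univ _,
          card_eq_three.2 ⟨u, q.1, q.2, hu₁.symm, hu₂.symm, h₁₂, rfl⟩⟩, u, q.1, q.2, rfl, ?_⟩⟩
        simp only [hP]
        linarith
      rw [if_pos hmem]
      linarith [(by positivity : (0 : ℝ) ≤ (if q.1 = u then 1 else 0) +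
        (if q.2 = u then 1 else 0) + (if q.1 = q.2 then 1 else 0))]
    · have hpos : (1 : ℝ) ≤ (if q.1 = u then 1 else 0) + (if q.2 = u then 1 else 0) +
          (if q.1 = q.2 then 1 else 0) := by
        split_ifs <;> first | tauto | norm_num
      linarith [(by positivity : (0 : ℝ) ≤
        if q ∈ orderedLink (reducedGraph H P d) u then 1 else 0)]

theorem sum_card_crossingTriples_le (hP : ∀ u, #(P u) = N) {d : ℝ} (hd : 0 ≤ d) (u : ι) :
    (∑ q : ι × ι, #(crossingTriples H (P u) (P q.1) (P q.2)) : ℝ) ≤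
      N ^ 3 * (#(orderedLink (reducedGraph H P d) u) + 3 * Fintype.card ι +
        d * Fintype.card ι ^ 2) := by
  refine (sum_le_sum fun q _ => card_crossingTriples_le_of_card_eq hP hd u q).trans_eq ?_
  rw [← mul_sum]
  congr 1
  have hfst : ∑ q : ι × ι, (if q.1 = u then (1 : ℝ) else 0) = Fintype.card ι := by
    rw [Fintype.sum_prod_type_right]; simp
  have hsnd : ∑ q : ι × ι, (if q.2 = u then (1 : ℝ) else 0) = Fintype.card ι := by
    rw [Fintype.sum_prod_type]; simp
  have hdiag : ∑ q : ι × ι, (if q.1 = q.2 then (1 : ℝ) else 0) = Fintype.card ι := by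
    rw [Fintype.sum_prod_type]; simp
  rw [sum_add_distrib, sum_add_distrib, sum_add_distrib, sum_add_distrib, hfst, hsnd, hdiag,
    sum_boole, filter_univ_mem, sum_const, card_univ, Fintype.card_prod, nsmul_eq_mul]
  push_cast
  ring

end

variable [Fintype V]

/-- `H` is a 3-graph whose minimum vertex degree is at least the proportion `d` of the maximum
possible degree. -/
structure HasRelMinDegree (H : Finset (Finset V)) (d : ℝ) : Prop where
  card_eq_three : ∀ e ∈ H, #e = 3
  le_degree : ∀ v, d * ((Fintype.card V - 1).choose 2 : ℝ) ≤ #{e ∈ H | v ∈ e}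

theorem HasRelMinDegree.le_card_orderedLink {d : ℝ} (hH : HasRelMinDegree H d) (hd : 0 ≤ d)
    (a : V) : d * (Fintype.card V ^ 2 - 3 * Fintype.card V) ≤ #(orderedLink H a) := by
  have hpos : 1 ≤ Fintype.card V := Fintype.card_pos_iff.2 ⟨a⟩
  have hdeg := hH.le_degree a
  have hlink : (2 * #{e ∈ H | a ∈ e} : ℝ) ≤ #(orderedLink H a) := by
    exact_mod_cast two_mul_degree_le_card_orderedLink hH.card_eq_three a
  rw [Nat.cast_choose_two, Nat.cast_sub hpos] at hdeg
  push_cast at hdeg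
  nlinarith

/-- Disjoint sets of size `N`, called clusters, that cover all but at most `N` vertices. -/
structure IsClustering [Fintype ι] (P : ι → Finset V) (N : ℕ) : Prop where
  card_eq : ∀ u, #(P u) = N
  pairwise_disjoint : Pairwise (Disjoint on P)
  card_rest_le : #(univ.biUnion P)ᶜ ≤ N

variable [Fintype ι]

namespace IsClustering

theorem card_biUnion (hP : IsClustering P N) : #(univ.biUnion P) = Fintype.card ι * N := by
  rw [Finset.card_biUnion fun u _ v _ huv => hP.pairwise_disjoint huv]
  simp [hP.card_eq]

theorem card_mul_le (hP : IsClustering P N) : Fintype.card ι * N ≤ Fintype.card V :=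
  hP.card_biUnion ▸ card_le_univ _

theorem card_le (hP : IsClustering P N) : Fintype.card V ≤ Fintype.card ι * N + N := by
  rw [← card_add_card_compl (univ.biUnion P), hP.card_biUnion]
  exact Nat.add_le_add_left hP.card_rest_le _

theorem card_orderedLink_le (hP : IsClustering P N) (H : Finset (Finset V)) (a : V) :
    #(orderedLink H a) ≤ 2 * N * Fintype.card V +
      ∑ q : ι × ι, #{p ∈ P q.1 ×ˢ P q.2 | {a, p.1, p.2} ∈ H} := by
  set R := (univ.biUnion P)ᶜ with hR
  have hcover : orderedLink H a ⊆ (R ×ˢ univ ∪ univ ×ˢ R) ∪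
      univ.biUnion fun q : ι × ι => {p ∈ P q.1 ×ˢ P q.2 | {a, p.1, p.2} ∈ H} := by
    rintro ⟨x, y⟩ hxy
    have hedge : {a, x, y} ∈ H := (mem_filter.1 hxy).2
    simp only [hR, mem_union, mem_product, mem_compl, mem_biUnion, mem_univ, true_and, and_true,
      mem_filter, hedge, Prod.exists]
    by_contra! hnot
    obtain ⟨⟨⟨u, hu⟩, v, hv⟩, hnone⟩ := hnot
    exact hnone u v hu hv
  calc #(orderedLink H a) ≤ _ := card_le_card hcover
    _ ≤ (#(R ×ˢ univ) + #(univ ×ˢ R)) + _ :=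
      (card_union_le _ _).trans (add_le_add (card_union_le _ _) card_biUnion_le)
    _ ≤ _ := by
      simp only [card_product, card_univ]
      gcongr
      nlinarith [Nat.mul_le_mul_right (Fintype.card V) hP.card_rest_le]

theorem sum_card_orderedLink_le (hP : IsClustering P N) (H : Finset (Finset V)) (u : ι) :
    ∑ a ∈ P u, #(orderedLink H a) ≤ 2 * N ^ 2 * Fintype.card V +
      ∑ q : ι × ι, #(crossingTriples H (P u) (P q.1) (P q.2)) := by
  have hcross : ∀ q : ι × ι, #(crossingTriples H (P u) (P q.1) (P q.2)) =
      ∑ a ∈ P u, #{p ∈ P q.1 ×ˢ P q.2 | {a, p.1, p.2} ∈ H} := fun q => by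
    simp only [crossingTriples, card_filter, sum_product]
  calc _ ≤ ∑ a ∈ P u, (2 * N * Fintype.card V +
        ∑ q : ι × ι, #{p ∈ P q.1 ×ˢ P q.2 | {a, p.1, p.2} ∈ H}) :=
        sum_le_sum fun a _ => hP.card_orderedLink_le H a
    _ = _ := by
      simp only [hcross]
      rw [sum_add_distrib, sum_comm, sum_const, hP.card_eq, smul_eq_mul]
      ring

end IsClustering

theorem HasRelMinDegree.lt_card_orderedLink_reducedGraph [DecidableEq ι] {δ lam : ℝ}
    (hδ : 0 ≤ δ) (hlam : 0 ≤ lam) (hH : HasRelMinDegree H (δ + lam)) (hP : IsClustering P N)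
    (hlarge : 4 * (3 * (δ + lam) + 5 * N) < 3 * lam * Fintype.card V) (u : ι) :
    δ * Fintype.card ι ^ 2 < #(orderedLink (reducedGraph H P (lam / 4)) u) := by
  have hlower : N * ((δ + lam) * (Fintype.card V ^ 2 - 3 * Fintype.card V)) ≤
      ∑ a ∈ P u, (#(orderedLink H a) : ℝ) := by
    rw [← hP.card_eq u, ← nsmul_eq_mul]
    exact card_nsmul_le_sum _ _ _ fun a _ => hH.le_card_orderedLink (by positivity) a
  have hupper : (∑ a ∈ P u, (#(orderedLink H a) : ℝ)) ≤ 2 * N ^ 2 * Fintype.card V +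
      ∑ q : ι × ι, (#(crossingTriples H (P u) (P q.1) (P q.2)) : ℝ) := by
    exact_mod_cast hP.sum_card_orderedLink_le H u
  have hcross := sum_card_crossingTriples_le (H := H) hP.card_eq (by positivity : 0 ≤ lam / 4) u
  have hcN : (Fintype.card ι * N : ℝ) ≤ Fintype.card V := by exact_mod_cast hP.card_mul_le
  have hncN : (Fintype.card V : ℝ) ≤ Fintype.card ι * N + N := by exact_mod_cast hP.card_le
  set n : ℝ := (Fintype.card V : ℝ)
  set c : ℝ := (Fintype.card ι : ℝ)
  set ℓ : ℝ := (#(orderedLink (reducedGraph H P (lam / 4)) u) : ℝ)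
  have hnpos : 0 < n := by
    by_contra! h
    nlinarith [(by positivity : 0 ≤ δ + lam), (by positivity : (0 : ℝ) ≤ N)]
  have hNpos : (0 : ℝ) < N := by
    by_contra! h
    have : (N : ℝ) = 0 := le_antisymm h (by positivity)
    simp only [this] at hncN
    linarith
  have hcount : (δ + lam) * (n ^ 2 - 3 * n) ≤ 2 * N * n +
      N ^ 2 * (ℓ + 3 * c + lam / 4 * c ^ 2) := by
    refine le_of_mul_le_mul_left ?_ hNpos
    linarith
  have hcN_sq : c ^ 2 * N ^ 2 ≤ n ^ 2 := by rw [← mul_pow]; gcongr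
  have hlink : N ^ 2 * (δ * c ^ 2) < N ^ 2 * ℓ := by
    nlinarith [mul_pos hnpos (sub_pos.2 hlarge), mul_le_mul_of_nonneg_right hcN hNpos.le,
      mul_le_mul_of_nonneg_left hcN_sq hδ, mul_le_mul_of_nonneg_left hcN_sq hlam]
  exact lt_of_mul_lt_mul_left hlink (by positivity)

end Reduced

/-! ### Placing tiles in dense triples of clusters -/

section Placement

theorem card_inter_le_of_subset {α ι : Type*} [DecidableEq α] [DecidableEq ι]
    {P : ι → Finset α} (hP : Pairwise (Disjoint on P)) {A : Finset α} {u : ι} (hA : A ⊆ P u)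
    (x : ι) : #(P x ∩ A) ≤ if x = u then #A else 0 := by
  split_ifs with hxu
  · exact card_le_card inter_subset_right
  · rw [disjoint_iff_inter_eq_empty.1 ((hP hxu).mono_right hA), card_empty]

variable {V : Type} [DecidableEq V] [Fintype V] {H : Finset (Finset V)} {M N : ℕ} {d : ℝ}

theorem exists_mem_tripartiteCopies_of_dense (hbox : ForcesBox.{0} (d / 2) M N) (hM : 0 < M)
    {A B C U : Finset V} (hA : #A = N) (hB : #B = N) (hC : #C = N) (hAB : Disjoint A B)
    (hAC : Disjoint A C) (hBC : Disjoint B C) {X : ℕ} (hAU : #(A ∩ U) ≤ X) (hBU : #(B ∩ U) ≤ X)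
    (hCU : #(C ∩ U) ≤ X) (hX : 3 * X ≤ d / 2 * N)
    (hdense : d * (#A * #B * #C) ≤ #(crossingTriples H A B C)) :
    ∃ T ∈ tripartiteCopies H M, T.1 ⊆ A \ U ∧ T.2.1 ⊆ B \ U ∧ T.2.2 ⊆ C \ U := by
  have hlost : #(crossingTriples H A B C) ≤
      #(crossingTriples H (A \ U) (B \ U) (C \ U)) + 3 * X * N ^ 2 := by
    refine (card_crossingTriples_sdiff_le H A B C U).trans (Nat.add_le_add_left ?_ _)
    rw [hA, hB, hC]
    nlinarith [Nat.mul_le_mul_right (N * N) hAU, Nat.mul_le_mul_right (N * N) hBU,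
      Nat.mul_le_mul_right (N * N) hCU]
  have hsub : crossingTriples H (A \ U) (B \ U) (C \ U) ⊆ A ×ˢ B ×ˢ C :=
    (filter_subset _ _).trans (product_subset_product sdiff_subset
      (product_subset_product sdiff_subset sdiff_subset))
  obtain ⟨A', B', C', hA', hB', hC', hbox'⟩ := hbox V A B C _ hA.ge hB.ge hC.ge hsub <| by
    have hlost' : (#(crossingTriples H A B C) : ℝ) ≤
      #(crossingTriples H (A \ U) (B \ U) (C \ U)) + 3 * X * N ^ 2 := by exact_mod_cast hlost
    rw [hA, hB, hC] at hdense ⊢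
    nlinarith [mul_le_mul_of_nonneg_right hX (by positivity : (0 : ℝ) ≤ N ^ 2)]
  have hedge : ∀ a ∈ A', ∀ b ∈ B', ∀ c ∈ C',
      (a ∈ A \ U ∧ b ∈ B \ U ∧ c ∈ C \ U) ∧ {a, b, c} ∈ H := fun a ha b hb c hc => by
    simpa [crossingTriples] using hbox' (mk_mem_product ha (mk_mem_product hb hc))
  obtain ⟨a₀, ha₀⟩ := card_pos.1 (hA'.symm ▸ hM)
  obtain ⟨b₀, hb₀⟩ := card_pos.1 (hB'.symm ▸ hM)
  obtain ⟨c₀, hc₀⟩ := card_pos.1 (hC'.symm ▸ hM)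
  have hA'A : A' ⊆ A \ U := fun a ha => (hedge a ha b₀ hb₀ c₀ hc₀).1.1
  have hB'B : B' ⊆ B \ U := fun b hb => (hedge a₀ ha₀ b hb c₀ hc₀).1.2.1
  have hC'C : C' ⊆ C \ U := fun c hc => (hedge a₀ ha₀ b₀ hb₀ c hc).1.2.2
  exact ⟨(A', B', C'), mem_filter.2 ⟨mem_univ _, hA', hB', hC',
    hAB.mono (hA'A.trans sdiff_subset) (hB'B.trans sdiff_subset),
    hAC.mono (hA'A.trans sdiff_subset) (hC'C.trans sdiff_subset),
    hBC.mono (hB'B.trans sdiff_subset) (hC'C.trans sdiff_subset),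
    fun a ha b hb c hc => (hedge a ha b hb c hc).2⟩, hA'A, hB'B, hC'C⟩

variable {ι : Type*} [Fintype ι] [DecidableEq ι] {P : ι → Finset V}

theorem exists_tile_of_mem_reducedGraph (hbox : ForcesBox.{0} (d / 2) M N) (hM : 0 < M)
    (hP : IsClustering P N) {X : ℕ} (hX : 3 * X ≤ d / 2 * N) {U : Finset V}
    (hU : ∀ v, #(P v ∩ U) ≤ X) {e : Finset ι} (he : e ∈ reducedGraph H P d) :
    ∃ T ∈ tripartiteCopies H M, Disjoint (tileVertices T) U ∧
      ∀ v, #(P v ∩ tileVertices T) ≤ if v ∈ e then M else 0 := by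
  have hcard := card_eq_three_of_mem_reducedGraph he
  obtain ⟨u, v, w, rfl, hdense⟩ := (mem_filter.1 he).2
  obtain ⟨huv, huw, hvw⟩ := ne_of_card_triple_eq_three hcard
  have hdisj := hP.pairwise_disjoint
  obtain ⟨T, hT, hTu, hTv, hTw⟩ := exists_mem_tripartiteCopies_of_dense hbox hM (hP.card_eq u)
    (hP.card_eq v) (hP.card_eq w) (hdisj huv) (hdisj huw) (hdisj hvw) (hU u) (hU v) (hU w) hX
    hdense
  refine ⟨T, hT, ?_, fun x => ?_⟩
  · simp only [tileVertices, disjoint_union_left]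
    exact ⟨⟨disjoint_sdiff_self_left.mono_left hTu, disjoint_sdiff_self_left.mono_left hTv⟩,
      disjoint_sdiff_self_left.mono_left hTw⟩
  · obtain ⟨h₁, h₂, h₃, -⟩ := (mem_filter.1 hT).2
    have hu := card_inter_le_of_subset hdisj (hTu.trans sdiff_subset) x
    have hv := card_inter_le_of_subset hdisj (hTv.trans sdiff_subset) x
    have hw := card_inter_le_of_subset hdisj (hTw.trans sdiff_subset) x
    rw [h₁] at hu
    rw [h₂] at hv
    rw [h₃] at hw
    have hunion : #(P x ∩ tileVertices T) ≤ #(P x ∩ T.1) + #(P x ∩ T.2.1) + #(P x ∩ T.2.2) := by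
      rw [tileVertices, inter_union_distrib_left, inter_union_distrib_left]
      exact (card_union_le _ _).trans (Nat.add_le_add_right (card_union_le _ _) _)
    simp only [mem_insert, mem_singleton]
    grind

theorem exists_hasTiling_of_load_le (hbox : ForcesBox.{0} (d / 2) M N) (hM : 0 < M)
    (hP : IsClustering P N) {K : ℕ} (hK : 3 * (M * K : ℕ) ≤ d / 2 * N)
    {l : Multiset (Finset ι)} (hl : ∀ e ∈ l, e ∈ reducedGraph H P d) (hload : ∀ v, load l v ≤ K) :
    ∃ U, HasTiling H M l.card U ∧ ∀ v, #(P v ∩ U) ≤ M * load l v := by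
  induction l using Multiset.induction_on with
  | empty => exact ⟨∅, ⟨Fin.elim0, fun i => i.elim0, fun i => i.elim0⟩, by simp⟩
  | cons e l ih =>
    obtain ⟨he, hl'⟩ := Multiset.forall_mem_cons.1 hl
    have hload' : ∀ v, load l v ≤ K := fun v =>
      le_self_add.trans ((load_cons e l v).symm.trans_le (hload v))
    obtain ⟨U, htiling, hU⟩ := ih hl' hload'
    obtain ⟨T, hT, hTU, hTe⟩ := exists_tile_of_mem_reducedGraph hbox hM hP hK
      (fun v => (hU v).trans (Nat.mul_le_mul_left M (hload' v))) he
    refine ⟨U ∪ tileVertices T, ?_, fun v => ?_⟩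
    · rw [Multiset.card_cons]
      exact htiling.add (.of_mem hT) hTU.symm
    · calc #(P v ∩ (U ∪ tileVertices T)) ≤ #(P v ∩ U) + #(P v ∩ tileVertices T) := by
            rw [inter_union_distrib_left]
            exact card_union_le _ _
        _ ≤ M * load l v + if v ∈ e then M else 0 := add_le_add (hU v) (hTe v)
        _ = M * load (e ::ₘ l) v := by rw [load_cons, mul_add, mul_ite, mul_one, mul_zero]

end Placement

/-! ### Clusterings refining a tiling -/

section Refine

variable {V : Type} [DecidableEq V] [Fintype V] {H : Finset (Finset V)} {N τ : ℕ}

theorem exists_isClustering_of_disjoint {κ : Type*} [Fintype κ] (hN : 0 < N) {P : κ → Finset V}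
    (hcard : ∀ u, #(P u) = N) (hdisj : Pairwise (Disjoint on P)) :
    ∃ (k : ℕ) (F : Fin k → Finset V), IsClustering (Sum.elim P F) N := by
  set R := (univ.biUnion P)ᶜ with hR
  obtain ⟨F, hF, hFdisj⟩ := exists_disjoint_subsets_card_eq R (Nat.div_mul_le_self #R N)
  have hPR : ∀ u, Disjoint (P u) R := fun u =>
    disjoint_compl_right.mono_left (subset_biUnion_of_mem P (mem_univ u))
  refine ⟨#R / N, F, ⟨Sum.rec hcard fun i => (hF i).2, ?_, ?_⟩⟩
  · rintro (u | i) (v | j) hne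
    · exact hdisj fun h => hne (h ▸ rfl)
    · exact (hPR u).mono_right (hF j).1
    · exact ((hPR v).mono_right (hF i).1).symm
    · exact hFdisj fun h => hne (h ▸ rfl)
  · have hrest : (univ.biUnion (Sum.elim P F))ᶜ = R \ univ.biUnion F := by
      ext x
      simp [hR]
    rw [hrest, card_sdiff_of_subset (biUnion_subset.2 fun i _ => (hF i).1),
      card_biUnion fun i _ j _ hij => hFdisj hij]
    simp only [(hF _).2, sum_const, card_univ, Fintype.card_fin, smul_eq_mul]
    have := Nat.div_add_mod' #R N
    have := Nat.mod_lt #R hN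
    omega

theorem HasTiling.exists_isClustering (hN : 0 < N) (h : HasTiling H N τ univ) :
    ∃ (k : ℕ) (P : (Fin τ × Fin 3) ⊕ Fin k → Finset V), IsClustering P N ∧
      ∀ i, ∀ a ∈ P (.inl (i, 0)), ∀ b ∈ P (.inl (i, 1)), ∀ c ∈ P (.inl (i, 2)), {a, b, c} ∈ H := by
  obtain ⟨Q, hQ, hdisj⟩ := h
  have hcopy := fun i => (mem_filter.1 (hQ i).1).2
  have hcard : ∀ p : Fin τ × Fin 3, #(tilePart (Q p.1) p.2) = N := by
    rintro ⟨i, j⟩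
    obtain ⟨h₁, h₂, h₃, -⟩ := hcopy i
    fin_cases j
    exacts [h₁, h₂, h₃]
  have hparts : Pairwise (Disjoint on fun p : Fin τ × Fin 3 => tilePart (Q p.1) p.2) := by
    rintro ⟨i, j⟩ ⟨i', j'⟩ hne
    by_cases hi : i = i'
    · subst hi
      exact pairwise_disjoint_tilePart (hQ i).1 fun hj => hne (Prod.ext rfl hj)
    · exact (hdisj hi).mono (tilePart_subset_tileVertices _ j) (tilePart_subset_tileVertices _ j')
  obtain ⟨k, F, hP⟩ := exists_isClustering_of_disjoint hN hcard hparts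
  exact ⟨k, _, hP, fun i => (hcopy i).2.2.2.2.2.2⟩

end Refine

/-! ### Improving a tiling -/

section Improve

theorem sub_sum_abs_le_sum_sub_sup {ι : Type*} [Fintype ι] {τ r : ℕ}
    (tile : Fin τ × Fin (r + 1) ↪ ι) (x : ι → ℕ) (q s : ℕ) :
    (τ * (q - s) - ∑ v, |(s - x v : ℤ)| : ℤ) ≤
      (∑ i, (q - univ.sup fun j => x (tile (i, j))) : ℕ) := by
  have hpoint : ∀ i, (q - s - ∑ j, |(s - x (tile (i, j)) : ℤ)| : ℤ) ≤
      (q - univ.sup fun j => x (tile (i, j)) : ℕ) := fun i => by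
    obtain ⟨j, -, hj⟩ := exists_mem_eq_sup univ univ_nonempty fun j => x (tile (i, j))
    have hsingle := single_le_sum (f := fun j => |(s - x (tile (i, j)) : ℤ)|)
      (fun _ _ => abs_nonneg _) (mem_univ j)
    have hneg := neg_abs_le (s - x (tile (i, j)) : ℤ)
    rw [hj]
    omega
  have hembed : ∑ p, |(s - x (tile p) : ℤ)| ≤ ∑ v, |(s - x v : ℤ)| := by
    rw [← sum_map univ tile fun v => |(s - x v : ℤ)|]
    exact sum_le_sum_of_subset_of_nonneg (subset_univ _) fun _ _ _ => abs_nonneg _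
  have hsum := sum_le_sum fun i (_ : i ∈ univ) => hpoint i
  rw [sum_sub_distrib, ← Fintype.sum_prod_type' fun i j => |(s - x (tile (i, j)) : ℤ)|] at hsum
  simp only [sum_const, card_univ, Fintype.card_fin, nsmul_eq_mul] at hsum
  rw [Nat.cast_sum]
  linarith

theorem sum_abs_deficit_le {ι : Type*} [DecidableEq ι] [Fintype ι] {s : ℕ}
    {l : Multiset (Finset ι)} (himb : imbalance s l ≤ s * Fintype.card ι) {κ : ℝ} (hκ : 0 ≤ κ)
    (hs : 1 ≤ κ ^ 2 * s) :
    ((∑ v, |(s - load l v : ℤ)| : ℤ) : ℝ) ≤ κ * s * Fintype.card ι := by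
  have hcauchy : (∑ v, |(s - load l v : ℤ)|) ^ 2 ≤ Fintype.card ι * (s * Fintype.card ι) := by
    refine sq_sum_le_card_mul_sum_sq.trans ?_
    simp only [sq_abs]
    exact mul_le_mul_of_nonneg_left himb (by positivity)
  have hcauchy' : ((∑ v, |(s - load l v : ℤ)| : ℤ) : ℝ) ^ 2 ≤ s * Fintype.card ι ^ 2 := by
    have : (∑ v, |(s - load l v : ℤ)|) ^ 2 ≤ s * Fintype.card ι ^ 2 := by linarith
    exact_mod_cast this
  refine le_of_sq_le_sq (hcauchy'.trans ?_) (by positivity)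
  nlinarith [mul_le_mul_of_nonneg_right hs (by positivity : (0 : ℝ) ≤ s * Fintype.card ι ^ 2)]

variable {V : Type} [DecidableEq V] [Fintype V] {H : Finset (Finset V)} {M q s τ : ℕ}

theorem IsClustering.hasTiling_compl {ι : Type*} [Fintype ι] {P : ι → Finset V}
    (hP : IsClustering P (q * M)) (tile : Fin τ × Fin 3 ↪ ι)
    (hcomplete : ∀ i, ∀ a ∈ P (tile (i, 0)), ∀ b ∈ P (tile (i, 1)), ∀ c ∈ P (tile (i, 2)),
      {a, b, c} ∈ H) {U : Finset V} {x : ι → ℕ} (hU : ∀ v, #(P v ∩ U) ≤ M * x v) :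
    HasTiling H M (∑ i, (q - univ.sup fun j => x (tile (i, j)))) Uᶜ := by
  have hdisj : ∀ {p p'}, p ≠ p' → Disjoint (P (tile p) \ U) (P (tile p') \ U) := fun hne =>
    (hP.pairwise_disjoint (tile.injective.ne hne)).mono sdiff_subset sdiff_subset
  have hcard : ∀ i j, (q - univ.sup fun j => x (tile (i, j))) * M ≤ #(P (tile (i, j)) \ U) := by
    intro i j
    have hsup := le_sup (f := fun j => x (tile (i, j))) (mem_univ j)
    have hsplit := card_sdiff_add_card_inter (P (tile (i, j))) U
    rw [hP.card_eq] at hsplit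
    calc _ ≤ (q - x (tile (i, j))) * M := Nat.mul_le_mul_right M (Nat.sub_le_sub_left hsup q)
      _ = q * M - M * x (tile (i, j)) := by rw [Nat.sub_mul, mul_comm M]
      _ ≤ _ := by have := hU (tile (i, j)); omega
  have htile := fun i => HasTiling.of_complete (H := H)
    (hdisj (p := (i, 0)) (p' := (i, 1)) (by simp)) (hdisj (p' := (i, 2)) (by simp))
    (hdisj (by simp))
    (fun a ha b hb c hc => hcomplete i a (sdiff_subset ha) b (sdiff_subset hb) c (sdiff_subset hc))
    (hcard i 0) (hcard i 1) (hcard i 2)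
  refine (HasTiling.sum htile fun i i' hii' => ?_).mono (biUnion_subset.2 fun i _ => ?_)
  · have hne : ∀ j j' : Fin 3, (i, j) ≠ (i', j') := fun j j' h => hii' (congrArg Prod.fst h)
    simp [Function.onFun, disjoint_union_left, disjoint_union_right, hdisj (hne _ _)]
  · simp only [union_subset_iff, sdiff_eq_inter_compl, inter_subset_right, and_self]

theorem IsClustering.exists_hasTiling {ι : Type*} [DecidableEq ι] [Fintype ι] {P : ι → Finset V}
    (hP : IsClustering P (q * M)) (tile : Fin τ × Fin 3 ↪ ι)
    (hcomplete : ∀ i, ∀ a ∈ P (tile (i, 0)), ∀ b ∈ P (tile (i, 1)), ∀ c ∈ P (tile (i, 2)),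
      {a, b, c} ∈ H) {d κ : ℝ} (hbox : ForcesBox.{0} (d / 2) M (q * M)) (hM : 0 < M) (hs : 0 < s)
    (hq : 3 * (3 * s + 1) ≤ d / 2 * q) (hκ : 0 ≤ κ) (hκs : 1 ≤ κ ^ 2 * s)
    (hlink : ∀ v, 5 * Fintype.card ι ^ 2 < 9 * #(orderedLink (reducedGraph H P d) v)) :
    ∃ m : ℕ, HasTiling H M m univ ∧
      (1 - 4 * κ) * (s * Fintype.card ι) + 3 * τ * (q - s) ≤ 3 * m := by
  have hG : ∀ e ∈ reducedGraph H P d, #e = 3 := fun e he => card_eq_three_of_mem_reducedGraph he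
  obtain ⟨l, hl⟩ := exists_isMostBalanced (reducedGraph H P d) s
  obtain ⟨U, hnew, hU⟩ := exists_hasTiling_of_load_le hbox hM hP (K := 3 * s + 1)
    (by push_cast; nlinarith [(by positivity : (0 : ℝ) ≤ M)]) hl.prop (hl.load_le hG)
  have hold := hP.hasTiling_compl tile hcomplete hU
  refine ⟨_, (hnew.add hold disjoint_compl_right).mono (subset_univ _), ?_⟩
  have hold_count := sub_sum_abs_le_sum_sub_sup tile (load l) q s
  have hnew_count : (s * Fintype.card ι - ∑ v, |(s - load l v : ℤ)| : ℤ) ≤ 3 * l.card := by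
    have hload : ∑ v, (load l v : ℤ) = 3 * l.card := by
      exact_mod_cast sum_load_eq_mul_card fun e he => hG e (hl.prop e he)
    have habs := sum_le_sum fun v (_ : v ∈ univ) => le_abs_self (s - load l v : ℤ)
    rw [sum_sub_distrib, hload] at habs
    simp only [sum_const, card_univ, nsmul_eq_mul] at habs
    linarith
  have hdeficit := sum_abs_deficit_le (hl.imbalance_le_mul_card hG hlink hs) hκ hκs
  have hcount : (s * Fintype.card ι + 3 * (τ * (q - s)) - 4 * ∑ v, |(s - load l v : ℤ)| : ℤ) ≤
      3 * (l.card + ∑ i, (q - univ.sup fun j => load l (tile (i, j))) : ℕ) := by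
    push_cast at hold_count ⊢
    linarith
  have hcount' := (Int.cast_le (R := ℝ)).2 hcount
  rw [Int.cast_sub, Int.cast_mul 4] at hcount'
  push_cast at hcount' hdeficit ⊢
  linarith

end Improve

section Iterate

-- With `c` clusters of size `t * y`, the new tiles cover almost `y` vertices of each cluster, and
-- the `τ` old tiles keep the proportion `1 - 1 / t` of their vertices.
theorem coverage_gain {n c t y τ ρ r : ℝ} (hρ : 0 ≤ ρ) (hρ1 : ρ ≤ 1) (hρr : ρ ≤ r) (hn : 0 ≤ n)
    (ht : 1 ≤ t) (hcard : n ≤ c * (t * y) + t * y) (hrest : 4 * (t * y) ≤ ρ * n)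
    (hcover : (1 - r) * n ≤ 3 * (t * y) * τ) :
    (1 - (r - ρ / (2 * t))) * n ≤ (1 - ρ / 4) * (y * c) + 3 * τ * (t - 1) * y := by
  have hold : (t - 1) * ((1 - r) * n) ≤ (t - 1) * (3 * (t * y) * τ) :=
    mul_le_mul_of_nonneg_left hcover (by linarith)
  have hnew : (1 - ρ / 4) * (n - ρ * n / 4) ≤ (1 - ρ / 4) * (c * (t * y)) :=
    mul_le_mul_of_nonneg_left (by linarith) (by linarith)
  refine le_of_mul_le_mul_left ?_ (by linarith : 0 < t)
  have hscale : t * ((1 - (r - ρ / (2 * t))) * n) = t * ((1 - r) * n) + ρ * n / 2 := by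
    field_simp
    ring
  rw [hscale]
  nlinarith [mul_nonneg (mul_nonneg hρ hρ) hn, mul_le_mul_of_nonneg_right hρr hn]

theorem HasTiling.exists_improvement {V : Type} [DecidableEq V] [Fintype V]
    {H : Finset (Finset V)} {lam ρ r : ℝ} {M s t τ : ℕ} (hlam : 0 ≤ lam) (hρ : 0 ≤ ρ) (hρ1 : ρ ≤ 1)
    (hρr : ρ ≤ r) (ht : 96 ≤ lam * t) (hs : 0 < s) (hρs : 1 ≤ (ρ / 16) ^ 2 * s) (hM : 0 < M)
    (hbox : ForcesBox.{0} (lam / 4 / 2) M (t * s * M)) (hH : HasRelMinDegree H (5 / 9 + lam))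
    (hlarge : 4 * (3 * (5 / 9 + lam) + 5 * (t * s * M : ℕ)) < 3 * lam * Fintype.card V)
    (hrest : 4 * (t * s * M : ℕ) ≤ ρ * Fintype.card V) (h : HasTiling H (t * s * M) τ univ)
    (hcover : (1 - r) * Fintype.card V ≤ 3 * (t * s * M : ℕ) * τ) :
    ∃ m, HasTiling H M m univ ∧ (1 - (r - ρ / (2 * t))) * Fintype.card V ≤ 3 * M * m := by
  have htpos : 0 < t := Nat.pos_of_ne_zero (by rintro rfl; norm_num at ht)
  obtain ⟨k, P, hP, hcomplete⟩ := h.exists_isClustering (by positivity)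
  have hlink : ∀ v, 5 * Fintype.card ((Fin τ × Fin 3) ⊕ Fin k) ^ 2 <
      9 * #(orderedLink (reducedGraph H P (lam / 4)) v) := fun v => by
    have := hH.lt_card_orderedLink_reducedGraph (by norm_num) hlam hP hlarge v
    rw [div_mul_eq_mul_div, div_lt_iff₀' (by norm_num)] at this
    exact_mod_cast this
  have hs1 : (1 : ℝ) ≤ s := by exact_mod_cast hs
  obtain ⟨m, htiling, hm⟩ := hP.exists_hasTiling .inl hcomplete hbox hM hs
    (by push_cast; nlinarith) (by positivity) hρs hlink
  refine ⟨m, htiling, ?_⟩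
  have hcard : (Fintype.card V : ℝ) ≤
      Fintype.card ((Fin τ × Fin 3) ⊕ Fin k) * (t * s * M : ℕ) + (t * s * M : ℕ) := by
    exact_mod_cast hP.card_le
  push_cast at hm hcard hcover hrest
  calc _ ≤ (1 - ρ / 4) * (s * M * Fintype.card ((Fin τ × Fin 3) ⊕ Fin k)) +
        3 * τ * (t - 1) * (s * M) :=
        coverage_gain hρ hρ1 hρr (by positivity) (by exact_mod_cast htpos) (by linarith)
          (by linarith) (by linarith)
    _ ≤ 3 * M * m := by nlinarith [mul_le_mul_of_nonneg_right hm (Nat.cast_nonneg (α := ℝ) M)]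

/-- For every `M`, every sufficiently large 3-graph of relative minimum degree at least `d` has a
`K_{M,M,M}`-tiling that covers all but a proportion `r` of its vertices. -/
def ForcesAlmostTiling (d r : ℝ) : Prop :=
  ∀ M : ℕ, 0 < M → ∃ n₀ : ℕ, ∀ (V : Type) [DecidableEq V] [Fintype V], n₀ ≤ Fintype.card V →
    ∀ H : Finset (Finset V), HasRelMinDegree H d →
      ∃ m, HasTiling H M m univ ∧ (1 - r) * Fintype.card V ≤ 3 * M * m

namespace ForcesAlmostTiling

variable {d r r' ρ lam : ℝ}

theorem of_one_le (hr : 1 ≤ r) : ForcesAlmostTiling d r := fun M _ =>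
  ⟨0, fun V _ _ _ H _ => ⟨0, ⟨Fin.elim0, fun i => i.elim0, fun i => i.elim0⟩, by
    simpa using mul_nonpos_of_nonpos_of_nonneg (sub_nonpos.2 hr) (Nat.cast_nonneg _)⟩⟩

theorem mono (h : ForcesAlmostTiling d r) (hr : r ≤ r') : ForcesAlmostTiling d r' := fun M hM => by
  obtain ⟨n₀, hn₀⟩ := h M hM
  refine ⟨n₀, fun V _ _ hV H hH => ?_⟩
  obtain ⟨m, htiling, hcover⟩ := hn₀ V hV H hH
  exact ⟨m, htiling, le_trans (by gcongr) hcover⟩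

theorem improve (h : ForcesAlmostTiling (5 / 9 + lam) r) (hlam : 0 < lam) (hρ : 0 < ρ)
    (hρ1 : ρ ≤ 1) (hρr : ρ ≤ r) {t : ℕ} (ht : 96 ≤ lam * t) :
    ForcesAlmostTiling (5 / 9 + lam) (r - ρ / (2 * t)) := fun M hM => by
  have htpos : 0 < t := Nat.pos_of_ne_zero (by rintro rfl; norm_num at ht)
  obtain ⟨N₀, hbox⟩ := exists_forcesBox (by positivity : 0 < lam / 4 / 2) M
  obtain ⟨s₀, hs₀⟩ := exists_nat_ge (1 / (ρ / 16) ^ 2)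
  set s := s₀ + N₀ + 1
  have hρs : 1 ≤ (ρ / 16) ^ 2 * s := by
    rw [div_le_iff₀' (by positivity)] at hs₀
    refine hs₀.trans ?_
    gcongr
    omega
  have hbox' : ForcesBox.{0} (lam / 4 / 2) M (t * s * M) :=
    hbox.mono <| calc N₀ ≤ s := by omega
      _ ≤ t * s * M := by nlinarith [Nat.mul_pos htpos hM]
  obtain ⟨n₀, hn₀⟩ := h (t * s * M) (by positivity)
  obtain ⟨n₁, hn₁⟩ := exists_nat_gt (4 * (3 * (5 / 9 + lam) + 5 * (t * s * M : ℕ)) / (3 * lam))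
  obtain ⟨n₂, hn₂⟩ := exists_nat_ge (4 * (t * s * M : ℕ) / ρ)
  rw [div_lt_iff₀' (by positivity)] at hn₁
  rw [div_le_iff₀' hρ] at hn₂
  refine ⟨max n₀ (max n₁ n₂), fun V _ _ hV H hH => ?_⟩
  obtain ⟨hV₀, hV₁₂⟩ := max_le_iff.1 hV
  obtain ⟨hV₁, hV₂⟩ := max_le_iff.1 hV₁₂
  obtain ⟨τ, htiling, hcover⟩ := hn₀ V hV₀ H hH
  exact htiling.exists_improvement hlam.le hρ.le hρ1 hρr ht (by positivity) hρs hM hbox' hH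
    (hn₁.trans_le (by gcongr)) (hn₂.trans (by gcongr)) hcover

end ForcesAlmostTiling

theorem forcesAlmostTiling_five_ninths_add {ρ lam : ℝ} (hρ : 0 < ρ) (hlam : 0 < lam) :
    ForcesAlmostTiling (5 / 9 + lam) ρ := by
  rcases le_total 1 ρ with hρ1 | hρ1
  · exact .of_one_le hρ1
  obtain ⟨t, ht⟩ := exists_nat_ge (96 / lam)
  have htpos : (0 : ℝ) < t := (by positivity : 0 < 96 / lam).trans_le ht
  rw [div_le_iff₀' hlam] at ht
  set η := ρ / (2 * t) with hη
  have hiterate : ∀ k : ℕ, ForcesAlmostTiling (5 / 9 + lam) (max ρ (1 - k * η)) := by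
    intro k
    induction k with
    | zero => exact .of_one_le (by simp)
    | succ k ih =>
      refine (ih.improve hlam hρ hρ1 (le_max_left _ _) ht).mono ?_
      rw [← hη, sub_le_iff_le_add, ← max_add_add_right]
      push_cast
      exact max_le_max (le_add_of_nonneg_right (by positivity)) (by linarith)
  obtain ⟨k, hk⟩ := exists_nat_ge (1 / η)
  rw [div_le_iff₀ (by positivity)] at hk
  exact (hiterate k).mono (max_le le_rfl (by linarith))

end Iterate

/-- Cover Lemma: for every `ρ, λ > 0` and integer `L ≥ 1` there is `n₀` such that every
3-graph on `n ≥ n₀` vertices with minimum vertex degree at least `(5/9+λ)·C(n-1,2)`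
contains a family of pairwise vertex-disjoint copies of `K_{L,L,L}` covering at least
`(1-ρ)n` vertices. -/
theorem stmt_14 (ρ lam : ℝ) (hρ : 0 < ρ) (hlam : 0 < lam) (L : ℕ) (hL : 1 ≤ L) :
    ∃ n₀ : ℕ, ∀ n : ℕ, n₀ ≤ n →
    ∀ (V : Type) [DecidableEq V] [Fintype V], Fintype.card V = n →
    ∀ H : Finset (Finset V), (∀ e ∈ H, e.card = 3) →
    (∀ v : V, (5 / 9 + lam) * ((n - 1).choose 2 : ℝ) ≤
      ((H.filter fun e => v ∈ e).card : ℝ)) →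
    ∃ (m : ℕ) (Q : Fin m → Finset V × Finset V × Finset V),
      (∀ k, Q k ∈ tripartiteCopies H L) ∧
      (∀ k l, k ≠ l →
        Disjoint ((Q k).1 ∪ (Q k).2.1 ∪ (Q k).2.2) ((Q l).1 ∪ (Q l).2.1 ∪ (Q l).2.2)) ∧
      (1 - ρ) * (n : ℝ) ≤
        (((Finset.univ : Finset (Fin m)).biUnion fun k =>
          (Q k).1 ∪ (Q k).2.1 ∪ (Q k).2.2).card : ℝ) := by
  obtain ⟨n₀, hn₀⟩ := forcesAlmostTiling_five_ninths_add hρ hlam L hL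
  refine ⟨n₀, fun n hn V _ _ hV H hH hdeg => ?_⟩
  subst hV
  obtain ⟨m, ⟨Q, hQ, hdisj⟩, hcover⟩ := hn₀ V hn H ⟨hH, hdeg⟩
  refine ⟨m, Q, fun k => (hQ k).1, fun k l hkl => hdisj hkl, hcover.trans_eq ?_⟩
  exact_mod_cast (card_biUnion_tileVertices (fun k => (hQ k).1) hdisj).symm
end

section
/- For every β > 0 there exists t_1 such that every 3-graph H on t ≥ t_1 vertices with 3 | t and δ(H) ≥ (5/9 + β)·C(t−1,2) contains a perfect matching. -/
open Finset

/-!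
Let `M` be a maximum matching and `U` the set of vertices it misses. Call a pair of vertices heavy
if at least four vertices of `U` complete it to an edge. Between two edges of `M` there are at most
six heavy pairs (of nine), since otherwise two edges of `M` could be exchanged for three new ones;
an exchange of three edges for four shows that two pairs of edges with six heavy pairs each cannot
share an edge of `M` without a third one having at most four, so that the average number of heavy
pairs is at most about five. Hence the vertices of `U` have average degree at most about `5/9` of
the maximum, and the degree condition bounds `|U|` by a constant.

The bounded remainder is absorbed. Any two links have a common part of positive density, so every
triple `T` has a positive proportion of all six-tuples as absorbers, sets that can be perfectly
matched both with and without `T`. A greedy choice of `O(log n)` disjoint absorbers serves all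
triples at once, and a bounded number of repetitions gives a small set `A` that absorbs every
bounded vertex set of size divisible by three. Apply the first part to the complement of `A`.
-/

namespace ThreeGraphMatching

section Interedges

variable {α β M : Type*} [AddCommMonoid M] (R : α → β → Prop) [∀ x, DecidablePred (R x)]
  (s : Finset α) (t : Finset β)

lemma sum_interedges (F : α × β → M) :
    ∑ p ∈ Rel.interedges R s t, F p = ∑ x ∈ s, ∑ y ∈ t with R x y, F (x, y) := by
  rw [Rel.interedges, sum_filter, sum_product]
  simp only [sum_filter]

lemma card_interedges_eq_sum : #(Rel.interedges R s t) = ∑ x ∈ s, #{y ∈ t | R x y} := by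
  simp only [card_eq_sum_ones, sum_interedges]

end Interedges

section PairMatching

variable {α : Type*} {R : α → α → Prop} {e f g : Finset α}

lemma exists_mem_ne_ne (he : #e = 3) (a b : α) : ∃ c ∈ e, c ≠ a ∧ c ≠ b := by
  classical
  obtain ⟨c, hc, hcab⟩ := exists_mem_notMem_of_card_lt_card
    (show #{a, b} < #e by have := card_le_two (a := a) (b := b); omega)
  exact ⟨c, hc, by simpa using hcab⟩

lemma exists_two_disjoint_rel [DecidableRel R] (hf : #f = 3) (hg : #g = 3)
    (hR : 4 ≤ #(Rel.interedges R f g)) :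
    ∃ x ∈ f, ∃ x' ∈ f, ∃ y ∈ g, ∃ y' ∈ g, x ≠ x' ∧ y ≠ y' ∧ R x y ∧ R x' y' := by
  classical
  rw [card_interedges_eq_sum] at hR
  obtain ⟨x, hx, hx2⟩ : ∃ x ∈ f, 1 < #{y ∈ g | R x y} := by
    by_contra! hle
    have := sum_le_sum hle
    simp only [sum_const, smul_eq_mul] at this
    omega
  obtain ⟨x', hx', hx'1⟩ : ∃ x' ∈ f.erase x, 0 < #{y ∈ g | R x' y} := by
    by_contra! hle
    have hsplit : ∑ x' ∈ f.erase x, #{y ∈ g | R x' y} + #{y ∈ g | R x y} =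
        ∑ x ∈ f, #{y ∈ g | R x y} := sum_erase_add _ _ hx
    have hrow : #{y ∈ g | R x y} ≤ #g := card_filter_le g _
    have hother : ∑ x' ∈ f.erase x, #{y ∈ g | R x' y} ≤ 0 := sum_nonpos hle
    omega
  obtain ⟨y', hy'⟩ := card_pos.mp hx'1
  obtain ⟨y, hy, hyy'⟩ := exists_mem_ne hx2 y'
  rw [mem_filter] at hy hy'
  exact ⟨x, hx, x', mem_of_mem_erase hx', y, hy.1, y', hy'.1, (ne_of_mem_erase hx').symm, hyy',
    hy.2, hy'.2⟩

variable [DecidableEq α]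

/-- The graph with adjacency `R` has a matching of size `k` inside `S`; a matching is encoded as a
set of ordered pairs whose underlying two-element sets are pairwise disjoint. -/
def HasPairMatching (R : α → α → Prop) (S : Finset α) (k : ℕ) : Prop :=
  ∃ P : Finset (α × α), #P = k ∧
    (P : Set (α × α)).PairwiseDisjoint (fun p ↦ ({p.1, p.2} : Finset α)) ∧
    ∀ p ∈ P, p.1 ∈ S ∧ p.2 ∈ S ∧ R p.1 p.2

lemma hasPairMatching_of_injective {S : Finset α} {φ : e → α} (hφ : Function.Injective φ)
    (heS : e ⊆ S) (hφS : ∀ x, φ x ∈ S) (hφe : ∀ x, φ x ∉ e) (hR : ∀ x : e, R x (φ x)) :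
    HasPairMatching R S #e := by
  refine ⟨univ.image fun x : e ↦ ((x : α), φ x), ?_, ?_, ?_⟩
  · rw [card_image_of_injective _ fun x y hxy ↦ Subtype.ext (Prod.ext_iff.mp hxy).1]
    simp
  · rintro _ hp _ hq hpq
    simp only [coe_image, coe_univ, Set.image_univ, Set.mem_range] at hp hq
    obtain ⟨x, rfl⟩ := hp
    obtain ⟨y, rfl⟩ := hq
    have hxy : x ≠ y := by rintro rfl; exact hpq rfl
    have hφxy := hφ.ne hxy
    have hx := hφe x
    have hy := hφe y
    simp only [Function.onFun, disjoint_left, mem_insert, mem_singleton]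
    grind
  · simp only [mem_image, mem_univ, true_and, forall_exists_index, forall_apply_eq_imp_iff]
    exact fun x ↦ ⟨heS x.2, hφS x, hR x⟩

/-- The Frobenius–König theorem, from Hall's marriage theorem. -/
lemma exists_not_rel_of_not_hasPairMatching (hef : Disjoint e f)
    (h : ¬ HasPairMatching R (e ∪ f) #e) :
    ∃ A ⊆ e, ∃ B ⊆ f, #f < #A + #B ∧ ∀ x ∈ A, ∀ y ∈ B, ¬ R x y := by
  classical
  by_contra! hAB
  let nbrs : e → Finset α := fun x ↦ {y ∈ f | R x y}
  have hall : ∀ s : Finset e, #s ≤ #(s.biUnion nbrs) := by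
    intro s
    by_contra! hs
    have hN : s.biUnion nbrs ⊆ f := biUnion_subset.mpr fun x _ ↦ filter_subset _ _
    obtain ⟨x, hx, y, hy, hxy⟩ := hAB (s.map (Function.Embedding.subtype _))
      (map_subtype_subset s) (f \ s.biUnion nbrs) sdiff_subset (by
        rw [card_map]
        have := card_sdiff_add_card_eq_card hN
        omega)
    simp only [mem_map, Function.Embedding.subtype_apply] at hx
    obtain ⟨x, hxs, rfl⟩ := hx
    rw [mem_sdiff] at hy
    exact hy.2 (mem_biUnion.mpr ⟨x, hxs, mem_filter.mpr ⟨hy.1, hxy⟩⟩)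
  obtain ⟨φ, hφ, hφn⟩ := (all_card_le_biUnion_card_iff_exists_injective nbrs).mp hall
  simp only [nbrs, mem_filter] at hφn
  exact h (hasPairMatching_of_injective hφ subset_union_left
    (fun x ↦ mem_union_right _ (hφn x).1) (fun x ↦ disjoint_right.mp hef (hφn x).1)
    fun x ↦ (hφn x).2)

/-- The absent pairs contain a product `A ×ˢ B` with `4 ≤ #A + #B`: there are at least three of
them, and exactly three only if `A` or `B` is a singleton. -/
lemma card_interedges_of_not_hasPairMatching [DecidableRel R] (he : #e = 3) (hf : #f = 3)
    (hef : Disjoint e f) (h : ¬ HasPairMatching R (e ∪ f) 3) :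
    #(Rel.interedges R e f) ≤ 6 ∧ (#(Rel.interedges R e f) = 6 →
      (∃ a ∈ e, ∀ x ∈ e.erase a, ∀ y ∈ f, R x y) ∨
      (∃ b ∈ f, ∀ x ∈ e, ∀ y ∈ f.erase b, R x y)) := by
  obtain ⟨A, hAe, B, hBf, hcard, hAB⟩ :=
    exists_not_rel_of_not_hasPairMatching hef (by rwa [he])
  have hsub : A ×ˢ B ⊆ Rel.interedges (fun x y ↦ ¬ R x y) e f := by
    rintro ⟨x, y⟩ hxy
    rw [mem_product] at hxy
    exact Rel.mk_mem_interedges_iff.mpr ⟨hAe hxy.1, hBf hxy.2, hAB x hxy.1 y hxy.2⟩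
  have hcompl := Rel.card_interedges_add_card_interedges_compl R e f
  have hle := card_le_card hsub
  rw [card_product] at hle
  have hA := card_le_card hAe
  have hB := card_le_card hBf
  rw [he, hf] at *
  have hmul : 3 ≤ #A * #B := by nlinarith
  refine ⟨by omega, fun h6 ↦ ?_⟩
  have heq : A ×ˢ B = Rel.interedges (fun x y ↦ ¬ R x y) e f :=
    eq_of_subset_of_card_le hsub (by rw [card_product]; omega)
  have hR : ∀ x ∈ e, ∀ y ∈ f, ¬ R x y → x ∈ A ∧ y ∈ B := fun x hx y hy hxy ↦
    mem_product.mp (heq ▸ Rel.mk_mem_interedges_iff.mpr ⟨hx, hy, hxy⟩ : (x, y) ∈ A ×ˢ B)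
  have hmul3 : #A * #B = 3 := by omega
  obtain hA1 | hB1 : #A = 1 ∨ #B = 1 := by
    have : #A ∣ 3 := ⟨_, hmul3.symm⟩
    rcases (Nat.dvd_prime Nat.prime_three).mp this with h1 | h3
    · exact .inl h1
    · rw [h3] at hmul3; omega
  · obtain ⟨a, rfl⟩ := card_eq_one.mp hA1
    exact .inl ⟨a, hAe (mem_singleton_self a), fun x hx y hy ↦ by
      by_contra hxy
      exact ne_of_mem_erase hx (mem_singleton.mp (hR x (mem_of_mem_erase hx) y hy hxy).1)⟩
  · obtain ⟨b, rfl⟩ := card_eq_one.mp hB1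
    exact .inr ⟨b, hBf (mem_singleton_self b), fun x hx y hy ↦ by
      by_contra hxy
      exact ne_of_mem_erase hy (mem_singleton.mp (hR x hx y (mem_of_mem_erase hy) hxy).2)⟩

lemma hasPairMatching_four_of_nodup {S : Finset α} {x₀ y₀ x₁ y₁ x₂ y₂ x₃ y₃ : α}
    (hS : ∀ z ∈ [x₀, y₀, x₁, y₁, x₂, y₂, x₃, y₃], z ∈ S)
    (hnd : [x₀, y₀, x₁, y₁, x₂, y₂, x₃, y₃].Nodup)
    (h₀ : R x₀ y₀) (h₁ : R x₁ y₁) (h₂ : R x₂ y₂) (h₃ : R x₃ y₃) : HasPairMatching R S 4 := by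
  simp only [List.nodup_cons, List.mem_cons, List.not_mem_nil, or_false, not_or] at hnd
  refine ⟨{(x₀, y₀), (x₁, y₁), (x₂, y₂), (x₃, y₃)}, ?_, ?_, ?_⟩
  · repeat rw [card_insert_of_notMem (by simp; grind)]
    rfl
  · simp only [coe_insert, coe_singleton, Set.pairwiseDisjoint_insert, disjoint_left]
    simp
    grind
  · simp_all

lemma exists_rel_meeting_or_avoiding [DecidableRel R] (hf : #f = 3) (hg : #g = 3)
    (hR : 5 ≤ #(Rel.interedges R f g)) {a b : α} (ha : a ∈ f) (hb : b ∈ g) :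
    (∃ y ∈ g.erase b, R a y) ∨ (∃ x ∈ f.erase a, R x b) ∨
      (R a b ∧ ∃ x ∈ f.erase a, ∃ y ∈ g.erase b, R x y) := by
  obtain ⟨p, hp, hpout⟩ : ∃ p ∈ Rel.interedges R f g, p ∉ f.erase a ×ˢ g.erase b := by
    apply exists_mem_notMem_of_card_lt_card
    rw [card_product, card_erase_of_mem ha, card_erase_of_mem hb, hf, hg]
    omega
  obtain ⟨q, hq, hqab⟩ := exists_mem_ne (show 1 < #(Rel.interedges R f g) by omega) (a, b)
  simp only [Rel.mem_interedges_iff, mem_product, mem_erase, ne_eq, Prod.ext_iff] at *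
  grind

section FourPairs

variable (he : #e = 3) (hf : #f = 3) (hg : #g = 3)
  (hef : Disjoint e f) (heg : Disjoint e g) (hfg : Disjoint f g)

include he hf hg hef heg hfg

lemma hasPairMatching_four_of_cols_cols_of_rel {a b y : α}
    (haf : ∀ x ∈ e, ∀ y ∈ f.erase a, R x y) (hbg : ∀ x ∈ e, ∀ y ∈ g.erase b, R x y)
    (ha : a ∈ f) (hy : y ∈ g.erase b) (hay : R a y) : HasPairMatching R (e ∪ f ∪ g) 4 := by
  obtain ⟨u, hu, v, hv, w, hw, huv, huw, hvw⟩ := two_lt_card.mp (he ▸ Nat.lt_succ_self 2 : 2 < #e)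
  obtain ⟨y', hy', hy'b, hy'y⟩ := exists_mem_ne_ne hg b y
  obtain ⟨x', hx', hx'a, -⟩ := exists_mem_ne_ne hf a a
  obtain ⟨x'', hx'', hx''a, hx''x'⟩ := exists_mem_ne_ne hf a x'
  rw [disjoint_left] at hef heg hfg
  rw [mem_erase] at hy
  exact hasPairMatching_four_of_nodup (by simp [*])
    (by
      clear haf hbg
      simp only [List.nodup_cons, List.mem_cons, List.not_mem_nil, List.nodup_nil, not_or]
      and_intros <;> grind)
    hay (hbg u hu y' (mem_erase.mpr ⟨hy'b, hy'⟩)) (haf v hv x' (mem_erase.mpr ⟨hx'a, hx'⟩))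
    (haf w hw x'' (mem_erase.mpr ⟨hx''a, hx''⟩))

variable [DecidableRel R]

lemma hasPairMatching_four_of_rows_rows (hR : 4 ≤ #(Rel.interedges R f g)) {a b : α}
    (haf : ∀ x ∈ e.erase a, ∀ y ∈ f, R x y) (hbg : ∀ x ∈ e.erase b, ∀ y ∈ g, R x y) :
    HasPairMatching R (e ∪ f ∪ g) 4 := by
  obtain ⟨x, hx, x', hx', y, hy, y', hy', hxx', hyy', hxy, hxy'⟩ := exists_two_disjoint_rel hf hg hR
  obtain ⟨x'', hx'', hx''x, hx''x'⟩ := exists_mem_ne_ne hf x x'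
  obtain ⟨y'', hy'', hy''y, hy''y'⟩ := exists_mem_ne_ne hg y y'
  obtain ⟨v, hv, hva, hvb⟩ := exists_mem_ne_ne he a b
  obtain ⟨u, hu, hua, huv⟩ := exists_mem_ne_ne he a v
  rw [disjoint_left] at hef heg hfg
  exact hasPairMatching_four_of_nodup (by simp [*])
    (by
      clear haf hbg
      simp only [List.nodup_cons, List.mem_cons, List.not_mem_nil, List.nodup_nil, not_or]
      and_intros <;> grind)
    (haf u (mem_erase.mpr ⟨hua, hu⟩) x'' hx'') (hbg v (mem_erase.mpr ⟨hvb, hv⟩) y'' hy'') hxy hxy'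

lemma hasPairMatching_four_of_rows_cols (hR : (Rel.interedges R f g).Nonempty) {a b : α}
    (ha : a ∈ e) (haf : ∀ x ∈ e.erase a, ∀ y ∈ f, R x y) (hbg : ∀ x ∈ e, ∀ y ∈ g.erase b, R x y) :
    HasPairMatching R (e ∪ f ∪ g) 4 := by
  obtain ⟨⟨x, y⟩, hxy⟩ := hR
  obtain ⟨hx, hy, hxy⟩ := Rel.mk_mem_interedges_iff.mp hxy
  obtain ⟨y', hy', hy'b, hy'y⟩ := exists_mem_ne_ne hg b y
  obtain ⟨u, hu, hua, -⟩ := exists_mem_ne_ne he a a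
  obtain ⟨v, hv, hva, hvu⟩ := exists_mem_ne_ne he a u
  obtain ⟨x', hx', hx'x, -⟩ := exists_mem_ne_ne hf x x
  obtain ⟨x'', hx'', hx''x, hx''x'⟩ := exists_mem_ne_ne hf x x'
  rw [disjoint_left] at hef heg hfg
  exact hasPairMatching_four_of_nodup (by simp [*])
    (by
      clear haf hbg
      simp only [List.nodup_cons, List.mem_cons, List.not_mem_nil, List.nodup_nil, not_or]
      and_intros <;> grind)
    (hbg a ha y' (mem_erase.mpr ⟨hy'b, hy'⟩)) (haf u (mem_erase.mpr ⟨hua, hu⟩) x' hx')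
    (haf v (mem_erase.mpr ⟨hva, hv⟩) x'' hx'') hxy

lemma hasPairMatching_four_of_cols_cols [Std.Symm R] (hR : 5 ≤ #(Rel.interedges R f g)) {a b : α}
    (ha : a ∈ f) (hb : b ∈ g) (haf : ∀ x ∈ e, ∀ y ∈ f.erase a, R x y)
    (hbg : ∀ x ∈ e, ∀ y ∈ g.erase b, R x y) : HasPairMatching R (e ∪ f ∪ g) 4 := by
  obtain ⟨y, hy, hay⟩ | ⟨x, hx, hxb⟩ | ⟨hab, x, hx, y, hy, hxy⟩ :=
    exists_rel_meeting_or_avoiding hf hg hR ha hb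
  · exact hasPairMatching_four_of_cols_cols_of_rel he hf hg hef heg hfg haf hbg ha hy hay
  · rw [union_right_comm]
    exact hasPairMatching_four_of_cols_cols_of_rel he hg hf heg hef hfg.symm hbg haf hb hx
      (symm hxb)
  · rw [mem_erase] at hx hy
    obtain ⟨x', hx', hx'a, hx'x⟩ := exists_mem_ne_ne hf a x
    obtain ⟨y', hy', hy'b, hy'y⟩ := exists_mem_ne_ne hg b y
    obtain ⟨u, hu, v, hv, huv⟩ := one_lt_card.mp (show 1 < #e by omega)
    rw [disjoint_left] at hef heg hfg
    exact hasPairMatching_four_of_nodup (by simp [*])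
      (by
        clear haf hbg
        simp only [List.nodup_cons, List.mem_cons, List.not_mem_nil, List.nodup_nil, not_or]
        and_intros <;> grind)
      hab hxy
      (haf u hu x' (mem_erase.mpr ⟨hx'a, hx'⟩)) (hbg v hv y' (mem_erase.mpr ⟨hy'b, hy'⟩))

lemma card_interedges_le_four_of_eq_six_of_eq_six [Std.Symm R]
    (hef₃ : ¬ HasPairMatching R (e ∪ f) 3) (heg₃ : ¬ HasPairMatching R (e ∪ g) 3)
    (h₄ : ¬ HasPairMatching R (e ∪ f ∪ g) 4)
    (hef₆ : #(Rel.interedges R e f) = 6) (heg₆ : #(Rel.interedges R e g) = 6) :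
    #(Rel.interedges R f g) ≤ 4 := by
  by_contra! hR
  have hR' : 4 ≤ #(Rel.interedges R f g) := by omega
  have hne : (Rel.interedges R f g).Nonempty := card_pos.mp (by omega)
  have hne' : (Rel.interedges R g f).Nonempty := card_pos.mp (by
    rw [Rel.card_interedges_comm]; omega)
  apply h₄
  rcases (card_interedges_of_not_hasPairMatching he hf hef hef₃).2 hef₆ with
    ⟨a, ha, haf⟩ | ⟨a, ha, haf⟩ <;>
  rcases (card_interedges_of_not_hasPairMatching he hg heg heg₃).2 heg₆ with
    ⟨b, hb, hbg⟩ | ⟨b, hb, hbg⟩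
  · exact hasPairMatching_four_of_rows_rows he hf hg hef heg hfg hR' haf hbg
  · exact hasPairMatching_four_of_rows_cols he hf hg hef heg hfg hne ha haf hbg
  · rw [union_right_comm]
    exact hasPairMatching_four_of_rows_cols he hg hf heg hef hfg.symm hne' hb hbg haf
  · exact hasPairMatching_four_of_cols_cols he hf hg hef heg hfg hR ha hb haf hbg

end FourPairs

end PairMatching

section Cherries

variable {ι : Type*} {s : Finset ι}

lemma one_le_div_add_div_div_two {a b : ℝ} (ha : 0 < a) (hb : 0 < b) :
    1 ≤ (a / b + b / a) / 2 := by
  rw [div_add_div _ _ hb.ne' ha.ne', div_div, le_div_iff₀ (by positivity)]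
  nlinarith [sq_nonneg (a - b)]

variable {A B : ι → ι → Prop} [DecidableRel A] [DecidableRel B]

lemma card_interedges_le_of_cherry [Std.Symm A]
    (hAB : ∀ i ∈ s, ∀ j ∈ s, ∀ k ∈ s, A i j → A i k → B j k) :
    #(Rel.interedges A s s) ≤ #(Rel.interedges B s s) := by
  let d : ι → ℕ := fun i ↦ #{j ∈ s | A i j}
  let b : ι → ℕ := fun i ↦ #{j ∈ s | B i j}
  have hdb : ∀ p ∈ Rel.interedges A s s, d p.2 ≤ b p.1 := by
    intro p hp
    obtain ⟨hp₁, hp₂, hpA⟩ := Rel.mem_interedges_iff.mp hp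
    exact card_le_card fun k hk ↦ by
      rw [mem_filter] at hk ⊢
      exact ⟨hk.1, hAB _ hp₂ _ hp₁ k hk.1 (symm hpA) hk.2⟩
  have hd : ∀ p ∈ Rel.interedges A s s, (0 : ℝ) < d p.1 ∧ (0 : ℝ) < d p.2 := by
    intro p hp
    obtain ⟨hp₁, hp₂, hpA⟩ := Rel.mem_interedges_iff.mp hp
    exact ⟨Nat.cast_pos.mpr (card_pos.mpr ⟨p.2, mem_filter.mpr ⟨hp₂, hpA⟩⟩),
      Nat.cast_pos.mpr (card_pos.mpr ⟨p.1, mem_filter.mpr ⟨hp₁, symm hpA⟩⟩)⟩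
  have hswap : ∑ p ∈ Rel.interedges A s s, (d p.1 : ℝ) / d p.2 =
      ∑ p ∈ Rel.interedges A s s, (d p.2 : ℝ) / d p.1 :=
    sum_nbij' Prod.swap Prod.swap (fun _ ↦ Rel.swap_mem_interedges_iff.mpr)
      (fun _ ↦ Rel.swap_mem_interedges_iff.mpr) (by simp) (by simp) (by simp)
  have hreal : (#(Rel.interedges A s s) : ℝ) ≤ #(Rel.interedges B s s) := calc
    (#(Rel.interedges A s s) : ℝ)
      ≤ ∑ p ∈ Rel.interedges A s s, ((d p.1 : ℝ) / d p.2 + d p.2 / d p.1) / 2 := by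
        rw [cast_card]
        exact sum_le_sum fun p hp ↦ one_le_div_add_div_div_two (hd p hp).1 (hd p hp).2
    _ = ∑ p ∈ Rel.interedges A s s, (d p.2 : ℝ) / d p.1 := by
        rw [← sum_div, sum_add_distrib, hswap, add_self_div_two]
    _ ≤ ∑ p ∈ Rel.interedges A s s, (b p.1 : ℝ) / d p.1 :=
        sum_le_sum fun p hp ↦ by gcongr; exact hdb p hp
    _ = ∑ i ∈ s, d i * ((b i : ℝ) / d i) := by
        simp only [sum_interedges, sum_const, nsmul_eq_mul, d]
    _ ≤ ∑ i ∈ s, (b i : ℝ) := sum_le_sum fun i _ ↦ (mul_div_left_comm _ _ _).trans_le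
        (mul_le_of_le_one_right (b i).cast_nonneg (div_self_le_one _))
    _ = #(Rel.interedges B s s) := by rw [card_interedges_eq_sum]; push_cast; rfl
  exact_mod_cast hreal

lemma sum_sum_le_five_mul_sq_of_cherry {w : ι → ι → ℕ} (hsymm : ∀ i j, w i j = w j i)
    (hle : ∀ i ∈ s, ∀ j ∈ s, w i j ≤ 6)
    (hcherry : ∀ i ∈ s, ∀ j ∈ s, ∀ k ∈ s, w i j = 6 → w i k = 6 → w j k ≤ 4) :
    ∑ i ∈ s, ∑ j ∈ s, w i j ≤ 5 * #s ^ 2 := by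
  have : Std.Symm fun i j ↦ w i j = 6 := ⟨fun i j hij ↦ hsymm j i ▸ hij⟩
  have hcard := card_interedges_le_of_cherry (A := fun i j ↦ w i j = 6)
    (B := fun i j ↦ w i j ≤ 4) hcherry
  simp only [card_interedges_eq_sum, card_filter] at hcard
  have hpoint : ∀ i ∈ s, ∀ j ∈ s,
      w i j + (if w i j ≤ 4 then 1 else 0) ≤ 5 + if w i j = 6 then 1 else 0 := by
    intro i hi j hj
    have := hle i hi j hj
    split_ifs <;> omega
  have hsum := sum_le_sum fun i hi ↦ sum_le_sum (hpoint i hi)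
  simp only [sum_add_distrib, sum_const, smul_eq_mul] at hsum
  rw [show 5 * #s ^ 2 = #s * (#s * 5) by ring]
  omega

end Cherries

lemma injective_of_pairwise_disjoint {ι α : Type*} {e : ι → Finset α} (hne : ∀ i, e i ≠ ∅)
    (hd : Pairwise (Function.onFun Disjoint e)) : Function.Injective e := by
  intro i j hij
  by_contra hne'
  have : Disjoint (e i) (e j) := hd hne'
  rw [hij, disjoint_self_iff_empty] at this
  exact hne j this

lemma exists_injective_of_card_le {ι α : Type*} [Fintype ι] {t : ι → Finset α}
    (ht : ∀ i, Fintype.card ι ≤ #(t i)) : ∃ φ : ι → α, Function.Injective φ ∧ ∀ i, φ i ∈ t i := by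
  classical
  refine (all_card_le_biUnion_card_iff_exists_injective t).mp fun s ↦ ?_
  obtain rfl | ⟨i, hi⟩ := s.eq_empty_or_nonempty
  · exact Nat.zero_le _
  · exact (card_le_univ s).trans ((ht i).trans (card_le_card (subset_biUnion_of_mem t hi)))

section Matching

variable {V : Type*} {H M S T : Finset (Finset V)} {U W : Finset V}

/-- `M` is a set of pairwise disjoint edges of the hypergraph `H`. -/
structure IsMatching (H M : Finset (Finset V)) : Prop where
  subset : M ⊆ H
  pairwiseDisjoint : (M : Set (Finset V)).PairwiseDisjoint id

/-- `M` is a matching of `H` with the largest possible number of edges. -/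
structure IsMaximumMatching (H M : Finset (Finset V)) : Prop extends IsMatching H M where
  card_le : ∀ N, IsMatching H N → #N ≤ #M

lemma exists_isMaximumMatching (H : Finset (Finset V)) : ∃ M, IsMaximumMatching H M := by
  classical
  obtain ⟨M, hM, hmax⟩ := exists_max_image {N ∈ H.powerset | IsMatching H N} card
    ⟨∅, mem_filter.mpr ⟨empty_mem_powerset H, empty_subset H, by simp⟩⟩
  exact ⟨M, (mem_filter.mp hM).2, fun N hN ↦
    hmax N (mem_filter.mpr ⟨mem_powerset.mpr hN.subset, hN⟩)⟩

lemma IsMatching.mono (hM : IsMatching H M) (hS : S ⊆ M) : IsMatching H S :=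
  ⟨hS.trans hM.subset, hM.pairwiseDisjoint.subset (coe_subset.mpr hS)⟩

lemma empty_notMem_of_sized {k : ℕ} (hH : (H : Set (Finset V)).Sized (k + 1)) : ∅ ∉ H :=
  fun h ↦ Nat.succ_ne_zero k (hH h).symm

variable [DecidableEq V]

/-- The number of vertices in `U` that complete `x` and `y` to an edge of `H`. -/
def codegreeIn (H : Finset (Finset V)) (U : Finset V) (x y : V) : ℕ :=
  #{v ∈ U | {v, x, y} ∈ H}

/-- The link of `v` in `H`, restricted to `W`, as a set of ordered pairs; in a 3-graph each edge
of the link is thus counted twice. -/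
def linkIn (H : Finset (Finset V)) (W : Finset V) (v : V) : Finset (V × V) :=
  Rel.interedges (fun x y ↦ {v, x, y} ∈ H) W W

lemma mem_linkIn {v : V} {p : V × V} :
    p ∈ linkIn H W v ↔ p.1 ∈ W ∧ p.2 ∈ W ∧ {v, p.1, p.2} ∈ H :=
  Rel.mem_interedges_iff

lemma card_linkIn_le (v : V) : #(linkIn H W v) ≤ #W * #W :=
  Rel.card_interedges_le_mul _ _ _

lemma codegreeIn_comm (x y : V) : codegreeIn H U x y = codegreeIn H U y x := by
  simp only [codegreeIn, pair_comm x y]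

lemma codegreeIn_le_card (x y : V) : codegreeIn H U x y ≤ #U :=
  card_filter_le _ _

lemma sum_codegreeIn (x : V) : ∑ y ∈ U, codegreeIn H U x y = #(linkIn H U x) := by
  rw [linkIn, card_interedges_eq_sum]
  refine sum_congr rfl fun y _ ↦ ?_
  have hrot : ∀ v, ({v, x, y} : Finset V) = {x, y, v} := fun v ↦ by
    rw [insert_comm, pair_comm]
  simp only [codegreeIn, hrot]

lemma sum_card_linkIn :
    ∑ v ∈ U, #(linkIn H W v) = ∑ x ∈ W, ∑ y ∈ W, codegreeIn H U x y := by
  simp only [linkIn, Rel.interedges, codegreeIn, card_filter]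
  rw [sum_comm, sum_product]

lemma IsMatching.card_biUnion {k : ℕ} (hM : IsMatching H M) (hH : (H : Set (Finset V)).Sized k) :
    #(M.biUnion id) = k * #M := by
  rw [Finset.card_biUnion hM.pairwiseDisjoint, mul_comm]
  exact sum_const_nat fun e he ↦ hH (hM.subset he)

lemma IsMatching.union (hM : IsMatching H M) (hT : IsMatching H T)
    (hMT : ∀ e ∈ M, ∀ f ∈ T, Disjoint e f) : IsMatching H (M ∪ T) where
  subset := union_subset hM.subset hT.subset
  pairwiseDisjoint := by
    rw [coe_union]
    exact hM.pairwiseDisjoint.union hT.pairwiseDisjoint fun e he f hf _ ↦ hMT e he f hf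

/-- Replacing `S` by `T` in `M` yields a matching again. -/
lemma IsMaximumMatching.card_le_of_subset_union (hM : IsMaximumMatching H M) (hH : ∅ ∉ H)
    (hS : S ⊆ M) (hU : Disjoint U (M.biUnion id)) (hT : IsMatching H T)
    (hTS : ∀ e ∈ T, e ⊆ S.biUnion id ∪ U) : #T ≤ #S := by
  have hdisj : ∀ f ∈ M \ S, ∀ e ∈ T, Disjoint f e := by
    intro f hf e he
    rw [mem_sdiff] at hf
    refine disjoint_of_subset_right (hTS e he) (disjoint_union_right.mpr ⟨?_, ?_⟩)
    · refine (disjoint_biUnion_right _ _ _).mpr fun g hg ↦ ?_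
      exact hM.pairwiseDisjoint hf.1 (hS hg) (by rintro rfl; exact hf.2 hg)
    · exact (disjoint_of_subset_right (subset_biUnion_of_mem id hf.1) hU).symm
  have hcap : Disjoint (M \ S) T := by
    refine disjoint_left.mpr fun e he heT ↦ hH ?_
    have he₀ : e = ∅ := disjoint_self_iff_empty e |>.mp (hdisj e he e heT)
    exact he₀ ▸ hT.subset heT
  have hle := hM.card_le _ ((hM.mono sdiff_subset).union hT hdisj)
  rw [card_union_of_disjoint hcap] at hle
  have := card_sdiff_add_card_eq_card hS
  omega

lemma IsMatching.image {ι : Type*} [Fintype ι] {e : ι → Finset V} (he : ∀ i, e i ∈ H)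
    (hd : Pairwise (Function.onFun Disjoint e)) : IsMatching H (univ.image e) where
  subset := by simpa only [image_subset_iff, mem_univ, true_imp_iff] using he
  pairwiseDisjoint := by
    rw [coe_image, coe_univ, Set.image_univ]
    rintro _ ⟨i, rfl⟩ _ ⟨j, rfl⟩ hij
    exact hd fun h ↦ hij (h ▸ rfl)

lemma IsMaximumMatching.card_le_of_hasPairMatching (hM : IsMaximumMatching H M) (hH : ∅ ∉ H)
    (hS : S ⊆ M) (hU : Disjoint U (M.biUnion id)) {k l : ℕ} (hkl : k ≤ l)
    (h : HasPairMatching (fun x y ↦ l ≤ codegreeIn H U x y) (S.biUnion id) k) : k ≤ #S := by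
  obtain ⟨P, rfl, hPd, hP⟩ := h
  obtain ⟨φ, hφ, hφU⟩ := exists_injective_of_card_le
    (t := fun p : P ↦ {v ∈ U | {v, p.1.1, p.1.2} ∈ H}) fun p ↦ by
      rw [Fintype.card_coe]; exact hkl.trans (hP p p.2).2.2
  simp only [mem_filter] at hφU
  let e : P → Finset V := fun p ↦ {φ p, p.1.1, p.1.2}
  have hUS : Disjoint U (S.biUnion id) :=
    disjoint_of_subset_right (biUnion_subset_biUnion_of_subset_left id hS) hU
  have hd : Pairwise (Function.onFun Disjoint e) := by
    intro p q hpq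
    have hφpq := hφ.ne hpq
    have hpqd := hPd p.2 q.2 (Subtype.coe_injective.ne hpq)
    have hp := hP p p.2
    have hq := hP q q.2
    have hφp := disjoint_left.mp hUS (hφU p).1
    have hφq := disjoint_left.mp hUS (hφU q).1
    simp only [Function.onFun, e, disjoint_left, mem_insert, mem_singleton] at hpqd ⊢
    grind
  have hinj : Function.Injective e :=
    injective_of_pairwise_disjoint (fun p ↦ insert_ne_empty _ _) hd
  have hcard := hM.card_le_of_subset_union hH hS hU (IsMatching.image (fun p ↦ (hφU p).2) hd)
    fun f hf ↦ by
      obtain ⟨p, -, rfl⟩ := mem_image.mp hf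
      simp only [insert_subset_iff, singleton_subset_iff]
      exact ⟨mem_union_right _ (hφU p).1, mem_union_left _ (hP p p.2).1,
        mem_union_left _ (hP p p.2).2.1⟩
  rwa [card_image_of_injective _ hinj, card_univ, Fintype.card_coe] at hcard

lemma IsMaximumMatching.codegreeIn_eq_zero (hM : IsMaximumMatching H M) (hH : ∅ ∉ H)
    (hU : Disjoint U (M.biUnion id)) {x y : V} (hx : x ∈ U) (hy : y ∈ U) :
    codegreeIn H U x y = 0 := by
  rw [codegreeIn, card_eq_zero, filter_eq_empty_iff]
  intro v hv hvxy
  have hcard := hM.card_le_of_subset_union hH (empty_subset M) hU (T := {{v, x, y}})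
    ⟨by simpa using hvxy, by simp⟩ (by simp [insert_subset_iff, hv, hx, hy])
  simp at hcard

end Matching

section MaximumMatching

variable {V : Type*} [DecidableEq V] {H M : Finset (Finset V)} {U e f g : Finset V}

lemma IsMaximumMatching.card_linkIn_le_of_nonempty (hM : IsMaximumMatching H M) (hH : ∅ ∉ H)
    (hU : Disjoint U (M.biUnion id)) (he : e ∈ M) {a b : V} (ha : a ∈ e) (hb : b ∈ e)
    (hab : a ≠ b) (hlink : (linkIn H U a).Nonempty) : #(linkIn H U b) ≤ 4 * #U := by
  obtain ⟨p, hp⟩ := hlink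
  rw [mem_linkIn] at hp
  have hpq : linkIn H U b ⊆ {p.1, p.2} ×ˢ U ∪ U ×ˢ {p.1, p.2} := by
    intro q hq
    rw [mem_linkIn] at hq
    by_contra hqp
    have hUe : ∀ z ∈ U, z ∉ e := fun z hz hze ↦
      disjoint_left.mp hU hz (mem_biUnion.mpr ⟨e, he, hze⟩)
    have hdisj : Disjoint ({a, p.1, p.2} : Finset V) {b, q.1, q.2} := by
      simp only [disjoint_left, mem_union, mem_product, mem_insert, mem_singleton] at hqp ⊢
      grind
    have hne : ({a, p.1, p.2} : Finset V) ≠ {b, q.1, q.2} := fun h ↦ by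
      rw [h, disjoint_self_iff_empty] at hdisj
      exact insert_ne_empty _ _ hdisj
    have hcard := hM.card_le_of_subset_union hH (singleton_subset_iff.mpr he) hU
      (T := {{a, p.1, p.2}, {b, q.1, q.2}})
      ⟨by simp [insert_subset_iff, hp, hq], by
        rw [coe_pair]
        exact Set.pairwise_pair.mpr fun _ ↦ ⟨hdisj, hdisj.symm⟩⟩
      (by simp [insert_subset_iff, hp, hq, ha, hb])
    rw [card_pair hne, card_singleton] at hcard
    omega
  have hpair := card_le_two (a := p.1) (b := p.2)
  calc #(linkIn H U b) ≤ #{p.1, p.2} * #U + #U * #{p.1, p.2} := by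
        simpa only [card_product] using (card_le_card hpq).trans (card_union_le _ _)
    _ ≤ 2 * #U + #U * 2 := by gcongr
    _ = 4 * #U := by ring

lemma IsMaximumMatching.sum_card_linkIn_le (hM : IsMaximumMatching H M) (hH : ∅ ∉ H)
    (hU : Disjoint U (M.biUnion id)) (he : e ∈ M) :
    ∑ x ∈ e, #(linkIn H U x) ≤ #U * #U + #e * (4 * #U) := by
  by_cases hsmall : ∀ x ∈ e, #(linkIn H U x) ≤ 4 * #U
  · exact (sum_le_card_nsmul e _ _ hsmall).trans (Nat.le_add_left _ _)
  · push Not at hsmall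
    obtain ⟨a, ha, hlarge⟩ := hsmall
    rw [← add_sum_erase e _ ha]
    refine add_le_add (card_linkIn_le a) ((sum_le_card_nsmul _ _ (4 * #U) fun b hb ↦ ?_).trans ?_)
    · exact hM.card_linkIn_le_of_nonempty hH hU he ha (mem_of_mem_erase hb)
        (ne_of_mem_erase hb).symm (card_pos.mp (by omega))
    · exact Nat.mul_le_mul_right _ card_erase_le

/-- Pairs that lie in an edge with at least four vertices of `U`. Four suffices because no exchange
below uses more than four pairs at once. -/
abbrev IsHeavy (H : Finset (Finset V)) (U : Finset V) : V → V → Prop :=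
  fun x y ↦ 4 ≤ codegreeIn H U x y

instance : Std.Symm (IsHeavy H U) :=
  ⟨fun x y hxy ↦ by rwa [IsHeavy, codegreeIn_comm]⟩

lemma sum_sum_codegreeIn_le :
    ∑ x ∈ e, ∑ y ∈ f, codegreeIn H U x y ≤
      4 * (#e * #f) + #U * #(Rel.interedges (IsHeavy H U) e f) := by
  have hpoint : ∀ x y, codegreeIn H U x y ≤ 4 + #U * if IsHeavy H U x y then 1 else 0 := by
    intro x y
    have := codegreeIn_le_card (H := H) (U := U) x y
    split_ifs <;> omega
  refine (sum_le_sum fun x _ ↦ sum_le_sum fun y _ ↦ hpoint x y).trans_eq ?_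
  simp only [card_interedges_eq_sum, card_filter, sum_add_distrib, mul_sum, sum_const, smul_eq_mul]
  ring

lemma IsMaximumMatching.not_hasPairMatching_three (hM : IsMaximumMatching H M) (hH : ∅ ∉ H)
    (hU : Disjoint U (M.biUnion id)) (he : e ∈ M) (hf : f ∈ M) :
    ¬ HasPairMatching (IsHeavy H U) (e ∪ f) 3 := fun h ↦ by
  have hle := hM.card_le_of_hasPairMatching hH (S := {e, f}) (by simp [insert_subset_iff, he, hf])
    hU (k := 3) (l := 4) (by norm_num)
    (by simpa only [biUnion_insert, singleton_biUnion, id] using h)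
  have := card_le_two (a := e) (b := f)
  omega

lemma IsMaximumMatching.not_hasPairMatching_four (hM : IsMaximumMatching H M) (hH : ∅ ∉ H)
    (hU : Disjoint U (M.biUnion id)) (he : e ∈ M) (hf : f ∈ M) (hg : g ∈ M) :
    ¬ HasPairMatching (IsHeavy H U) (e ∪ f ∪ g) 4 := fun h ↦ by
  have hle := hM.card_le_of_hasPairMatching hH (S := {e, f, g})
    (by simp [insert_subset_iff, he, hf, hg]) hU (k := 4) le_rfl
    (by simpa only [biUnion_insert, singleton_biUnion, id, union_assoc] using h)
  have := card_le_three (a := e) (b := f) (c := g)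
  omega

lemma IsMaximumMatching.card_interedges_le_six (hM : IsMaximumMatching H M)
    (hH : (H : Set (Finset V)).Sized 3) (hU : Disjoint U (M.biUnion id)) (he : e ∈ M) (hf : f ∈ M)
    (hef : e ≠ f) : #(Rel.interedges (IsHeavy H U) e f) ≤ 6 :=
  (card_interedges_of_not_hasPairMatching (hH (hM.subset he)) (hH (hM.subset hf))
    (hM.pairwiseDisjoint he hf hef)
    (hM.not_hasPairMatching_three (empty_notMem_of_sized hH) hU he hf)).1

lemma IsMaximumMatching.card_interedges_le_four (hM : IsMaximumMatching H M)
    (hH : (H : Set (Finset V)).Sized 3) (hU : Disjoint U (M.biUnion id)) (he : e ∈ M) (hf : f ∈ M)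
    (hg : g ∈ M) (hef : e ≠ f) (heg : e ≠ g) (hfg : f ≠ g)
    (hef₆ : #(Rel.interedges (IsHeavy H U) e f) = 6)
    (heg₆ : #(Rel.interedges (IsHeavy H U) e g) = 6) :
    #(Rel.interedges (IsHeavy H U) f g) ≤ 4 :=
  card_interedges_le_four_of_eq_six_of_eq_six (hH (hM.subset he)) (hH (hM.subset hf))
    (hH (hM.subset hg)) (hM.pairwiseDisjoint he hf hef) (hM.pairwiseDisjoint he hg heg)
    (hM.pairwiseDisjoint hf hg hfg)
    (hM.not_hasPairMatching_three (empty_notMem_of_sized hH) hU he hf)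
    (hM.not_hasPairMatching_three (empty_notMem_of_sized hH) hU he hg)
    (hM.not_hasPairMatching_four (empty_notMem_of_sized hH) hU he hf hg) hef₆ heg₆

lemma IsMaximumMatching.sum_sum_card_interedges_le (hM : IsMaximumMatching H M)
    (hH : (H : Set (Finset V)).Sized 3) (hU : Disjoint U (M.biUnion id)) :
    ∑ e ∈ M, ∑ f ∈ M, #(Rel.interedges (IsHeavy H U) e f) ≤ 5 * #M ^ 2 + 9 * #M := by
  let w : Finset V → Finset V → ℕ := fun e f ↦
    if e = f then 0 else #(Rel.interedges (IsHeavy H U) e f)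
  have hsum : ∑ e ∈ M, ∑ f ∈ M, w e f ≤ 5 * #M ^ 2 := by
    refine sum_sum_le_five_mul_sq_of_cherry (fun e f ↦ ?_) (fun e he f hf ↦ ?_)
      fun e he f hf g hg hef₆ heg₆ ↦ ?_
    · simp only [w, eq_comm (a := e), Rel.card_interedges_comm e f]
    · simp only [w]
      split_ifs with hef
      · exact Nat.zero_le _
      · exact hM.card_interedges_le_six hH hU he hf hef
    · simp only [w] at hef₆ heg₆ ⊢
      split_ifs at hef₆ heg₆ with hef heg
      split_ifs with hfg
      · exact Nat.zero_le _
      · exact hM.card_interedges_le_four hH hU he hf hg hef heg hfg hef₆ heg₆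
  have hpoint : ∀ e ∈ M, ∀ f ∈ M,
      #(Rel.interedges (IsHeavy H U) e f) ≤ w e f + if e = f then 9 else 0 := by
    intro e he f hf
    have := Rel.card_interedges_le_mul (IsHeavy H U) e f
    rw [hH (hM.subset he), hH (hM.subset hf)] at this
    simp only [w]
    split_ifs <;> omega
  calc _ ≤ ∑ e ∈ M, ∑ f ∈ M, (w e f + if e = f then 9 else 0) :=
        sum_le_sum fun e he ↦ sum_le_sum (hpoint e he)
    _ = ∑ e ∈ M, ∑ f ∈ M, w e f + 9 * #M := by
        simp only [sum_add_distrib, sum_ite_eq, sum_ite_mem, inter_self, sum_const, smul_eq_mul]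
        ring
    _ ≤ 5 * #M ^ 2 + 9 * #M := by gcongr

end MaximumMatching

section AlmostPerfect

variable {V : Type*} [DecidableEq V] {H M : Finset (Finset V)} {U W : Finset V}

lemma IsMaximumMatching.sum_biUnion_sum_biUnion_codegreeIn_le (hM : IsMaximumMatching H M)
    (hH : (H : Set (Finset V)).Sized 3) (hU : Disjoint U (M.biUnion id)) :
    ∑ x ∈ M.biUnion id, ∑ y ∈ M.biUnion id, codegreeIn H U x y ≤
      36 * #M ^ 2 + #U * (5 * #M ^ 2 + 9 * #M) := by
  have hcard : ∀ e ∈ M, #e = 3 := fun e he ↦ hH (hM.subset he)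
  calc ∑ x ∈ M.biUnion id, ∑ y ∈ M.biUnion id, codegreeIn H U x y
      = ∑ e ∈ M, ∑ f ∈ M, ∑ x ∈ e, ∑ y ∈ f, codegreeIn H U x y := by
        simp only [sum_biUnion hM.pairwiseDisjoint, id]
        exact sum_congr rfl fun e _ ↦ sum_comm
    _ ≤ ∑ e ∈ M, ∑ f ∈ M, (36 + #U * #(Rel.interedges (IsHeavy H U) e f)) :=
        sum_le_sum fun e he ↦ sum_le_sum fun f hf ↦ by
          simpa only [hcard e he, hcard f hf] using sum_sum_codegreeIn_le (H := H) (e := e) (f := f)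
    _ = 36 * #M ^ 2 + #U * ∑ e ∈ M, ∑ f ∈ M, #(Rel.interedges (IsHeavy H U) e f) := by
        simp only [sum_add_distrib, mul_sum, sum_const, smul_eq_mul]
        ring
    _ ≤ _ := by gcongr; exact hM.sum_sum_card_interedges_le hH hU

lemma IsMaximumMatching.sum_biUnion_sum_codegreeIn_le (hM : IsMaximumMatching H M)
    (hH : (H : Set (Finset V)).Sized 3) (hU : Disjoint U (M.biUnion id)) :
    ∑ x ∈ M.biUnion id, ∑ y ∈ U, codegreeIn H U x y ≤ #M * (#U ^ 2 + 12 * #U) := by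
  simp only [sum_codegreeIn, sum_biUnion hM.pairwiseDisjoint, id]
  refine sum_le_card_nsmul _ _ _ fun e he ↦
    (hM.sum_card_linkIn_le (empty_notMem_of_sized hH) hU he).trans_eq ?_
  rw [hH (hM.subset he)]
  ring

lemma IsMaximumMatching.sum_card_linkIn_biUnion_union_le (hM : IsMaximumMatching H M)
    (hH : (H : Set (Finset V)).Sized 3) (hU : Disjoint U (M.biUnion id)) :
    ∑ v ∈ U, #(linkIn H (M.biUnion id ∪ U) v) ≤
      36 * #M ^ 2 + #U * (5 * #M ^ 2 + 9 * #M) + 2 * (#M * (#U ^ 2 + 12 * #U)) := by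
  have hUU : ∑ x ∈ U, ∑ y ∈ U, codegreeIn H U x y = 0 :=
    sum_eq_zero fun x hx ↦ sum_eq_zero fun y hy ↦
      hM.codegreeIn_eq_zero (empty_notMem_of_sized hH) hU hx hy
  have hUX : ∑ x ∈ U, ∑ y ∈ M.biUnion id, codegreeIn H U x y =
      ∑ x ∈ M.biUnion id, ∑ y ∈ U, codegreeIn H U x y := by
    rw [sum_comm]
    simp only [codegreeIn_comm]
  have hXX := hM.sum_biUnion_sum_biUnion_codegreeIn_le hH hU
  have hXU := hM.sum_biUnion_sum_codegreeIn_le hH hU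
  rw [sum_card_linkIn]
  simp only [sum_union hU.symm, sum_add_distrib, hUU, hUX]
  omega

/-- The left-hand side exceeds `5um² + βu(3m + u)²`, and half of `βu(3m + u)²` absorbs each of
`36m²` and `33um`. -/
lemma link_bound_lt_of_eight_lt {β u m : ℝ} (hm : 0 ≤ m) (hu : 0 ≤ u) (hβu : 8 < β * u)
    (hβn : 22 < β * (3 * m + u)) :
    36 * m ^ 2 + u * (5 * m ^ 2 + 9 * m) + 2 * (m * (u ^ 2 + 12 * u)) <
      u * ((5 / 9 + β) * (3 * m + u) ^ 2) := by
  have hu₀ : 0 < u := hu.lt_of_ne (by rintro rfl; norm_num at hβu)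
  have hquad : 36 * m ^ 2 ≤ β * u / 2 * (3 * m + u) ^ 2 := by
    nlinarith [mul_nonneg hm hu, mul_le_mul_of_nonneg_right hβu.le (sq_nonneg (3 * m + u))]
  have hmix : 33 * (u * m) < β * (3 * m + u) / 2 * (u * (3 * m + u)) := by
    have hpos : 0 < u * (3 * m + u) := by positivity
    nlinarith [mul_lt_mul_of_pos_right hβn hpos, sq_nonneg u]
  nlinarith [mul_nonneg hm (sq_nonneg u), pow_pos hu₀ 3]

lemma linkIn_filter_subset {v : V} (hv : v ∈ W) :
    linkIn {e ∈ H | e ⊆ W} W v = linkIn H W v := by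
  ext p
  simp only [mem_linkIn, mem_filter, insert_subset_iff, singleton_subset_iff]
  tauto

lemma exists_isMatching_mul_card_sdiff_le {β : ℝ} (hH : (H : Set (Finset V)).Sized 3)
    (hW : 22 < β * #W) (hdeg : ∀ v ∈ W, (5 / 9 + β) * (#W : ℝ) ^ 2 ≤ #(linkIn H W v)) :
    ∃ M, IsMatching H M ∧ M.biUnion id ⊆ W ∧ β * #(W \ M.biUnion id) ≤ 8 := by
  obtain ⟨M, hM⟩ := exists_isMaximumMatching {e ∈ H | e ⊆ W}
  have hHW : (({e ∈ H | e ⊆ W} : Finset (Finset V)) : Set (Finset V)).Sized 3 :=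
    fun e he ↦ hH (mem_filter.mp he).1
  have hMW : M.biUnion id ⊆ W := biUnion_subset.mpr fun e he ↦ (mem_filter.mp (hM.subset he)).2
  refine ⟨M, ⟨hM.subset.trans (filter_subset _ _), hM.pairwiseDisjoint⟩, hMW, ?_⟩
  by_contra! hlarge
  set U := W \ M.biUnion id
  have hcard : (#W : ℝ) = 3 * #M + #U := by
    have : #U + #(M.biUnion id) = #W := card_sdiff_add_card_eq_card hMW
    rw [hM.card_biUnion hHW] at this
    exact_mod_cast (by omega : #W = 3 * #M + #U)
  have hupper := hM.sum_card_linkIn_biUnion_union_le hHW (U := U) sdiff_disjoint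
  rw [union_sdiff_of_subset hMW] at hupper
  have hlower : (#U : ℝ) * ((5 / 9 + β) * (#W : ℝ) ^ 2) ≤
      ∑ v ∈ U, (#(linkIn {e ∈ H | e ⊆ W} W v) : ℝ) := by
    rw [← nsmul_eq_mul]
    refine card_nsmul_le_sum _ _ _ fun v hv ↦ ?_
    rw [linkIn_filter_subset (sdiff_subset hv)]
    exact hdeg v (sdiff_subset hv)
  rw [hcard] at hlower hW
  have hnum := link_bound_lt_of_eight_lt (#M).cast_nonneg (#U).cast_nonneg hlarge hW
  exact absurd (hlower.trans (by exact_mod_cast hupper)) hnum.not_ge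

end AlmostPerfect

section Counting

variable {α β : Type*} [Fintype α]

lemma mul_le_mul_card_filter_prod [Fintype β] {P : α × β → Prop} [DecidablePred P] {s : Finset α}
    {a b c d : ℕ} (hs : a ≤ c * #s) (ht : ∀ x ∈ s, b ≤ d * #{y | P (x, y)}) :
    a * b ≤ c * d * #{p | P p} := by
  calc a * b ≤ c * (#s * b) := by rw [← mul_assoc]; gcongr
    _ ≤ c * ∑ x ∈ s, d * #{y | P (x, y)} := by gcongr; exact card_nsmul_le_sum _ _ _ ht
    _ ≤ c * ∑ x, d * #{y | P (x, y)} := by gcongr; exact subset_univ s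
    _ = c * d * #{p | P p} := by
      rw [← mul_sum, ← mul_assoc]
      simp only [card_filter, Fintype.sum_prod_type]

lemma exists_card_le_mul_card_filter [Nonempty α] {r : α → β → Prop} [∀ a b, Decidable (r a b)]
    {t : Finset β} {c : ℕ} (h : ∀ b ∈ t, Fintype.card α ≤ c * #{a | r a b}) :
    ∃ a, #t ≤ c * #{b ∈ t | r a b} := by
  have hsum : ∑ _a : α, #t ≤ ∑ a, c * #{b ∈ t | r a b} :=
    calc ∑ _a : α, #t = #t * Fintype.card α := by simp [mul_comm]
      _ ≤ ∑ b ∈ t, c * #{a | r a b} := card_nsmul_le_sum _ _ _ h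
      _ = ∑ a, c * #{b ∈ t | r a b} := by
        simp only [← mul_sum]
        exact congrArg _ (sum_card_bipartiteAbove_eq_sum_card_bipartiteBelow r).symm
  obtain ⟨a, -, ha⟩ := exists_le_of_sum_le univ_nonempty hsum
  exact ⟨a, ha⟩

end Counting

section PerfectMatching

variable {V : Type*} [DecidableEq V] {H : Finset (Finset V)} {A B S T : Finset V}

/-- Some matching of `H` covers exactly the vertices in `S`. -/
def HasPerfectMatchingOn (H : Finset (Finset V)) (S : Finset V) : Prop :=
  ∃ M, IsMatching H M ∧ M.biUnion id = S

lemma hasPerfectMatchingOn_empty (H : Finset (Finset V)) : HasPerfectMatchingOn H ∅ :=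
  ⟨∅, ⟨empty_subset H, by simp⟩, biUnion_empty⟩

lemma hasPerfectMatchingOn_of_mem {e : Finset V} (he : e ∈ H) : HasPerfectMatchingOn H e :=
  ⟨{e}, ⟨singleton_subset_iff.mpr he, by simp⟩, singleton_biUnion⟩

lemma HasPerfectMatchingOn.union (hS : HasPerfectMatchingOn H S) (hT : HasPerfectMatchingOn H T)
    (hST : Disjoint S T) : HasPerfectMatchingOn H (S ∪ T) := by
  obtain ⟨M, hM, rfl⟩ := hS
  obtain ⟨N, hN, rfl⟩ := hT
  refine ⟨M ∪ N, hM.union hN fun e he f hf ↦ ?_, union_biUnion⟩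
  exact hST.mono (subset_biUnion_of_mem id he) (subset_biUnion_of_mem id hf)

lemma HasPerfectMatchingOn.dvd_card {k : ℕ} (hS : HasPerfectMatchingOn H S)
    (hH : (H : Set (Finset V)).Sized k) : k ∣ #S := by
  obtain ⟨M, hM, rfl⟩ := hS
  exact ⟨#M, hM.card_biUnion hH⟩

/-- `B` absorbs `T` in `H`: both `B` and `B ∪ T` can be perfectly matched. -/
structure Absorbs (H : Finset (Finset V)) (B T : Finset V) : Prop where
  left : HasPerfectMatchingOn H B
  union : HasPerfectMatchingOn H (B ∪ T)

lemma Absorbs.union_left (hBT : Absorbs H B T) (hA : HasPerfectMatchingOn H A)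
    (hAB : Disjoint A B) (hAT : Disjoint A T) : Absorbs H (A ∪ B) T where
  left := hA.union hBT.left hAB
  union := by
    rw [union_assoc]
    exact hA.union hBT.union (disjoint_union_right.mpr ⟨hAB, hAT⟩)

/-- `A` can absorb every set of at most `3k` vertices outside `A` that passes the divisibility
test for a perfect matching of a 3-graph. -/
def IsAbsorbing (H : Finset (Finset V)) (A : Finset V) (k : ℕ) : Prop :=
  ∀ U, Disjoint A U → 3 ∣ #U → #U ≤ 3 * k → HasPerfectMatchingOn H (A ∪ U)

lemma isAbsorbing_empty_zero (H : Finset (Finset V)) : IsAbsorbing H ∅ 0 := by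
  intro U _ _ hU
  rw [card_eq_zero.mp (Nat.le_zero.mp hU), union_empty]
  exact hasPerfectMatchingOn_empty H

lemma IsAbsorbing.hasPerfectMatchingOn {k : ℕ} (hA : IsAbsorbing H A k) :
    HasPerfectMatchingOn H A := by
  simpa using hA ∅ (disjoint_empty_right A) (by simp) (by simp)

lemma IsAbsorbing.union {k l : ℕ} (hA : IsAbsorbing H A k) (hB : IsAbsorbing H B l)
    (hAB : Disjoint A B) : IsAbsorbing H (A ∪ B) (k + l) := by
  intro U hU hdvd hcard
  obtain ⟨hAU, hBU⟩ := disjoint_union_left.mp hU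
  obtain ⟨T, hTU, hT⟩ := exists_subset_card_eq (s := U) (n := min (#U) (3 * k)) (min_le_left _ _)
  have hsdiff : #(U \ T) = #U - #T := card_sdiff_of_subset hTU
  have hAT := hA T (disjoint_of_subset_right hTU hAU) (by omega) (by omega)
  have hBT := hB (U \ T) (disjoint_of_subset_right sdiff_subset hBU) (by omega) (by omega)
  rw [← union_sdiff_of_subset hTU, union_union_union_comm]
  refine hAT.union hBT (disjoint_union_left.mpr ⟨?_, ?_⟩) <;> rw [disjoint_union_right]
  · exact ⟨hAB, disjoint_of_subset_right sdiff_subset hAU⟩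
  · exact ⟨(disjoint_of_subset_right hTU hBU).symm, disjoint_sdiff⟩

lemma IsAbsorbing.hasPerfectMatchingOn_univ [Fintype V] {M : Finset (Finset V)} {k : ℕ}
    (hA : IsAbsorbing H A k) (hH : (H : Set (Finset V)).Sized 3) (hV : 3 ∣ Fintype.card V)
    (hM : IsMatching H M) (hMA : M.biUnion id ⊆ Aᶜ) (hk : #(Aᶜ \ M.biUnion id) ≤ 3 * k) :
    HasPerfectMatchingOn H univ := by
  have hMU := card_sdiff_add_card_eq_card hMA
  have hAU := card_compl_add_card A
  have hdvdA := hA.hasPerfectMatchingOn.dvd_card hH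
  have hcardM := hM.card_biUnion hH
  have hPM := hA _ (disjoint_of_subset_right sdiff_subset disjoint_compl_right) (by omega) hk
  have huniv : A ∪ Aᶜ \ M.biUnion id ∪ M.biUnion id = univ := by
    rw [union_assoc, sdiff_union_of_subset hMA, union_compl]
  rw [← huniv]
  refine hPM.union ⟨M, hM, rfl⟩ (disjoint_union_left.mpr ⟨?_, sdiff_disjoint⟩)
  exact disjoint_of_subset_right hMA disjoint_compl_right

end PerfectMatching

section Link

variable {V : Type*} [DecidableEq V] {H : Finset (Finset V)}

lemma card_linkIn_le_card_linkIn_sdiff_add (W Z : Finset V) (v : V) :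
    #(linkIn H W v) ≤ #(linkIn H (W \ Z) v) + 2 * (#Z * #W) := by
  have hsub : linkIn H W v ⊆ linkIn H (W \ Z) v ∪ (Z ×ˢ W ∪ W ×ˢ Z) := by
    intro p
    simp only [mem_union, mem_product, mem_linkIn, mem_sdiff]
    tauto
  calc #(linkIn H W v) ≤ #(linkIn H (W \ Z) v) + (#(Z ×ˢ W) + #(W ×ˢ Z)) :=
        (card_le_card hsub).trans <| (card_union_le _ _).trans <| by gcongr; exact card_union_le _ _
    _ = _ := by rw [card_product, card_product]; ring

lemma mul_sq_card_sdiff_le_card_linkIn {W Z : Finset V} {a b : ℝ} {v : V} (ha : 0 ≤ a)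
    (hZ : 2 * #Z ≤ b * #W) (hv : (a + b) * (#W : ℝ) ^ 2 ≤ #(linkIn H W v)) :
    a * (#(W \ Z) : ℝ) ^ 2 ≤ #(linkIn H (W \ Z) v) := by
  have hcard : (#(W \ Z) : ℝ) ≤ #W := by exact_mod_cast card_le_card sdiff_subset
  have hdel : (#(linkIn H W v) : ℝ) ≤ #(linkIn H (W \ Z) v) + 2 * (#Z * #W) := by
    exact_mod_cast card_linkIn_le_card_linkIn_sdiff_add W Z v
  calc a * (#(W \ Z) : ℝ) ^ 2 ≤ a * (#W : ℝ) ^ 2 := by gcongr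
    _ = (a + b) * (#W : ℝ) ^ 2 - b * #W * #W := by ring
    _ ≤ #(linkIn H W v) - 2 * #Z * #W := by gcongr
    _ ≤ #(linkIn H (W \ Z) v) := by linarith

lemma sq_card_le_card_linkIn_inter_linkIn {W Z : Finset V} {x y : V}
    (hx : 5 * #W ^ 2 ≤ 9 * #(linkIn H W x)) (hy : 5 * #W ^ 2 ≤ 9 * #(linkIn H W y))
    (hZ : 72 * #Z ≤ #W) : #W ^ 2 ≤ 18 * #(linkIn H (W \ Z) x ∩ linkIn H (W \ Z) y) := by
  have hunion : #(linkIn H (W \ Z) x ∪ linkIn H (W \ Z) y) ≤ #W ^ 2 := by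
    rw [sq, ← card_product]
    exact card_le_card <| union_subset
      ((filter_subset _ _).trans (product_subset_product sdiff_subset sdiff_subset))
      ((filter_subset _ _).trans (product_subset_product sdiff_subset sdiff_subset))
  have hinter := card_inter_add_card_union (linkIn H (W \ Z) x) (linkIn H (W \ Z) y)
  have hdelx := card_linkIn_le_card_linkIn_sdiff_add (H := H) W Z x
  have hdely := card_linkIn_le_card_linkIn_sdiff_add (H := H) W Z y
  nlinarith [Nat.mul_le_mul_right (#W) hZ]

lemma two_mul_card_filter_mem_le_card_linkIn [Fintype V] (hH : (H : Set (Finset V)).Sized 3)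
    (v : V) : 2 * #{e ∈ H | v ∈ e} ≤ #(linkIn H univ v) := by
  have hmaps : ∀ p ∈ linkIn H univ v, ({v, p.1, p.2} : Finset V) ∈ ({e ∈ H | v ∈ e} : Finset _) :=
    fun p hp ↦ mem_filter.mpr ⟨(mem_linkIn.mp hp).2.2, mem_insert_self _ _⟩
  rw [card_eq_sum_card_fiberwise hmaps, mul_comm, ← smul_eq_mul]
  refine card_nsmul_le_sum _ _ _ fun e he ↦ ?_
  obtain ⟨heH, hve⟩ := mem_filter.mp he
  obtain ⟨x, y, hxy, hexy⟩ := card_eq_two.mp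
    (show #(e.erase v) = 2 by rw [card_erase_of_mem hve, hH heH])
  have hev : {v, x, y} = e := by rw [← hexy, insert_erase hve]
  rw [← card_pair (a := (x, y)) (b := (y, x)) fun h ↦ hxy (congrArg Prod.fst h)]
  refine card_le_card fun p hp ↦ ?_
  rw [mem_insert, mem_singleton] at hp
  rcases hp with rfl | rfl
  · simp [mem_linkIn, hev, heH]
  · simp [mem_linkIn, pair_comm y x, hev, heH]

lemma mul_sq_le_two_mul_of_mul_choose_two_le {β d : ℝ} {t : ℕ} (hβ : 0 < β)
    (ht : 10 / 3 + 6 * β ≤ β * t) (hd : (5 / 9 + β) * ((t - 1).choose 2 : ℝ) ≤ d) :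
    (5 / 9 + β / 2) * (t : ℝ) ^ 2 ≤ 2 * d := by
  have ht₀ : 1 ≤ t := Nat.one_le_iff_ne_zero.mpr fun h ↦ by subst h; norm_num at ht; linarith
  rw [Nat.cast_choose_two, Nat.cast_sub ht₀, Nat.cast_one] at hd
  nlinarith

end Link

section Absorber

variable {V : Type*} [DecidableEq V] {H : Finset (Finset V)} {x y z : V} {p q r : V × V}

lemma ne_of_card_eq_three (h : #{x, y, z} = 3) : y ≠ z := by
  rintro rfl
  rw [pair_eq_singleton] at h
  exact absurd card_le_two (h.trans_gt (by norm_num)).not_ge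

/-- The vertex set of the absorbers used here, which consist of three pairs. -/
def absorberVertices (a : (V × V) × (V × V) × (V × V)) : Finset V :=
  {a.1.1, a.2.1.1, a.2.1.2} ∪ {a.1.2, a.2.2.1, a.2.2.2}

lemma card_absorberVertices_le (a : (V × V) × (V × V) × (V × V)) : #(absorberVertices a) ≤ 6 :=
  (card_union_le _ _).trans (Nat.add_le_add card_le_three card_le_three)

/-- The edges `p₁q`, `p₂r` match the absorber alone, and `xp`, `yq`, `zr` match it together with
`x, y, z`. -/
lemma absorbs_absorberVertices (hH : (H : Set (Finset V)).Sized 3) (hxy : x ≠ y) (hxz : x ≠ z)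
    (hyz : y ≠ z) (hd : Disjoint (absorberVertices (p, q, r)) {x, y, z})
    (hqp : Disjoint ({q.1, q.2} : Finset V) {p.1, p.2})
    (hrp : Disjoint ({r.1, r.2} : Finset V) {p.1, p.2})
    (hrq : Disjoint ({r.1, r.2} : Finset V) {q.1, q.2})
    (hxp : {x, p.1, p.2} ∈ H) (hyq : {y, q.1, q.2} ∈ H) (hpq : {p.1, q.1, q.2} ∈ H)
    (hzr : {z, r.1, r.2} ∈ H) (hpr : {p.2, r.1, r.2} ∈ H) :
    Absorbs H (absorberVertices (p, q, r)) {x, y, z} := by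
  have hp : p.1 ≠ p.2 := ne_of_card_eq_three (hH hxp)
  simp only [absorberVertices, disjoint_insert_right, disjoint_singleton_right, mem_insert,
    mem_singleton, not_or, mem_union] at hd hqp hrp hrq
  constructor
  · refine (hasPerfectMatchingOn_of_mem hpq).union (hasPerfectMatchingOn_of_mem hpr) ?_
    simp only [disjoint_left, mem_insert, mem_singleton]
    grind
  · have hPM := ((hasPerfectMatchingOn_of_mem hxp).union (hasPerfectMatchingOn_of_mem hyq) (by
      simp only [disjoint_left, mem_insert, mem_singleton]
      grind)).union (hasPerfectMatchingOn_of_mem hzr) (by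
      simp only [disjoint_left, mem_union, mem_insert, mem_singleton]
      grind)
    convert hPM using 1
    ext v
    simp only [absorberVertices, mem_union, mem_insert, mem_singleton]
    tauto

variable [Fintype V]

lemma pow_card_le_mul_card_absorbers (hH : (H : Set (Finset V)).Sized 3)
    (hdeg : ∀ v, 5 * Fintype.card V ^ 2 ≤ 9 * #(linkIn H univ v)) {Z T : Finset V} (hT : #T = 3)
    (hZ : 72 * (#Z + 7) ≤ Fintype.card V) [DecidablePred fun a ↦
      Disjoint (absorberVertices a) Z ∧ Absorbs H (absorberVertices a) T] :
    Fintype.card V ^ 2 * (Fintype.card V ^ 2 * Fintype.card V ^ 2) ≤ 18 * (18 * 18) *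
      #{a | Disjoint (absorberVertices a) Z ∧ Absorbs H (absorberVertices a) T} := by
  obtain ⟨x, y, z, hxy, hxz, hyz, rfl⟩ := card_eq_three.mp hT
  have hY : #(Z ∪ {x, y, z}) ≤ #Z + 3 := (card_union_le _ _).trans (by gcongr; exact hT.le)
  set Y := Z ∪ {x, y, z} with hYdef
  have hpair : ∀ (X : Finset V) (p : V × V), #(X ∪ {p.1, p.2}) ≤ #X + 2 := fun X p ↦
    (card_union_le _ _).trans (by gcongr; exact card_le_two)
  have hcommon : ∀ (X : Finset V) (u v : V), #X ≤ #Z + 7 →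
      Fintype.card V ^ 2 ≤ 18 * #(linkIn H (univ \ X) u ∩ linkIn H (univ \ X) v) :=
    fun X u v hX ↦ sq_card_le_card_linkIn_inter_linkIn (hdeg u) (hdeg v) (by
      rw [card_univ]; omega)
  refine mul_le_mul_card_filter_prod (hcommon Y x x (by omega)) fun p hp ↦
    mul_le_mul_card_filter_prod (hcommon (Y ∪ {p.1, p.2}) y p.1 ?_) fun q hq ↦
    (hcommon (Y ∪ {p.1, p.2} ∪ {q.1, q.2}) z p.2 ?_).trans ?_
  · have := hpair Y p
    omega
  · have := hpair Y p
    have := hpair (Y ∪ {p.1, p.2}) q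
    omega
  refine Nat.mul_le_mul_left _ (card_le_card fun r hr ↦ ?_)
  simp only [mem_inter, mem_linkIn, mem_sdiff, mem_univ, true_and, mem_union, not_or, hYdef,
    mem_insert, mem_singleton] at hp hq hr
  refine mem_filter.mpr ⟨mem_univ _, ?_, absorbs_absorberVertices hH hxy hxz hyz ?_ ?_ ?_ ?_
    hp.1.2.2 hq.1.2.2 hq.2.2.2 hr.1.2.2 hr.2.2.2⟩ <;>
  simp [absorberVertices, -disjoint_insert_right, hp, hq, hr]

end Absorber

section AbsorbingSet

variable {V : Type*} [DecidableEq V] [Fintype V] {H 𝒯 : Finset (Finset V)} {Z : Finset V}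

open Classical in
lemma exists_card_le_mul_card_filter_absorbs (hH : (H : Set (Finset V)).Sized 3)
    (hdeg : ∀ v, 5 * Fintype.card V ^ 2 ≤ 9 * #(linkIn H univ v))
    (hZ : 72 * (#Z + 7) ≤ Fintype.card V) (h𝒯 : (𝒯 : Set (Finset V)).Sized 3)
    (hne : 𝒯.Nonempty) :
    ∃ B, Disjoint B Z ∧ #B ≤ 6 ∧ HasPerfectMatchingOn H B ∧
      #𝒯 ≤ 18 ^ 3 * #{T ∈ 𝒯 | Absorbs H B T} := by
  have : Nonempty V := Fintype.card_pos_iff.mp (by omega)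
  obtain ⟨a, ha⟩ := exists_card_le_mul_card_filter (t := 𝒯) (c := 18 * (18 * 18))
    (r := fun a T ↦ Disjoint (absorberVertices a) Z ∧ Absorbs H (absorberVertices a) T)
    fun T hT ↦ by
      simpa only [Fintype.card_prod, ← sq] using pow_card_le_mul_card_absorbers hH hdeg (h𝒯 hT) hZ
  have hpos := hne.card_pos.trans_le ha
  obtain ⟨T, hT⟩ := card_pos.mp (pos_of_mul_pos_right hpos (by norm_num))
  obtain ⟨-, haZ, haT⟩ := mem_filter.mp hT
  refine ⟨absorberVertices a, haZ, card_absorberVertices_le a, haT.left, ?_⟩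
  rw [show 18 ^ 3 = 18 * (18 * 18) by norm_num]
  simpa only [haZ, true_and] using ha

/-- Chosen greedily, each absorber takes care of a `1 / 18 ^ 3 = 1 / 5832` share of what is left of
`𝒯`. -/
lemma exists_forall_absorbs (hH : (H : Set (Finset V)).Sized 3)
    (hdeg : ∀ v, 5 * Fintype.card V ^ 2 ≤ 9 * #(linkIn H univ v)) (l : ℕ) :
    ∀ Z : Finset V, 72 * (#Z + 6 * l + 1) ≤ Fintype.card V →
    ∀ 𝒯 : Finset (Finset V), (𝒯 : Set (Finset V)).Sized 3 →
    (#𝒯 : ℝ) * (5831 / 5832) ^ l < 1 →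
    ∃ B, Disjoint B Z ∧ #B ≤ 6 * l ∧ HasPerfectMatchingOn H B ∧
      ∀ T ∈ 𝒯, Disjoint B T → Absorbs H B T := by
  classical
  have hempty (Z : Finset V) (l : ℕ) : ∃ B, Disjoint B Z ∧ #B ≤ 6 * l ∧
      HasPerfectMatchingOn H B ∧ ∀ T ∈ (∅ : Finset (Finset V)), Disjoint B T → Absorbs H B T :=
    ⟨∅, disjoint_empty_left Z, by simp, hasPerfectMatchingOn_empty H, by simp⟩
  induction l with
  | zero =>
    intro Z _ 𝒯 _ hlt
    obtain rfl : 𝒯 = ∅ := by simpa using hlt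
    exact hempty Z 0
  | succ l ih =>
    intro Z hZ 𝒯 h𝒯 hlt
    obtain rfl | hne := 𝒯.eq_empty_or_nonempty
    · exact hempty Z (l + 1)
    obtain ⟨B, hBZ, hBcard, hB, h𝒯B⟩ :=
      exists_card_le_mul_card_filter_absorbs hH hdeg (Z := Z) (by omega) h𝒯 hne
    have hrest : (#{T ∈ 𝒯 | ¬Absorbs H B T} : ℝ) * (5831 / 5832) ^ l < 1 := by
      refine lt_of_le_of_lt ?_ hlt
      rw [pow_succ', ← mul_assoc]
      gcongr
      have hsplit := card_filter_add_card_filter_not (s := 𝒯) fun T ↦ Absorbs H B T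
      have : 5832 * #{T ∈ 𝒯 | ¬Absorbs H B T} ≤ 5831 * #𝒯 := by omega
      have : (5832 * #{T ∈ 𝒯 | ¬Absorbs H B T} : ℝ) ≤ 5831 * #𝒯 := by exact_mod_cast this
      linarith
    obtain ⟨C, hCZB, hCcard, hC, h𝒯C⟩ := ih (Z ∪ B) (by have := card_union_le Z B; omega) _
      (fun T hT ↦ h𝒯 (filter_subset _ _ hT)) hrest
    obtain ⟨hCZ, hCB⟩ := disjoint_union_right.mp hCZB
    refine ⟨C ∪ B, disjoint_union_left.mpr ⟨hCZ, hBZ⟩, (card_union_le C B).trans (by omega),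
      hC.union hB hCB, fun T hT hd ↦ ?_⟩
    obtain ⟨hCT, hBT⟩ := disjoint_union_left.mp hd
    by_cases hTB : Absorbs H B T
    · exact hTB.union_left hC hCB hCT
    · rw [union_comm]
      exact (h𝒯C T (mem_filter.mpr ⟨hT, hTB⟩) hCT).union_left hB hCB.symm hBT

lemma exists_isAbsorbing_one (hH : (H : Set (Finset V)).Sized 3)
    (hdeg : ∀ v, 5 * Fintype.card V ^ 2 ≤ 9 * #(linkIn H univ v)) {l : ℕ}
    (hl : (Fintype.card V : ℝ) ^ 3 * (5831 / 5832) ^ l < 1)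
    (hZ : 72 * (#Z + 6 * l + 1) ≤ Fintype.card V) :
    ∃ B, Disjoint B Z ∧ #B ≤ 6 * l ∧ IsAbsorbing H B 1 := by
  have hcard : (#(powersetCard 3 (univ : Finset V)) : ℝ) ≤ (Fintype.card V : ℝ) ^ 3 := by
    rw [card_powersetCard, card_univ]
    exact_mod_cast Nat.choose_le_pow _ _
  obtain ⟨B, hBZ, hBcard, hB, hBT⟩ := exists_forall_absorbs hH hdeg l Z hZ (powersetCard 3 univ)
    (Set.sized_powersetCard _ _) (lt_of_le_of_lt (by gcongr) hl)
  refine ⟨B, hBZ, hBcard, fun U hBU hdvd hU ↦ ?_⟩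
  obtain hU₀ | hU₃ : #U = 0 ∨ #U = 3 := by omega
  · rwa [card_eq_zero.mp hU₀, union_empty]
  · exact (hBT U (mem_powersetCard_univ.mpr hU₃) hBU).union

lemma exists_isAbsorbing (hH : (H : Set (Finset V)).Sized 3)
    (hdeg : ∀ v, 5 * Fintype.card V ^ 2 ≤ 9 * #(linkIn H univ v)) {l : ℕ}
    (hl : (Fintype.card V : ℝ) ^ 3 * (5831 / 5832) ^ l < 1) (k : ℕ)
    (hk : 72 * (6 * l * k + 1) ≤ Fintype.card V) :
    ∃ A, IsAbsorbing H A k ∧ #A ≤ 6 * l * k := by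
  induction k with
  | zero => exact ⟨∅, isAbsorbing_empty_zero H, by simp⟩
  | succ k ih =>
    rw [mul_add_one (6 * l)] at hk ⊢
    obtain ⟨A, hA, hAcard⟩ := ih (by omega)
    obtain ⟨B, hBA, hBcard, hB⟩ := exists_isAbsorbing_one hH hdeg hl (Z := A) (by omega)
    exact ⟨A ∪ B, hA.union hB hBA.symm, (card_union_le A B).trans (by omega)⟩

end AbsorbingSet

section Threshold

open Filter Topology

/-- For `l = ⌊c * n⌋` the factor `n ^ k` is at most `((l + 1) / c) ^ k`, a polynomial in `l`. -/
lemma eventually_exists_le_mul_and_pow_mul_pow_lt_one {c r : ℝ} (hc : 0 < c) (hr₀ : 0 < r)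
    (hr₁ : r < 1) (k : ℕ) : ∀ᶠ n : ℕ in atTop, ∃ l : ℕ, l ≤ c * n ∧ (n : ℝ) ^ k * r ^ l < 1 := by
  have hfloor : Tendsto (fun n : ℕ ↦ ⌊c * n⌋₊ + 1) atTop atTop :=
    (tendsto_add_atTop_nat 1).comp <| tendsto_nat_floor_atTop.comp <|
      tendsto_natCast_atTop_atTop.const_mul_atTop hc
  have hlim := (tendsto_pow_const_mul_const_pow_of_abs_lt_one k
    (abs_lt.mpr ⟨by linarith, hr₁⟩)).comp hfloor
  filter_upwards [hlim.eventually_lt_const (show 0 < c ^ k * r by positivity)] with n hn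
  refine ⟨⌊c * n⌋₊, Nat.floor_le (by positivity), ?_⟩
  have hle : c * n ≤ (⌊c * n⌋₊ + 1 : ℕ) := by exact_mod_cast (Nat.lt_floor_add_one (c * n)).le
  rw [Function.comp_apply, pow_succ, ← mul_assoc, mul_lt_mul_iff_left₀ hr₀] at hn
  refine lt_of_mul_lt_mul_left ?_ (pow_nonneg hc.le k)
  calc c ^ k * ((n : ℝ) ^ k * r ^ ⌊c * n⌋₊) = (c * n) ^ k * r ^ ⌊c * n⌋₊ := by ring
    _ ≤ ((⌊c * n⌋₊ + 1 : ℕ) : ℝ) ^ k * r ^ ⌊c * n⌋₊ := by gcongr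
    _ < c ^ k * 1 := by rwa [mul_one]

lemma hasPerfectMatchingOn_univ {V : Type*} [DecidableEq V] [Fintype V] {H : Finset (Finset V)}
    {β : ℝ} {k l : ℕ} (hH : (H : Set (Finset V)).Sized 3) (hβ : 0 < β)
    (hV : 3 ∣ Fintype.card V)
    (hdeg : ∀ v, (5 / 9 + β / 2) * (Fintype.card V : ℝ) ^ 2 ≤ #(linkIn H univ v))
    (hl : (Fintype.card V : ℝ) ^ 3 * (5831 / 5832) ^ l < 1) (hk : 32 ≤ β * k)
    (hlk : 6 * l * k ≤ min (β / 8) (1 / 144) * Fintype.card V)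
    (hlarge : 144 ≤ Fintype.card V) (hβlarge : 176 ≤ β * Fintype.card V) :
    HasPerfectMatchingOn H univ := by
  have hdeg' : ∀ v, 5 * Fintype.card V ^ 2 ≤ 9 * #(linkIn H univ v) := fun v ↦ by
    have : (0 : ℝ) ≤ β / 2 * (Fintype.card V : ℝ) ^ 2 := by positivity
    exact_mod_cast (by linarith [hdeg v] :
      (5 * Fintype.card V ^ 2 : ℝ) ≤ 9 * #(linkIn H univ v))
  rw [min_mul_of_nonneg _ _ (Nat.cast_nonneg _), le_min_iff] at hlk
  have hspace : 72 * (6 * l * k + 1) ≤ Fintype.card V := by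
    have : (144 : ℝ) ≤ Fintype.card V := by exact_mod_cast hlarge
    exact_mod_cast (by linarith : (72 * (6 * l * k + 1) : ℝ) ≤ Fintype.card V)
  obtain ⟨A, hA, hAcard⟩ := exists_isAbsorbing hH hdeg' hl k hspace
  have hAcard' : (#A : ℝ) ≤ 6 * l * k := by exact_mod_cast hAcard
  have hcompl : (#A : ℝ) + #Aᶜ = Fintype.card V := by exact_mod_cast card_add_card_compl A
  obtain ⟨M, hM, hMA, hleft⟩ := exists_isMatching_mul_card_sdiff_le (β := β / 4) (W := Aᶜ) hH
    (by nlinarith) fun v _ ↦ by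
      rw [compl_eq_univ_sdiff]
      refine mul_sq_card_sdiff_le_card_linkIn (b := β / 4) (by positivity) ?_ ?_ <;>
        rw [card_univ]
      · linarith
      · convert hdeg v using 2; ring
  refine hA.hasPerfectMatchingOn_univ hH hV hM hMA ?_
  have : (#(Aᶜ \ M.biUnion id) : ℝ) ≤ k := by
    refine le_of_mul_le_mul_left ?_ hβ
    linarith
  have : #(Aᶜ \ M.biUnion id) ≤ k := by exact_mod_cast this
  omega

end Threshold

end ThreeGraphMatching

open ThreeGraphMatching

/-- For every `β > 0` there is `t₁` such that every 3-graph on `t ≥ t₁` vertices with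
`3 ∣ t` and minimum vertex degree at least `(5/9+β)·C(t-1,2)` has a perfect matching. -/
theorem stmt_15 (β : ℝ) (hβ : 0 < β) :
    ∃ t₁ : ℕ, ∀ t : ℕ, t₁ ≤ t → 3 ∣ t →
    ∀ (V : Type) [DecidableEq V] [Fintype V], Fintype.card V = t →
    ∀ H : Finset (Finset V), (∀ e ∈ H, e.card = 3) →
    (∀ v : V, (5 / 9 + β) * ((t - 1).choose 2 : ℝ) ≤
      ((H.filter fun e => v ∈ e).card : ℝ)) →
    ∃ M : Finset (Finset V), M ⊆ H ∧ (M : Set (Finset V)).Pairwise Disjoint ∧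
      ∀ v : V, ∃ e ∈ M, v ∈ e := by
  obtain ⟨k, hk⟩ := exists_nat_gt (32 / β)
  rw [div_lt_iff₀' hβ] at hk
  have hk₀ : (0 : ℝ) < k := pos_of_mul_pos_right (by linarith) hβ.le
  have hc : 0 < min (β / 8) (1 / 144) / (6 * k) := by positivity
  obtain ⟨N, hN⟩ := exists_nat_ge ((176 + 6 * β) / β)
  rw [div_le_iff₀' hβ] at hN
  obtain ⟨t₁, ht₁⟩ := Filter.eventually_atTop.mp <|
    (eventually_exists_le_mul_and_pow_mul_pow_lt_one hc (r := 5831 / 5832) (by norm_num)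
      (by norm_num) 3).and (Filter.eventually_ge_atTop (max 144 N))
  refine ⟨t₁, fun t ht hdvd V _ _ hV H hH hdeg ↦ ?_⟩
  subst hV
  obtain ⟨⟨l, hl, hpow⟩, hlarge⟩ := ht₁ _ ht
  obtain ⟨hlarge, hNt⟩ := max_le_iff.mp hlarge
  have hβt : 176 + 6 * β ≤ β * Fintype.card V := hN.trans (by gcongr)
  have hlink v : (5 / 9 + β / 2) * (Fintype.card V : ℝ) ^ 2 ≤ #(linkIn H univ v) :=
    (mul_sq_le_two_mul_of_mul_choose_two_le hβ (by linarith) (hdeg v)).trans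
      (by exact_mod_cast two_mul_card_filter_mem_le_card_linkIn hH v)
  obtain ⟨M, hM, hcover⟩ := hasPerfectMatchingOn_univ hH hβ hdvd hlink hpow hk.le
    (by rw [div_mul_eq_mul_div, le_div_iff₀ (by positivity)] at hl; linarith) hlarge (by linarith)
  refine ⟨M, hM.subset, hM.pairwiseDisjoint, fun v ↦ ?_⟩
  exact mem_biUnion.mp (hcover ▸ mem_univ v)
end

section
/- For every λ > 0 and every integer t ≥ 13/λ there exists n_0 such that the following holds for all n ≥ n_0 with t | n. Let H be a 3-graph on n vertices with δ(H) ≥ (5/9 + λ)·C(n−1,2), and let V(H) = V_1 ∪ … ∪ V_t be a partition into t classes each of size n/t. Let D be the 3-graph on vertex set {1, …, t} whose edges are all triples {i_1, i_2, i_3} with d_H(V_{i_1}, V_{i_2}, V_{i_3}) ≥ λ/12. Then δ(D) ≥ (5/9 + (2/3)λ)·t²/2. -/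
open Finset
open scoped Classical

/-- The number of edges of the 3-graph `H` with one vertex in each of the (disjoint)
sets `A`, `B`, `C`. -/
noncomputable def eH {V : Type} [DecidableEq V] (H : Finset (Finset V))
    (A B C : Finset V) : ℕ :=
  ((A ×ˢ B ×ˢ C).filter fun x => ({x.1, x.2.1, x.2.2} : Finset V) ∈ H).card

/-- The density of the 3-graph `H` with respect to the triple `(A,B,C)`. -/
noncomputable def dH {V : Type} [DecidableEq V] (H : Finset (Finset V))
    (A B C : Finset V) : ℝ :=
  (eH H A B C : ℝ) / ((A.card : ℝ) * (B.card : ℝ) * (C.card : ℝ))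

/-! Fix a class `Pᵢ` of size `m`. Counting the edges at the vertices of `Pᵢ` as ordered pairs, the
minimum degree forces the densities `d(Pᵢ, Pⱼ, Pₗ)`, summed over all ordered pairs `(j, l)`, to be
at least `(5/9 + λ)(n - 1)(n - 2)/m² ≈ (5/9 + λ)t²`. At most `3t` of the pairs are degenerate, the
sparse pairs contribute at most `(λ/12)t²`, and every other pair is an ordering of an edge of `D` at
`i` with `i` removed and contributes at most `1`. Hence
`2 deg_D(i) ≥ (5/9 + 11λ/12)t² - (3 + 1/4)t`, where `t/4` absorbs the lower-order terms in `n`, and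
`13t/4 ≤ (λ/4)t²` because `t ≥ 13/λ`. -/

theorem card_filter_pair_mem {α : Type*} [DecidableEq α] [Fintype α] (S : Finset (Finset α))
    (hS : ∀ s ∈ S, #s = 2) :
    #{p : α × α | {p.1, p.2} ∈ S} = 2 * #S := by
  have card_fiber : ∀ s ∈ S, #{p ∈ {p : α × α | {p.1, p.2} ∈ S} | {p.1, p.2} = s} = 2 := by
    intro s hs
    obtain ⟨a, b, hab, rfl⟩ := card_eq_two.mp (hS s hs)
    have orderings :
        ({p ∈ {p | {p.1, p.2} ∈ S} | {p.1, p.2} = ({a, b} : Finset α)} : Finset (α × α)) =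
          {(a, b), (b, a)} := by
      ext ⟨c, d⟩
      simp only [mem_filter, mem_univ, true_and, mem_insert, mem_singleton, Prod.mk.injEq]
      rw [and_iff_right_of_imp (fun h => h ▸ hs), ← coe_inj]
      simpa using Set.pair_eq_pair_iff
    rw [orderings, card_pair (by simp [hab])]
  rw [card_eq_sum_card_fiberwise (t := S) (fun p hp => by simpa using hp),
    sum_congr rfl card_fiber, sum_const, smul_eq_mul, mul_comm]

theorem sum_le_card_filter_le_add_card_mul {β : Type*} (s : Finset β) {f : β → ℝ} {μ : ℝ}
    (hf : ∀ x ∈ s, f x ≤ 1) (hμ : 0 ≤ μ) :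
    ∑ x ∈ s, f x ≤ #{x ∈ s | μ ≤ f x} + #s * μ := by
  calc ∑ x ∈ s, f x ≤ ∑ x ∈ s, ((if μ ≤ f x then 1 else 0) + μ) := by
        refine sum_le_sum fun x hx => ?_
        split_ifs
        · linarith [hf x hx]
        · linarith
    _ = #{x ∈ s | μ ≤ f x} + #s * μ := by
        rw [sum_add_distrib, sum_boole, sum_const, nsmul_eq_mul]

section Link

variable {α : Type*} [DecidableEq α] (H : Finset (Finset α))

theorem card_memberSubfamily (v : α) : #(H.memberSubfamily v) = #{e ∈ H | v ∈ e} :=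
  card_image_of_injOn ((erase_injOn' v).mono (by simp))

variable {H}

theorem card_of_mem_memberSubfamily {r : ℕ} (hH : ∀ e ∈ H, #e = r + 1) {v : α} {s : Finset α}
    (hs : s ∈ H.memberSubfamily v) : #s = r := by
  obtain ⟨insert_mem, v_notMem⟩ := mem_memberSubfamily.mp hs
  have card_insert := hH _ insert_mem
  rw [card_insert_of_notMem v_notMem] at card_insert
  exact Nat.succ_injective card_insert

theorem pair_mem_memberSubfamily (hH : ∀ e ∈ H, #e = 3) {v a b : α} :
    {a, b} ∈ H.memberSubfamily v ↔ {v, a, b} ∈ H := by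
  rw [mem_memberSubfamily, and_iff_left_of_imp]
  intro edge v_mem
  have card_edge := hH _ edge
  rw [insert_eq_of_mem v_mem] at card_edge
  exact absurd (card_le_two (a := a) (b := b)) (by lia)

end Link

section Edges

variable {V : Type} [DecidableEq V] (H : Finset (Finset V)) (A B C : Finset V)

theorem eH_le_card_mul_card_mul_card : eH H A B C ≤ #A * #B * #C := by
  calc eH H A B C ≤ #(A ×ˢ B ×ˢ C) := card_filter_le _ _
    _ = #A * #B * #C := by rw [card_product, card_product, mul_assoc]

theorem dH_le_one : dH H A B C ≤ 1 :=
  div_le_one_of_le₀ (mod_cast eH_le_card_mul_card_mul_card H A B C) (by positivity)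

theorem dH_mul_card_mul_card_mul_card : dH H A B C * (#A * #B * #C) = eH H A B C :=
  div_mul_cancel_of_imp fun h => le_antisymm
    (h ▸ mod_cast eH_le_card_mul_card_mul_card H A B C) (Nat.cast_nonneg _)

theorem sum_eH_singleton : ∑ v ∈ A, eH H {v} B C = eH H A B C := by
  simp only [eH, card_filter, sum_product, sum_singleton]

variable {H}

theorem eH_singleton_univ_univ [Fintype V] (hH : ∀ e ∈ H, #e = 3) (v : V) :
    eH H {v} univ univ = 2 * #{e ∈ H | v ∈ e} := by
  rw [← card_memberSubfamily,
    ← card_filter_pair_mem _ fun s => card_of_mem_memberSubfamily (r := 2) hH]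
  simp only [pair_mem_memberSubfamily hH, eH, card_filter, sum_product, sum_singleton,
    ← univ_product_univ]

theorem card_mul_two_mul_le_eH_univ_univ [Fintype V] (hH : ∀ e ∈ H, #e = 3) {δ : ℝ}
    (hδ : ∀ v ∈ A, δ ≤ #{e ∈ H | v ∈ e}) :
    #A * (2 * δ) ≤ eH H A univ univ := by
  rw [← sum_eH_singleton, Nat.cast_sum, ← nsmul_eq_mul]
  refine card_nsmul_le_sum _ _ _ fun v hv => ?_
  rw [eH_singleton_univ_univ hH]
  push_cast
  linarith [hδ v hv]

end Edges

section Cover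

variable {V : Type} {ι : Type*} [DecidableEq V] [Fintype ι] (H : Finset (Finset V))
  (P : ι → Finset V)

theorem eH_univ_univ_le_sum [Fintype V] (hP : ∀ v, ∃ i, v ∈ P i) (A : Finset V) :
    eH H A univ univ ≤ ∑ p : ι × ι, eH H A (P p.1) (P p.2) := by
  refine le_trans (card_le_card fun x hx => ?_) card_biUnion_le
  obtain ⟨j, hj⟩ := hP x.2.1
  obtain ⟨l, hl⟩ := hP x.2.2
  simp only [mem_filter, mem_product, mem_univ, and_true] at hx
  simp only [mem_biUnion, mem_filter, mem_product, mem_univ, true_and]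
  exact ⟨(j, l), ⟨hx.1, hj, hl⟩, hx.2⟩

variable [DecidableEq ι]

/-- The link of the class `i` in the reduced 3-graph of the family `P`, the 3-graph on the index set
whose edges are the triples of distinct classes of density at least `μ`. Its cardinality is the
degree of `i` in the reduced 3-graph. -/
noncomputable def denseLink (μ : ℝ) (i : ι) : Finset (Finset ι) :=
  ((univ.erase i).powersetCard 2).filter fun s =>
    ∃ j ∈ s, ∃ l ∈ s, j ≠ l ∧ μ ≤ dH H (P i) (P j) (P l)

variable {H P}

theorem card_of_mem_denseLink {μ : ℝ} {i : ι} {s : Finset ι} (hs : s ∈ denseLink H P μ i) :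
    #s = 2 :=
  (mem_powersetCard.mp (mem_filter.mp hs).1).2

theorem pair_mem_denseLink {μ : ℝ} {i j l : ι} (hj : j ≠ i) (hl : l ≠ i) (hjl : j ≠ l)
    (dense : μ ≤ dH H (P i) (P j) (P l)) : {j, l} ∈ denseLink H P μ i := by
  have pair_subset : {j, l} ⊆ univ.erase i := by
    simp [insert_subset_iff, hj, hl]
  exact mem_filter.mpr ⟨mem_powersetCard.mpr ⟨pair_subset, card_pair hjl⟩,
    j, by simp, l, by simp, hjl, dense⟩

variable (H P)

theorem card_filter_le_dH_le (μ : ℝ) (i : ι) :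
    #{p : ι × ι | μ ≤ dH H (P i) (P p.1) (P p.2)} ≤
      3 * Fintype.card ι + 2 * #(denseLink H P μ i) := by
  have subset : ({p | μ ≤ dH H (P i) (P p.1) (P p.2)} : Finset (ι × ι)) ⊆
      {i} ×ˢ univ ∪ univ ×ˢ {i} ∪ univ.diag ∪
        ({p | {p.1, p.2} ∈ denseLink H P μ i} : Finset (ι × ι)) := by
    rintro ⟨j, l⟩ dense
    simp only [mem_filter, mem_univ, true_and] at dense
    simp only [mem_union, mem_product, mem_singleton, mem_univ, and_true, true_and, mem_diag,
      mem_filter]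
    by_contra! ⟨⟨⟨hj, hl⟩, hjl⟩, not_mem⟩
    exact not_mem (pair_mem_denseLink hj hl hjl dense)
  calc #{p : ι × ι | μ ≤ dH H (P i) (P p.1) (P p.2)}
      ≤ #({i} ×ˢ (univ : Finset ι)) + #((univ : Finset ι) ×ˢ {i}) + #(univ : Finset ι).diag +
          #{p : ι × ι | {p.1, p.2} ∈ denseLink H P μ i} := by
        grw [subset, card_union_le, card_union_le, card_union_le]
    _ = 3 * Fintype.card ι + 2 * #(denseLink H P μ i) := by
        rw [card_filter_pair_mem _ fun s => card_of_mem_denseLink]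
        simp only [card_product, card_singleton, diag_card, card_univ]
        ring

theorem sum_dH_le {μ : ℝ} (hμ : 0 ≤ μ) (i : ι) :
    ∑ p : ι × ι, dH H (P i) (P p.1) (P p.2) ≤
      3 * Fintype.card ι + 2 * #(denseLink H P μ i) + Fintype.card ι ^ 2 * μ := by
  calc ∑ p : ι × ι, dH H (P i) (P p.1) (P p.2)
      ≤ #{p : ι × ι | μ ≤ dH H (P i) (P p.1) (P p.2)} + #(univ : Finset (ι × ι)) * μ :=
        sum_le_card_filter_le_add_card_mul _ (fun _ _ => dH_le_one _ _ _ _) hμ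
    _ ≤ 3 * Fintype.card ι + 2 * #(denseLink H P μ i) + Fintype.card ι ^ 2 * μ := by
        rw [card_univ, Fintype.card_prod, Nat.cast_mul, ← sq]
        gcongr
        exact_mod_cast card_filter_le_dH_le H P μ i

variable {H P}

theorem two_mul_le_sq_mul_of_le_degree [Finite V] (hH : ∀ e ∈ H, #e = 3)
    (hP : ∀ v, ∃ i, v ∈ P i) {m : ℕ} (hm : 0 < m) (card_P : ∀ i, #(P i) = m) {i : ι} {δ μ : ℝ}
    (hδ : ∀ v ∈ P i, δ ≤ #{e ∈ H | v ∈ e}) (hμ : 0 ≤ μ) :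
    2 * δ ≤ m ^ 2 *
      (3 * Fintype.card ι + 2 * #(denseLink H P μ i) + Fintype.card ι ^ 2 * μ) := by
  have := Fintype.ofFinite V
  have hm' : (0 : ℝ) < m := mod_cast hm
  refine le_of_mul_le_mul_left ?_ hm'
  calc m * (2 * δ) ≤ (eH H (P i) univ univ : ℝ) := by
        simpa only [card_P] using card_mul_two_mul_le_eH_univ_univ (P i) hH hδ
    _ ≤ ∑ p : ι × ι, (eH H (P i) (P p.1) (P p.2) : ℝ) :=
        mod_cast eH_univ_univ_le_sum H P hP (P i)
    _ = m ^ 3 * ∑ p : ι × ι, dH H (P i) (P p.1) (P p.2) := by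
        simp_rw [← dH_mul_card_mul_card_mul_card, card_P, ← sum_mul]
        ring
    _ ≤ m ^ 3 * (3 * Fintype.card ι + 2 * #(denseLink H P μ i) + Fintype.card ι ^ 2 * μ) := by
        gcongr
        exact sum_dH_le H P hμ i
    _ = _ := by ring

end Cover

theorem cast_pred_choose_two {n : ℕ} (hn : 0 < n) :
    ((n - 1).choose 2 : ℝ) = ((n : ℝ) - 1) * (n - 2) / 2 := by
  rw [Nat.cast_choose_two, Nat.cast_pred hn]
  ring

theorem sq_mul_sub_le_mul_sub_one_mul_sub_two {c m t : ℝ} (hc : 0 ≤ c) (hm : 0 ≤ m) (ht : 0 ≤ t)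
    (hcm : 12 * c ≤ m) :
    m ^ 2 * (c * t ^ 2 - t / 4) ≤ c * ((t * m - 1) * (t * m - 2)) := by
  have lower_order : 12 * c * (m * t) ≤ m * (m * t) := by gcongr
  linarith

theorem stmt_16_general {α lam : ℝ} (hα : 0 ≤ α) (hlam : 0 < lam) {t : ℕ}
    (ht : 13 / lam ≤ t) {V : Type} [DecidableEq V] [Fintype V] (htV : t ∣ Fintype.card V)
    (hV : 12 * (α + lam) * t ≤ Fintype.card V) {H : Finset (Finset V)} (hH : ∀ e ∈ H, #e = 3)
    (hdeg : ∀ v, (α + lam) * ((Fintype.card V - 1).choose 2 : ℝ) ≤ #{e ∈ H | v ∈ e})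
    {P : Fin t → Finset V} (hP : ∀ v, ∃ i, v ∈ P i) (card_P : ∀ i, #(P i) = Fintype.card V / t)
    (i : Fin t) :
    (α + 2 / 3 * lam) * (t : ℝ) ^ 2 / 2 ≤ #(denseLink H P (lam / 12) i) := by
  have t_pos : 0 < t := i.pos
  have t_pos' : (0 : ℝ) < t := mod_cast t_pos
  have lam_mul_t : 13 ≤ lam * t := (div_le_iff₀' hlam).mp ht
  obtain ⟨m, card_V⟩ := htV
  rw [card_V] at hV hdeg card_P
  simp only [Nat.mul_div_cancel_left m t_pos] at card_P
  have le_m : 12 * (α + lam) ≤ m := by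
    refine le_of_mul_le_mul_right (hV.trans_eq ?_) t_pos'
    push_cast
    ring
  have m_pos' : (0 : ℝ) < m := by linarith
  have m_pos : 0 < m := mod_cast m_pos'
  rw [cast_pred_choose_two (Nat.mul_pos t_pos m_pos)] at hdeg
  push_cast at hdeg
  have density_bound := two_mul_le_sq_mul_of_le_degree hH hP m_pos card_P (i := i)
    (fun v _ => hdeg v) (by positivity : 0 ≤ lam / 12)
  rw [Fintype.card_fin] at density_bound
  have leading_term := sq_mul_sub_le_mul_sub_one_mul_sub_two (by linarith : 0 ≤ α + lam)
    m_pos'.le t_pos'.le le_m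
  have cancel_m : (α + lam) * t ^ 2 - t / 4 ≤
      3 * t + 2 * #(denseLink H P (lam / 12) i) + t ^ 2 * (lam / 12) :=
    le_of_mul_le_mul_left (by linarith) (by positivity : (0 : ℝ) < m ^ 2)
  have error_terms : 13 * (t : ℝ) ≤ lam * t * t := by gcongr
  linarith

/-- For `λ > 0`, `t ≥ 13/λ`, all large `n` divisible by `t`, every 3-graph `H` on `n`
vertices with minimum vertex degree at least `(5/9+λ)·C(n-1,2)` and every partition of
its vertex set into `t` classes of size `n/t`, the auxiliary 3-graph `D` on the index
set, whose edges are the triples of classes of `H`-density at least `λ/12`, has minimum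
degree at least `(5/9 + (2/3)λ)·t²/2`. -/
theorem stmt_16 (lam : ℝ) (hlam : 0 < lam) (t : ℕ) (ht : (13 : ℝ) / lam ≤ (t : ℝ)) :
    ∃ n₀ : ℕ, ∀ n : ℕ, n₀ ≤ n → t ∣ n →
    ∀ (V : Type) [DecidableEq V] [Fintype V], Fintype.card V = n →
    ∀ H : Finset (Finset V), (∀ e ∈ H, e.card = 3) →
    (∀ v : V, (5 / 9 + lam) * ((n - 1).choose 2 : ℝ) ≤
      ((H.filter fun e => v ∈ e).card : ℝ)) →
    ∀ P : Fin t → Finset V,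
      (∀ i j, i ≠ j → Disjoint (P i) (P j)) →
      (∀ v : V, ∃ i, v ∈ P i) →
      (∀ i, (P i).card = n / t) →
      ∀ i : Fin t,
        (5 / 9 + 2 / 3 * lam) * (t : ℝ) ^ 2 / 2 ≤
          (((((Finset.univ : Finset (Fin t)).erase i).powersetCard 2).filter fun s =>
            ∃ j ∈ s, ∃ l ∈ s, j ≠ l ∧ lam / 12 ≤ dH H (P i) (P j) (P l)).card : ℝ) := by
  refine ⟨⌈12 * (5 / 9 + lam) * t⌉₊, ?_⟩
  rintro n hn htn V _ _ rfl H hH hdeg P - hP card_P i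
  have degree_bound :=
    stmt_16_general (by norm_num) hlam ht htn (Nat.ceil_le.mp hn) hH hdeg hP card_P i
  rw [denseLink] at degree_bound
  convert degree_bound
end

section
/- For every λ > 0, every ε with 0 < ε ≤ λ²/400, and every integer L ≥ 1, there exists m_0 such that the following holds. Let H be a 3-partite 3-graph with parts V_1, V_2, V_3, each of size m ≥ m_0, which is ε-regular and has density d_H(V_1, V_2, V_3) ≥ λ/12. Then H contains a family Q of pairwise vertex-disjoint copies of K_{L,L,L} with |Q|·L ≥ (1 − ε)·m. -/
open Finset
open scoped Classical

/-- The 3-partite 3-graph `H[V1,V2,V3]` is `ε`-regular. -/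
def EpsRegular {V : Type} [DecidableEq V] (ε : ℝ) (H : Finset (Finset V))
    (V1 V2 V3 : Finset V) : Prop :=
  ∀ A1 ⊆ V1, ∀ A2 ⊆ V2, ∀ A3 ⊆ V3,
    ε * (V1.card : ℝ) ≤ (A1.card : ℝ) → ε * (V2.card : ℝ) ≤ (A2.card : ℝ) →
    ε * (V3.card : ℝ) ≤ (A3.card : ℝ) →
    |dH H A1 A2 A3 - dH H V1 V2 V3| ≤ ε

/-!
Take an inclusion-maximal family of disjoint copies of `K_{L,L,L}` respecting the parts. If it
covered less than `(1 - ε) m` vertices of each part, at least an `ε`-fraction of every part would be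
uncovered, so by regularity the uncovered vertices would span density at least `d - ε > 0`. By a
theorem of Erdős a large dense 3-partite 3-graph contains `K_{L,L,L}`, contradicting maximality.
That theorem is a double application of one bipartite fact: in a dense bipartite graph between `X`
and `Y`, some `k`-subset of `X` has a positive proportion of `Y` as common neighbours. It is applied
first between `A` and `B × C`, then between `B` and `C`.
-/

lemma card_mul_pow_le_sum_pow {ι : Type*} {s : Finset ι} {f : ι → ℝ} {a : ℝ}
    (hf : ∀ i ∈ s, 0 ≤ f i) (ha : 0 ≤ a) (hsum : #s * a ≤ ∑ i ∈ s, f i) (n : ℕ) :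
    #s * a ^ n ≤ ∑ i ∈ s, f i ^ n := by
  obtain rfl | hs := s.eq_empty_or_nonempty
  · simp
  have hs₀ : (0 : ℝ) < #s := by exact_mod_cast hs.card_pos
  have hmean : a ≤ ∑ i ∈ s, (#s : ℝ)⁻¹ * f i := by
    rwa [← mul_sum, inv_mul_eq_div, le_div_iff₀' hs₀]
  have hjensen : (∑ i ∈ s, (#s : ℝ)⁻¹ * f i) ^ n ≤ ∑ i ∈ s, (#s : ℝ)⁻¹ * f i ^ n :=
    Real.pow_arith_mean_le_arith_mean_pow s _ f (fun _ _ ↦ by positivity)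
      (by simp [hs₀.ne']) hf n
  rw [← le_div_iff₀' hs₀, ← inv_mul_eq_div, mul_sum]
  exact (pow_le_pow_left₀ ha hmean n).trans hjensen

section Bipartite

variable {α β : Type*} {X : Finset α} {Y : Finset β} {R : α → β → Prop}
  [∀ x y, Decidable (R x y)] {δ : ℝ} {k : ℕ}

variable (X Y R k) in
lemma sum_powersetCard_card_filter_forall :
    ∑ S ∈ X.powersetCard k, #{y ∈ Y | ∀ x ∈ S, R x y} = ∑ y ∈ Y, (#{x ∈ X | R x y}).choose k := by
  refine (sum_card_bipartiteAbove_eq_sum_card_bipartiteBelow fun S y ↦ ∀ x ∈ S, R x y).trans ?_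
  refine sum_congr rfl fun y _ ↦ ?_
  rw [← card_powersetCard]
  congr 1
  ext S
  simp only [mem_bipartiteBelow, mem_powersetCard, subset_iff, mem_filter]
  grind

lemma mul_pow_le_sum_choose_mul_factorial (hδ : 0 ≤ δ) (hX : 2 * k ≤ δ * #X)
    (hE : δ * #X * #Y ≤ #{p ∈ X ×ˢ Y | R p.1 p.2}) :
    #Y * (δ / 2 * #X) ^ k ≤ ∑ y ∈ Y, ((#{x ∈ X | R x y}).choose k * k.factorial : ℝ) := by
  have hcount : (#{p ∈ X ×ˢ Y | R p.1 p.2} : ℝ) = ∑ y ∈ Y, (#{x ∈ X | R x y} : ℝ) := by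
    simp only [card_filter, sum_product_right, Nat.cast_sum]
  have htrunc (d : ℕ) : (d : ℝ) - k ≤ (d + 1 - k : ℕ) := by
    rw [sub_le_iff_le_add]
    exact_mod_cast (by lia : d ≤ d + 1 - k + k)
  have hsum : #Y * (δ / 2 * #X) ≤ ∑ y ∈ Y, ((#{x ∈ X | R x y} + 1 - k : ℕ) : ℝ) :=
    calc (#Y * (δ / 2 * #X) : ℝ) ≤ δ * #X * #Y - #Y * k := by
          nlinarith [mul_le_mul_of_nonneg_left hX (Nat.cast_nonneg (α := ℝ) #Y)]
      _ ≤ ∑ y ∈ Y, ((#{x ∈ X | R x y} : ℝ) - k) := by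
          rw [sum_sub_distrib, sum_const, nsmul_eq_mul]
          linarith
      _ ≤ _ := sum_le_sum fun y _ ↦ htrunc _
  refine (card_mul_pow_le_sum_pow (fun _ _ ↦ by positivity) (by positivity) hsum k).trans
    (sum_le_sum fun y _ ↦ ?_)
  rw [mul_comm]
  exact_mod_cast (Nat.pow_sub_le_descFactorial _ k).trans_eq
    (Nat.descFactorial_eq_factorial_mul_choose _ k)

-- As for the Kővári–Sós–Turán theorem: average the number of common neighbours over all
-- `k`-subsets of `X`.
lemma exists_powersetCard_le_card_filter_forall (hδ : 0 ≤ δ) (hkX : k ≤ #X)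
    (hX : 2 * k ≤ δ * #X) (hE : δ * #X * #Y ≤ #{p ∈ X ×ˢ Y | R p.1 p.2}) :
    ∃ S ∈ X.powersetCard k, (δ / 2) ^ k * #Y ≤ #{y ∈ Y | ∀ x ∈ S, R x y} := by
  by_contra! hfew
  have hchoose : ((#X).choose k * k.factorial : ℝ) ≤ #X ^ k := by
    rw [mul_comm]
    exact_mod_cast (Nat.descFactorial_eq_factorial_mul_choose _ k).symm.trans_le
      (Nat.descFactorial_le_pow _ k)
  have hupper : ∑ y ∈ Y, ((#{x ∈ X | R x y}).choose k : ℝ) < (#X).choose k * ((δ / 2) ^ k * #Y) :=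
    calc ∑ y ∈ Y, ((#{x ∈ X | R x y}).choose k : ℝ)
        = ∑ S ∈ X.powersetCard k, (#{y ∈ Y | ∀ x ∈ S, R x y} : ℝ) := by
          exact_mod_cast (sum_powersetCard_card_filter_forall X Y R k).symm
      _ < ∑ S ∈ X.powersetCard k, (δ / 2) ^ k * #Y :=
          sum_lt_sum_of_nonempty (powersetCard_nonempty.2 hkX) hfew
      _ = (#X).choose k * ((δ / 2) ^ k * #Y) := by simp
  refine lt_irrefl (#Y * (δ / 2 * #X) ^ k : ℝ) ?_
  calc (#Y * (δ / 2 * #X) ^ k : ℝ)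
      ≤ (∑ y ∈ Y, ((#{x ∈ X | R x y}).choose k : ℝ)) * k.factorial := by
        rw [sum_mul]
        exact mul_pow_le_sum_choose_mul_factorial hδ hX hE
    _ < (#X).choose k * ((δ / 2) ^ k * #Y) * k.factorial := by gcongr
    _ = (#X).choose k * k.factorial * ((δ / 2) ^ k * #Y) := by ring
    _ ≤ #X ^ k * ((δ / 2) ^ k * #Y) := by gcongr
    _ = #Y * (δ / 2 * #X) ^ k := by ring

end Bipartite

lemma exists_complete_tripartite_of_dense {δ : ℝ} (hδ : 0 < δ) (k ℓ n : ℕ) : ∃ N : ℕ,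
    ∀ {α β γ : Type*} (A : Finset α) (B : Finset β) (C : Finset γ) (R : α → β → γ → Prop)
      [∀ a b c, Decidable (R a b c)], N ≤ #A → N ≤ #B → N ≤ #C →
      δ * #A * #B * #C ≤ #{x ∈ A ×ˢ B ×ˢ C | R x.1 x.2.1 x.2.2} →
      ∃ S ∈ A.powersetCard k, ∃ T ∈ B.powersetCard ℓ, ∃ U ∈ C.powersetCard n,
        ∀ a ∈ S, ∀ b ∈ T, ∀ c ∈ U, R a b c := by
  have eventually_le_mul {c : ℝ} (hc : 0 < c) (b : ℝ) : ∀ᶠ N : ℕ in .atTop, b ≤ c * N :=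
    (tendsto_natCast_atTop_atTop.const_mul_atTop hc).eventually_ge_atTop b
  have hδ₁ : 0 < (δ / 2) ^ k := by positivity
  obtain ⟨N, hkN, hℓN, hN, hN₁, hN₂⟩ := ((Filter.eventually_ge_atTop k).and <|
    (Filter.eventually_ge_atTop ℓ).and <| (eventually_le_mul hδ (2 * k)).and <|
    (eventually_le_mul hδ₁ (2 * ℓ)).and <|
    eventually_le_mul (show 0 < ((δ / 2) ^ k / 2) ^ ℓ by positivity) n).exists
  refine ⟨N, fun A B C R _ hA hB hC hE ↦ ?_⟩
  obtain ⟨S, hS, hSBC⟩ := exists_powersetCard_le_card_filter_forall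
    (Y := B ×ˢ C) (R := fun a p ↦ R a p.1 p.2) hδ.le (hkN.trans hA) (hN.trans (by gcongr))
    (by rw [card_product]; push_cast; linarith)
  obtain ⟨T, hT, hTC⟩ := exists_powersetCard_le_card_filter_forall
    (Y := C) (R := fun b c ↦ ∀ a ∈ S, R a b c) hδ₁.le (hℓN.trans hB) (hN₁.trans (by gcongr))
    (by simpa only [card_product, Nat.cast_mul, mul_assoc] using hSBC)
  have hn : n ≤ #{c ∈ C | ∀ b ∈ T, ∀ a ∈ S, R a b c} := by
    exact_mod_cast (hN₂.trans (by gcongr)).trans hTC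
  obtain ⟨U, hU⟩ := powersetCard_nonempty.2 hn
  obtain ⟨hUC, hUn⟩ := mem_powersetCard.1 hU
  exact ⟨S, hS, T, hT, U, mem_powersetCard.2 ⟨hUC.trans (filter_subset _ _), hUn⟩,
    fun a ha b hb c hc ↦ (mem_filter.1 (hUC hc)).2 b hb a ha⟩

section DisjointSubfamilies

variable {ι V : Type*} [DecidableEq V] {f : ι → Finset V}

lemma exists_subset_pairwiseDisjoint_forall_not_disjoint_biUnion {F : Finset ι}
    (hF : ∀ i ∈ F, (f i).Nonempty) :
    ∃ Q ⊆ F, (Q : Set ι).PairwiseDisjoint f ∧ ∀ i ∈ F, ¬Disjoint (f i) (Q.biUnion f) := by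
  obtain ⟨Q, hmax⟩ := (F.powerset.filter fun Q : Finset ι ↦
    (Q : Set ι).PairwiseDisjoint f).exists_maximal ⟨∅, by simp⟩
  simp only [mem_filter, mem_powerset] at hmax
  obtain ⟨hQF, hQ⟩ := hmax.1
  refine ⟨Q, hQF, hQ, fun i hi hdisj ↦ ?_⟩
  rw [disjoint_biUnion_right] at hdisj
  have hiQ : i ∉ Q := fun h ↦ (hF i hi).ne_empty (disjoint_self.1 (hdisj i h))
  refine hmax.not_gt ⟨insert_subset hi hQF, ?_⟩ (ssubset_insert hiQ)
  rw [coe_insert]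
  exact hQ.insert fun j hj _ ↦ hdisj j hj

lemma mul_card_le_card_sdiff_biUnion {P : Finset V} {Q : Finset ι} {ε : ℝ} {m L : ℕ} (hε : ε ≤ 1)
    (hP : m ≤ #P) (hf : ∀ i ∈ Q, #(P ∩ f i) ≤ L) (hQ : #Q * L < (1 - ε) * m) :
    ε * #P ≤ #(P \ Q.biUnion f) := by
  have hcovered : #(P ∩ Q.biUnion f) ≤ #Q * L := by
    rw [inter_biUnion]
    exact card_biUnion_le_card_mul _ _ _ hf
  have hsplit : (#P : ℝ) ≤ #(P \ Q.biUnion f) + #Q * L := by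
    exact_mod_cast (card_sdiff_add_card_inter P _).ge.trans (by gcongr)
  have hmP : (1 - ε) * m ≤ (1 - ε) * #P := by
    have := sub_nonneg.2 hε
    gcongr
  linarith

end DisjointSubfamilies

section TripartiteCopies

variable {V : Type} [DecidableEq V]

/-- The vertex set of the copy of `K_{h,h,h}` with classes `T.1`, `T.2.1` and `T.2.2`. -/
def copyVertices (T : Finset V × Finset V × Finset V) : Finset V :=
  T.1 ∪ T.2.1 ∪ T.2.2

lemma EpsRegular.sub_le_dH {ε d : ℝ} {H : Finset (Finset V)} {V1 V2 V3 A1 A2 A3 : Finset V}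
    (hreg : EpsRegular ε H V1 V2 V3) (hd : d ≤ dH H V1 V2 V3)
    (hA1 : A1 ⊆ V1) (hA2 : A2 ⊆ V2) (hA3 : A3 ⊆ V3)
    (h1 : ε * #V1 ≤ #A1) (h2 : ε * #V2 ≤ #A2) (h3 : ε * #V3 ≤ #A3) :
    d - ε ≤ dH H A1 A2 A3 := by
  linarith [neg_le_of_abs_le (hreg A1 hA1 A2 hA2 A3 hA3 h1 h2 h3)]

variable [Fintype V]

/-- The copies of `K_{h,h,h}` in `H` whose first, second and third class lie in `A`, `B` and `C`
respectively. -/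
noncomputable def crossingCopies (H : Finset (Finset V)) (h : ℕ) (A B C : Finset V) :
    Finset (Finset V × Finset V × Finset V) :=
  {T ∈ tripartiteCopies H h | T.1 ⊆ A ∧ T.2.1 ⊆ B ∧ T.2.2 ⊆ C}

variable {H : Finset (Finset V)} {h : ℕ} {A B C : Finset V} {T : Finset V × Finset V × Finset V}

lemma crossingCopies_mono {A' B' C' : Finset V} (hA : A ⊆ A') (hB : B ⊆ B') (hC : C ⊆ C') :
    crossingCopies H h A B C ⊆ crossingCopies H h A' B' C' :=
  monotone_filter_right _ fun _ _ hT ↦ ⟨hT.1.trans hA, hT.2.1.trans hB, hT.2.2.trans hC⟩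

lemma copyVertices_nonempty (hh : 1 ≤ h) (hT : T ∈ tripartiteCopies H h) :
    (copyVertices T).Nonempty := by
  have hcard : #T.1 = h := (mem_filter.1 hT).2.1
  exact (card_pos.1 (hcard ▸ hh)).mono (subset_union_left.trans subset_union_left)

lemma copyVertices_subset (hT : T ∈ crossingCopies H h A B C) :
    copyVertices T ⊆ A ∪ B ∪ C := by
  obtain ⟨-, hA, hB, hC⟩ := mem_filter.1 hT
  exact union_subset_union (union_subset_union hA hB) hC

lemma card_inter_copyVertices_le (hAB : Disjoint A B) (hAC : Disjoint A C) (hBC : Disjoint B C)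
    (hT : T ∈ crossingCopies H h A B C) :
    #(A ∩ copyVertices T) ≤ h ∧ #(B ∩ copyVertices T) ≤ h ∧ #(C ∩ copyVertices T) ≤ h := by
  simp only [crossingCopies, tripartiteCopies, mem_filter] at hT
  obtain ⟨⟨-, h1, h2, h3, -⟩, hA, hB, hC⟩ := hT
  rw [disjoint_left] at hAB hAC hBC
  refine ⟨h1 ▸ card_le_card ?_, h2 ▸ card_le_card ?_, h3 ▸ card_le_card ?_⟩ <;>
    · intro x
      simp only [copyVertices, mem_inter, mem_union]
      grind

lemma exists_forall_crossingCopies_nonempty {δ : ℝ} (hδ : 0 < δ) (h : ℕ) : ∃ N : ℕ,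
    ∀ (V : Type) [DecidableEq V] [Fintype V] (H : Finset (Finset V)) (A B C : Finset V),
      Disjoint A B → Disjoint A C → Disjoint B C → N ≤ #A → N ≤ #B → N ≤ #C →
      δ ≤ dH H A B C → (crossingCopies H h A B C).Nonempty := by
  obtain ⟨N, hN⟩ := exists_complete_tripartite_of_dense hδ h h h
  refine ⟨N, fun V _ _ H A B C hAB hAC hBC hA hB hC hd ↦ ?_⟩
  have hedges : δ * #A * #B * #C ≤ eH H A B C := by
    simpa only [mul_assoc] using mul_le_of_le_div₀ (by positivity) (by positivity) hd
  obtain ⟨S, hS, T, hT, U, hU, hSTU⟩ :=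
    hN A B C (fun a b c ↦ ({a, b, c} : Finset V) ∈ H) hA hB hC hedges
  rw [mem_powersetCard] at hS hT hU
  refine ⟨(S, T, U), mem_filter.2 ⟨mem_filter.2 ⟨mem_univ _, ?_⟩, hS.1, hT.1, hU.1⟩⟩
  exact ⟨hS.2, hT.2, hU.2, hAB.mono hS.1 hT.1, hAC.mono hS.1 hU.1, hBC.mono hT.1 hU.1, hSTU⟩

end TripartiteCopies

lemma exists_disjoint_crossingCopies_of_epsRegular {d ε : ℝ} (hε0 : 0 < ε) (hεd : min ε 1 < d)
    {L : ℕ} (hL : 1 ≤ L) :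
    ∃ m₀ : ℕ, ∀ m : ℕ, m₀ ≤ m →
    ∀ (V : Type) [DecidableEq V] [Fintype V], ∀ V1 V2 V3 : Finset V,
      m ≤ #V1 → m ≤ #V2 → m ≤ #V3 →
      Disjoint V1 V2 → Disjoint V1 V3 → Disjoint V2 V3 →
      ∀ H : Finset (Finset V), EpsRegular ε H V1 V2 V3 → d ≤ dH H V1 V2 V3 →
        ∃ Q ⊆ crossingCopies H L V1 V2 V3,
          (Q : Set (Finset V × Finset V × Finset V)).PairwiseDisjoint copyVertices ∧
          (1 - ε) * m ≤ #Q * L := by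
  obtain ⟨N, hN⟩ := exists_forall_crossingCopies_nonempty (sub_pos.2 hεd) L
  refine ⟨⌈N / ε⌉₊, fun m hm V _ _ V1 V2 V3 h1 h2 h3 h12 h13 h23 H hreg hd ↦ ?_⟩
  obtain ⟨Q, hQ, hdisj, hmax⟩ := exists_subset_pairwiseDisjoint_forall_not_disjoint_biUnion
    (F := crossingCopies H L V1 V2 V3) fun T hT ↦ copyVertices_nonempty hL (mem_filter.1 hT).1
  refine ⟨Q, hQ, hdisj, not_lt.1 fun hlt ↦ ?_⟩
  set W := Q.biUnion copyVertices
  have hcard T (hT : T ∈ Q) := card_inter_copyVertices_le h12 h13 h23 (hQ hT)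
  have hε1 : ε ≤ 1 := by
    have hpos : 0 < (1 - ε) * m := lt_of_le_of_lt (by positivity) hlt
    exact sub_nonneg.1 (pos_of_mul_pos_left hpos m.cast_nonneg).le
  have hW1 : ε * #V1 ≤ #(V1 \ W) :=
    mul_card_le_card_sdiff_biUnion hε1 h1 (fun T hT ↦ (hcard T hT).1) hlt
  have hW2 : ε * #V2 ≤ #(V2 \ W) :=
    mul_card_le_card_sdiff_biUnion hε1 h2 (fun T hT ↦ (hcard T hT).2.1) hlt
  have hW3 : ε * #V3 ≤ #(V3 \ W) :=
    mul_card_le_card_sdiff_biUnion hε1 h3 (fun T hT ↦ (hcard T hT).2.2) hlt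
  have hNm : N ≤ ε * m := (div_le_iff₀' hε0).1 (Nat.ceil_le.1 hm)
  have hlarge {P : Finset V} (hP : m ≤ #P) (hPW : ε * #P ≤ #(P \ W)) : N ≤ #(P \ W) := by
    exact_mod_cast hNm.trans (le_trans (by gcongr) hPW)
  have hdense : d - min ε 1 ≤ dH H (V1 \ W) (V2 \ W) (V3 \ W) := by
    rw [min_eq_left hε1]
    exact hreg.sub_le_dH hd sdiff_subset sdiff_subset sdiff_subset hW1 hW2 hW3
  obtain ⟨T, hT⟩ := hN V H (V1 \ W) (V2 \ W) (V3 \ W) (h12.mono sdiff_subset sdiff_subset)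
    (h13.mono sdiff_subset sdiff_subset) (h23.mono sdiff_subset sdiff_subset)
    (hlarge h1 hW1) (hlarge h2 hW2) (hlarge h3 hW3) hdense
  refine hmax T (crossingCopies_mono sdiff_subset sdiff_subset sdiff_subset hT) ?_
  refine disjoint_of_subset_left (copyVertices_subset hT) ?_
  simp only [disjoint_union_left, sdiff_disjoint, and_self]

-- For `ε ≥ 1` the empty family suffices. The minimum makes both ranges of `ε` accessible through
-- the bound `min ε 1 ≤ √ε`.
theorem stmt_18_general (d ε : ℝ) (hε0 : 0 < ε) (hεd : min ε 1 < d) (L : ℕ) (hL : 1 ≤ L) :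
    ∃ m₀ : ℕ, ∀ m : ℕ, m₀ ≤ m →
    ∀ (V : Type) [DecidableEq V] [Fintype V], ∀ V1 V2 V3 : Finset V,
      m ≤ #V1 → m ≤ #V2 → m ≤ #V3 →
      Disjoint V1 V2 → Disjoint V1 V3 → Disjoint V2 V3 →
      ∀ H : Finset (Finset V), EpsRegular ε H V1 V2 V3 → d ≤ dH H V1 V2 V3 →
        ∃ (q : ℕ) (Q : Fin q → Finset V × Finset V × Finset V),
          (∀ k, Q k ∈ tripartiteCopies H L) ∧
          (∀ k l, k ≠ l → Disjoint (copyVertices (Q k)) (copyVertices (Q l))) ∧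
          (1 - ε) * (m : ℝ) ≤ (q : ℝ) * (L : ℝ) := by
  obtain ⟨m₀, hm₀⟩ := exists_disjoint_crossingCopies_of_epsRegular hε0 hεd hL
  refine ⟨m₀, fun m hm V _ _ V1 V2 V3 h1 h2 h3 h12 h13 h23 H hreg hd ↦ ?_⟩
  obtain ⟨Q, hQ, hdisj, hcard⟩ := hm₀ m hm V V1 V2 V3 h1 h2 h3 h12 h13 h23 H hreg hd
  refine ⟨#Q, fun k ↦ Q.equivFin.symm k, fun k ↦ ?_, fun k l hkl ↦ ?_, hcard⟩
  · exact (mem_filter.1 (hQ (Q.equivFin.symm k).2)).1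
  · exact hdisj (Q.equivFin.symm k).2 (Q.equivFin.symm l).2
      (Subtype.val_injective.ne (Q.equivFin.symm.injective.ne hkl))

/-- Every `ε`-regular 3-partite 3-graph with parts of size `m` (large) and density at
least `λ/12`, where `0 < ε ≤ λ²/400`, contains a family `Q` of pairwise vertex-disjoint
copies of `K_{L,L,L}` with `|Q|·L ≥ (1-ε)·m`. -/
theorem stmt_18 (lam ε : ℝ) (hlam : 0 < lam) (hε0 : 0 < ε) (hε : ε ≤ lam ^ 2 / 400)
    (L : ℕ) (hL : 1 ≤ L) :
    ∃ m₀ : ℕ, ∀ m : ℕ, m₀ ≤ m →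
    ∀ (V : Type) [DecidableEq V] [Fintype V], ∀ V1 V2 V3 : Finset V,
      V1.card = m → V2.card = m → V3.card = m →
      Disjoint V1 V2 → Disjoint V1 V3 → Disjoint V2 V3 →
      ∀ H : Finset (Finset V),
        (∀ e ∈ H, ∃ a ∈ V1, ∃ b ∈ V2, ∃ c ∈ V3, e = {a, b, c}) →
        EpsRegular ε H V1 V2 V3 →
        lam / 12 ≤ dH H V1 V2 V3 →
        ∃ (q : ℕ) (Q : Fin q → Finset V × Finset V × Finset V),
          (∀ k, Q k ∈ tripartiteCopies H L) ∧
          (∀ k l, k ≠ l →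
            Disjoint ((Q k).1 ∪ (Q k).2.1 ∪ (Q k).2.2)
              ((Q l).1 ∪ (Q l).2.1 ∪ (Q l).2.2)) ∧
          (1 - ε) * (m : ℝ) ≤ (q : ℝ) * (L : ℝ) := by
  have hmin : min ε 1 < lam / 12 := by
    by_contra! h
    nlinarith [le_min_iff.1 h]
  obtain ⟨m₀, hm₀⟩ := stmt_18_general (lam / 12) ε hε0 hmin L hL
  exact ⟨m₀, fun m hm V _ _ V1 V2 V3 h1 h2 h3 h12 h13 h23 H _ ↦
    hm₀ m hm V V1 V2 V3 h1.ge h2.ge h3.ge h12 h13 h23 H⟩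
end
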